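/- arXiv:1011.1785 — 3 statements merged into one kernel-verified Lean document; each statement's English description precedes it below -/
import Mathlib

section
/- Let g ∈ C¹((a,b), ℝ) with a < 0 < b, x·g(x) > 0 for x ≠ 0, and ∫₀^a g(x) dx = ∫₀^b g(x) dx = +∞, and let Φ : (a,b) × ℝ → ℝ be continuously differentiable. Set G(x) = ∫₀^x g(s) ds, E(x,y) = G(x) + y²/2, and for r > 0, Δ_r = {(x,y) ∈ (a,b) × ℝ : 2·E(x,y) < r²}. Suppose there exists M > 0 such that Φ(x,y) ≥ 0 for all (x,y) ∈ ((a,b) × ℝ) \ Δ_M, and the set {Φ = 0} \ Δ_M does not contain any non-trivial positive semi-orbit of the system (S_g): ẋ = y, ẏ = −g(x) − y·Φ(x,y). Then every forward-complete solution of (S_g) definitely enters the set Δ_M and remains inside it: for every solution γ defined on [t₀,∞) there exists T ≥ t₀ with γ(t) ∈ Δ_M for all t ≥ T. -/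
open Set Filter Metric Real Topology intervalIntegral

noncomputable section

/-- `γ` solves the planar ODE with vector field `F` at every time in `s`. -/
def IsSolOn (F : ℝ × ℝ → ℝ × ℝ) (γ : ℝ → ℝ × ℝ) (s : Set ℝ) : Prop :=
  ∀ t ∈ s, HasDerivAt γ (F (γ t)) t

/-- A cycle: a non-constant `T`-periodic solution (with `T > 0`). -/
def IsCycle (F : ℝ × ℝ → ℝ × ℝ) (γ : ℝ → ℝ × ℝ) (T : ℝ) : Prop :=
  (∀ t, HasDerivAt γ (F (γ t)) t) ∧ 0 < T ∧ (∀ t, γ (t + T) = γ t) ∧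
    ∃ t₁ t₂, γ t₁ ≠ γ t₂

/-- A limit cycle: a cycle whose orbit has a neighbourhood containing no orbit
of any other cycle. -/
def IsLimitCycle (F : ℝ × ℝ → ℝ × ℝ) (γ : ℝ → ℝ × ℝ) (T : ℝ) : Prop :=
  IsCycle F γ T ∧
    ∃ U : Set (ℝ × ℝ), IsOpen U ∧ range γ ⊆ U ∧
      ∀ (γ' : ℝ → ℝ × ℝ) (T' : ℝ), IsCycle F γ' T' →
        range γ' ≠ range γ → ¬ range γ' ⊆ U

/-- There is a non-trivial positive semi-orbit of the system contained in `Z`. -/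
def HasSemiOrbitIn (F : ℝ × ℝ → ℝ × ℝ) (Z : Set (ℝ × ℝ)) : Prop :=
  ∃ (γ : ℝ → ℝ × ℝ) (t₀ : ℝ), IsSolOn F γ (Ici t₀) ∧
    (∃ t₁ ∈ Ici t₀, ∃ t₂ ∈ Ici t₀, γ t₁ ≠ γ t₂) ∧ γ '' Ici t₀ ⊆ Z

/-- There is a non-trivial (full) orbit of the system contained in `Z`. -/
def HasOrbitIn (F : ℝ × ℝ → ℝ × ℝ) (Z : Set (ℝ × ℝ)) : Prop :=
  ∃ γ : ℝ → ℝ × ℝ, (∀ t, HasDerivAt γ (F (γ t)) t) ∧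
    (∃ t₁ t₂, γ t₁ ≠ γ t₂) ∧ range γ ⊆ Z

/-- The vector field of system (S): ẋ = y, ẏ = −x − y·φ(x,y). -/
def phiVF (φ : ℝ × ℝ → ℝ) : ℝ × ℝ → ℝ × ℝ :=
  fun p => (p.2, -p.1 - p.2 * φ p)

/-- The vector field of system (S_g): ẋ = y, ẏ = −g(x) − y·Φ(x,y). -/
def gVF (g : ℝ → ℝ) (Φ : ℝ × ℝ → ℝ) : ℝ × ℝ → ℝ × ℝ :=
  fun p => (p.2, -g p.1 - p.2 * Φ p)

/-- `G(x) = ∫₀ˣ g(s) ds`. -/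
def Gfun (g : ℝ → ℝ) (x : ℝ) : ℝ := ∫ s in (0:ℝ)..x, g s

/-- The auxiliary function
`Ψ(x,y) = (σ(x)√(2G(x))/g(x))·[2G(x)(Φ_x g − Φ g')/g² + Φ] + y Φ_y`. -/
def Psi (g : ℝ → ℝ) (Φ : ℝ × ℝ → ℝ) (p : ℝ × ℝ) : ℝ :=
  Real.sign p.1 * Real.sqrt (2 * Gfun g p.1) / g p.1 *
      (2 * Gfun g p.1 *
          (fderiv ℝ Φ p (1, 0) * g p.1 - Φ p * deriv g p.1) / (g p.1) ^ 2
        + Φ p)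
    + p.2 * fderiv ℝ Φ p (0, 1)

/-- The sublevel region `Δ_r = {(x,y) ∈ (a,b) × ℝ : 2E(x,y) < r²}` where
`E(x,y) = G(x) + y²/2`. -/
def Delta (a b : ℝ) (g : ℝ → ℝ) (r : ℝ) : Set (ℝ × ℝ) :=
  {p : ℝ × ℝ | p.1 ∈ Ioo a b ∧ 2 * (Gfun g p.1 + p.2 ^ 2 / 2) < r ^ 2}

/-!
Along a solution the energy `E = G + y²/2` satisfies `Ė = -y²Φ`, and its sublevel sets are compact
because `G` blows up at both ends of `(a, b)`. Put `c = M²/2`, so that `Δ_M = {E < c}`.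

A solution that has entered `Δ_M` never leaves it: `Φ` is Lipschitz on the compact set `{E ≤ c}`
and nonnegative on the level `{E = c}`, hence `Ė ≤ C (c - E)` inside, and `E` cannot reach `c` in
finite time.

A solution that never enters `Δ_M` has nonincreasing energy, so it stays in a compact set and `E`
converges to some `l ≥ c`. By LaSalle's argument a limit of its time translates is a complete
solution on the level `{E = l}`. There `y²Φ = 0`, and since there is no rest point outside `Δ_M`,
the zeros of `y` are isolated; thus `Φ = 0` along this solution, which is the excluded semi-orbit.
-/

lemma eq_of_mapClusterPt_of_tendsto {ι X Y : Type*} [TopologicalSpace X] [TopologicalSpace Y]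
    [T2Space Y] {l : Filter ι} {γ : ι → X} {p : X} {f : X → Y} {y : Y}
    (hp : MapClusterPt p l γ) (hf : ContinuousAt f p) (hy : Tendsto (f ∘ γ) l (𝓝 y)) :
    f p = y := by
  have : ClusterPt (f p) (𝓝 y) := (hp.continuousAt_comp hf).clusterPt.mono hy
  exact eq_of_nhds_neBot this

section LimitSolution

variable {E : Type*} [NormedAddCommGroup E] [NormedSpace ℝ E] {F : E → E} {K : Set E}

lemma exists_forall_norm_sub_sub_smul_le (hK : IsCompact K) (hF : ContinuousOn F K) {ε : ℝ}
    (hε : 0 < ε) :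
    ∃ δ > 0, ∀ (γ : ℝ → E) (u v : ℝ), |v - u| < δ →
      (∀ t ∈ uIcc u v, HasDerivWithinAt γ (F (γ t)) (uIcc u v) t) → MapsTo γ (uIcc u v) K →
      ‖γ v - γ u - (v - u) • F (γ u)‖ ≤ ε * |v - u| := by
  obtain ⟨L, hL⟩ := hK.exists_bound_of_continuousOn hF
  obtain ⟨ρ, hρ, hFρ⟩ := Metric.uniformContinuousOn_iff.1
    (hK.uniformContinuousOn_of_continuous hF) ε hε
  refine ⟨ρ / (|L| + 1), by positivity, fun γ u v huv hγ hγK ↦ ?_⟩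
  rw [lt_div_iff₀ (by positivity)] at huv
  have hclose : ∀ t ∈ uIcc u v, dist (γ t) (γ u) < ρ := fun t ht ↦ calc
    dist (γ t) (γ u) ≤ L * |t - u| := by
      rw [dist_eq_norm]
      exact (convex_uIcc u v).norm_image_sub_le_of_norm_hasDerivWithin_le hγ
        (fun x hx ↦ hL _ (hγK hx)) left_mem_uIcc ht
    _ ≤ (|L| + 1) * |v - u| := by
      gcongr ?_ * ?_
      · linarith [le_abs_self L]
      · exact abs_sub_left_of_mem_uIcc ht
    _ < ρ := by linarith
  have hderiv : ∀ t ∈ uIcc u v, HasDerivWithinAt (fun t ↦ γ t - t • F (γ u))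
      (F (γ t) - F (γ u)) (uIcc u v) t := fun t ht ↦ by
    simpa only [one_smul] using!
      (hγ t ht).sub ((hasDerivWithinAt_id t _).smul_const (F (γ u)))
  have hbound : ∀ t ∈ uIcc u v, ‖F (γ t) - F (γ u)‖ ≤ ε := fun t ht ↦ by
    rw [← dist_eq_norm]
    exact (hFρ _ (hγK ht) _ (hγK left_mem_uIcc) (hclose t ht)).le
  calc ‖γ v - γ u - (v - u) • F (γ u)‖
      = ‖(γ v - v • F (γ u)) - (γ u - u • F (γ u))‖ := by congr 1; module
    _ ≤ ε * |v - u| := (convex_uIcc u v).norm_image_sub_le_of_norm_hasDerivWithin_le hderiv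
      hbound left_mem_uIcc right_mem_uIcc

lemma hasDerivAt_of_tendsto_solutions {ι : Type*} {l : Filter ι} [l.NeBot] (hK : IsCompact K)
    (hF : ContinuousOn F K) {γ : ι → ℝ → E} {η : ℝ → E}
    (hsol : ∀ u v, ∀ᶠ i in l, ∀ t ∈ uIcc u v, HasDerivAt (γ i) (F (γ i t)) t)
    (hγK : ∀ u v, ∀ᶠ i in l, MapsTo (γ i) (uIcc u v) K)
    (hlim : ∀ t, Tendsto (fun i ↦ γ i t) l (𝓝 (η t))) (s : ℝ) :
    HasDerivAt η (F (η s)) s := by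
  have hmem : ∀ᶠ i in l, γ i s ∈ K := (hγK s s).mono fun i hi ↦ hi left_mem_uIcc
  have hηK : η s ∈ K := hK.isClosed.mem_of_tendsto (hlim s) hmem
  have hFlim : Tendsto (fun i ↦ F (γ i s)) l (𝓝 (F (η s))) :=
    (hF _ hηK).tendsto.comp (tendsto_nhdsWithin_iff.2 ⟨hlim s, hmem⟩)
  rw [hasDerivAt_iff_isLittleO, Asymptotics.isLittleO_iff]
  intro ε hε
  obtain ⟨δ, hδ, hlin⟩ := exists_forall_norm_sub_sub_smul_le hK hF hε
  filter_upwards [Metric.ball_mem_nhds s hδ] with t ht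
  refine le_of_tendsto (((hlim t).sub (hlim s)).sub (hFlim.const_smul (t - s))).norm ?_
  filter_upwards [hsol s t, hγK s t] with i hi hiK
  exact hlin (γ i) s t ht (fun x hx ↦ (hi x hx).hasDerivWithinAt) hiK

lemma exists_solution_forall_mapClusterPt (hK : IsCompact K) (hF : ContinuousOn F K)
    {γ : ℝ → E} {t₀ : ℝ} (hsol : ∀ t ∈ Ici t₀, HasDerivAt γ (F (γ t)) t)
    (hγK : MapsTo γ (Ici t₀) K) :
    ∃ η : ℝ → E, (∀ s, HasDerivAt η (F (η s)) s) ∧ ∀ s, MapClusterPt (η s) atTop γ := by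
  -- An ultrafilter makes all translates converge at once, with no diagonal extraction.
  let U : Ultrafilter ℝ := Ultrafilter.of atTop
  have hU : (U : Filter ℝ) ≤ atTop := Ultrafilter.of_le atTop
  have hshift : ∀ s, Tendsto (fun τ ↦ τ + s) (U : Filter ℝ) atTop := fun s ↦
    (tendsto_atTop_add_const_right _ s tendsto_id).mono_left hU
  have hshift_mem : ∀ u v, ∀ᶠ τ in (U : Filter ℝ), ∀ t ∈ uIcc u v, τ + t ∈ Ici t₀ := by
    intro u v
    filter_upwards [(hshift (min u v)).eventually_ge_atTop t₀] with τ hτ t ht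
    exact hτ.trans (by gcongr; exact ht.1)
  have hlim : ∀ s, ∃ p, Tendsto (fun τ ↦ γ (τ + s)) (U : Filter ℝ) (𝓝 p) := by
    intro s
    have hUK : ((U.map fun τ ↦ γ (τ + s)) : Filter E) ≤ 𝓟 K :=
      le_principal_iff.2 ((hshift_mem s s).mono fun τ hτ ↦ hγK (hτ s left_mem_uIcc))
    obtain ⟨p, -, hp⟩ := hK.ultrafilter_le_nhds _ hUK
    exact ⟨p, hp⟩
  choose η hη using hlim
  refine ⟨η, hasDerivAt_of_tendsto_solutions (γ := fun τ t ↦ γ (τ + t)) hK hF ?_ ?_ hη,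
    fun s ↦ MapClusterPt.of_comp (hshift s) (hη s).mapClusterPt⟩
  · intro u v
    filter_upwards [hshift_mem u v] with τ hτ t ht
    exact (hsol _ (hτ t ht)).comp_const_add τ t
  · intro u v
    filter_upwards [hshift_mem u v] with τ hτ t ht using hγK (hτ t ht)

end LimitSolution

lemma exists_ne_of_hasDerivWithinAt_Ici {E : Type*} [NormedAddCommGroup E] [NormedSpace ℝ E]
    {η : ℝ → E} {v : E} {t₀ : ℝ} (hη : HasDerivWithinAt η v (Ici t₀) t₀) (hv : v ≠ 0) :
    ∃ t₁ ∈ Ici t₀, ∃ t₂ ∈ Ici t₀, η t₁ ≠ η t₂ := by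
  by_contra! hconst
  have hzero : HasDerivWithinAt η 0 (Ici t₀) t₀ :=
    (hasDerivWithinAt_const t₀ (Ici t₀) (η t₀)).congr (fun t ht ↦ hconst t ht t₀ self_mem_Ici) rfl
  exact hv ((uniqueDiffOn_Ici t₀ t₀ self_mem_Ici).eq_deriv _ hη hzero)

lemma exists_tendsto_atTop_of_antitoneOn_Ici {ι α : Type*} [LinearOrder ι]
    [ConditionallyCompleteLinearOrder α] [TopologicalSpace α] [OrderTopology α] {f : ι → α}
    {t₀ : ι} {c : α} (hf : AntitoneOn f (Ici t₀)) (hc : ∀ t ∈ Ici t₀, c ≤ f t) :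
    ∃ l, Tendsto f atTop (𝓝 l) := by
  have hanti : Antitone fun t : Ici t₀ ↦ f t := fun s t hst ↦ hf s.2 t.2 hst
  have hbdd : BddBelow (range fun t : Ici t₀ ↦ f t) := ⟨c, forall_mem_range.2 fun t ↦ hc t t.2⟩
  exact ⟨_, tendsto_comp_val_Ici_atTop.1 (tendsto_atTop_ciInf hanti hbdd)⟩

lemma lt_of_hasDerivAt_le_mul_sub {f f' : ℝ → ℝ} {C c t₁ : ℝ}
    (hf : ∀ t ∈ Ici t₁, HasDerivAt f (f' t) t)
    (hbound : ∀ t ∈ Ici t₁, f t < c → f' t ≤ C * (c - f t)) (h₁ : f t₁ < c) :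
    ∀ t ∈ Ici t₁, f t < c := by
  intro t ht
  -- At a contact with this barrier, `f' ≤ C (c - B) < (C + 1) (c - B) = B'`.
  let B : ℝ → ℝ := fun s ↦ c - (c - f t₁) * exp (-(C + 1) * (s - t₁))
  have hBlt : ∀ s, B s < c := fun s ↦ sub_lt_self c (mul_pos (sub_pos.2 h₁) (exp_pos _))
  have hB : ∀ s, HasDerivAt B ((C + 1) * (c - B s)) s := fun s ↦ by
    have hexp := ((((hasDerivAt_id s).sub_const t₁).const_mul (-(C + 1))).exp.const_mul
      (c - f t₁)).const_sub c
    refine hexp.congr_deriv ?_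
    simp only [B, id]
    ring
  refine lt_of_le_of_lt ?_ (hBlt t)
  refine image_le_of_deriv_right_lt_deriv_boundary' (a := t₁) (b := t)
    (fun s hs ↦ (hf s hs.1).continuousAt.continuousWithinAt)
    (fun s hs ↦ (hf s hs.1).hasDerivWithinAt) (by simp [B])
    (fun s _ ↦ (hB s).continuousAt.continuousWithinAt) (fun s _ ↦ (hB s).hasDerivWithinAt) ?_
    ⟨ht, le_rfl⟩
  intro s hs hcontact
  have hfs := hbound s hs.1 (hcontact ▸ hBlt s)
  rw [hcontact] at hfs
  linarith [hBlt s]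

lemma exists_sq_eq_sq_add_and_abs_sub_mul_abs_le (y : ℝ) {d : ℝ} (hd : 0 ≤ d) :
    ∃ z : ℝ, z ^ 2 = y ^ 2 + d ∧ |z - y| * |y| ≤ d := by
  wlog hy : 0 ≤ y generalizing y
  · obtain ⟨z, hz, hzy⟩ := this (-y) (by linarith)
    refine ⟨-z, by rw [neg_sq, hz, neg_sq], ?_⟩
    rwa [abs_neg, sub_neg_eq_add, ← abs_neg, neg_add, ← sub_eq_add_neg] at hzy
  have hsq : √(y ^ 2 + d) ^ 2 = y ^ 2 + d := sq_sqrt (by positivity)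
  have hle : y ≤ √(y ^ 2 + d) := le_sqrt_of_sq_le (by linarith)
  refine ⟨√(y ^ 2 + d), hsq, ?_⟩
  rw [abs_of_nonneg (sub_nonneg.2 hle), abs_of_nonneg hy]
  nlinarith

/-- The mechanical energy `E(x, y) = G(x) + y² / 2` of the system (S_g), whose sublevel sets in the
strip `(a, b) × ℝ` are the regions `Δ_r`. -/
def energy (g : ℝ → ℝ) (p : ℝ × ℝ) : ℝ := Gfun g p.1 + p.2 ^ 2 / 2

section Energy

variable {a b c M : ℝ} {g : ℝ → ℝ} {Φ : ℝ × ℝ → ℝ}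

lemma mem_Delta_iff {p : ℝ × ℝ} :
    p ∈ Delta a b g M ↔ p ∈ Ioo a b ×ˢ (univ : Set ℝ) ∧ energy g p < M ^ 2 / 2 := by
  simp only [Delta, energy, mem_ofPred_eq, mem_prod, mem_univ, and_true,
    lt_div_iff₀' (two_pos : (0 : ℝ) < 2)]

lemma hasDerivAt_Gfun (h0 : (0 : ℝ) ∈ Ioo a b) (hg : ContinuousOn g (Ioo a b)) {x : ℝ}
    (hx : x ∈ Ioo a b) : HasDerivAt (Gfun g) (g x) x :=
  integral_hasDerivAt_right (hg.mono (ordConnected_Ioo.uIcc_subset h0 hx)).intervalIntegrable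
    (hg.stronglyMeasurableAtFilter isOpen_Ioo x hx) (hg.continuousAt (isOpen_Ioo.mem_nhds hx))

lemma ne_zero_of_le_Gfun (hsign : ∀ x ∈ Ioo a b, x ≠ 0 → 0 < x * g x) (hc : 0 < c) {x : ℝ}
    (hx : x ∈ Ioo a b) (hcG : c ≤ Gfun g x) : g x ≠ 0 := by
  have hx0 : x ≠ 0 := by
    rintro rfl
    rw [Gfun, integral_same] at hcG
    exact hc.not_ge hcG
  exact right_ne_zero_of_mul (hsign x hx hx0).ne'

lemma continuousOn_energy (h0 : (0 : ℝ) ∈ Ioo a b) (hg : ContinuousOn g (Ioo a b)) :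
    ContinuousOn (energy g) (Ioo a b ×ˢ (univ : Set ℝ)) := by
  have hG : ContinuousOn (Gfun g) (Ioo a b) := fun x hx ↦
    (hasDerivAt_Gfun h0 hg hx).continuousAt.continuousWithinAt
  exact (hG.comp continuousOn_fst fun _ hp ↦ hp.1).add ((continuousOn_snd.pow 2).div_const 2)

lemma continuousOn_gVF (hg : ContinuousOn g (Ioo a b))
    (hΦ : ContinuousOn Φ (Ioo a b ×ˢ (univ : Set ℝ))) :
    ContinuousOn (gVF g Φ) (Ioo a b ×ˢ (univ : Set ℝ)) :=
  continuousOn_snd.prodMk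
    ((hg.comp continuousOn_fst fun _ hp ↦ hp.1).neg.sub (continuousOn_snd.mul hΦ))

lemma exists_rectangle_of_energy_le (h0 : (0 : ℝ) ∈ Ioo a b) (hg : ContinuousOn g (Ioo a b))
    (hGa : Tendsto (Gfun g) (𝓝[>] a) atTop) (hGb : Tendsto (Gfun g) (𝓝[<] b) atTop) (c : ℝ) :
    ∃ α β R : ℝ, Icc α β ⊆ Ioo a b ∧
      ∀ p ∈ Ioo a b ×ˢ (univ : Set ℝ), energy g p ≤ c → p ∈ Icc α β ×ˢ Icc (-R) R := by
  have hab : a < b := h0.1.trans h0.2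
  obtain ⟨α, hα, hαc⟩ := (mem_nhdsGT_iff_exists_Ioo_subset' hab).1 (hGa.eventually_gt_atTop c)
  obtain ⟨β, hβ, hβc⟩ := (mem_nhdsLT_iff_exists_Ioo_subset' hab).1 (hGb.eventually_gt_atTop c)
  have hαβ : Icc α β ⊆ Ioo a b := Icc_subset_Ioo hα hβ
  have hG : ContinuousOn (Gfun g) (Icc α β) := fun x hx ↦
    (hasDerivAt_Gfun h0 hg (hαβ hx)).continuousAt.continuousWithinAt
  obtain ⟨B, hB⟩ := isCompact_Icc.exists_bound_of_continuousOn hG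
  refine ⟨α, β, √(2 * (c + B)), hαβ, fun p hp hpc ↦ ?_⟩
  have hGc : Gfun g p.1 ≤ c := by
    unfold energy at hpc
    linarith [sq_nonneg p.2]
  have hx : p.1 ∈ Icc α β :=
    ⟨not_lt.1 fun h ↦ hGc.not_gt (hαc ⟨hp.1.1, h⟩), not_lt.1 fun h ↦ hGc.not_gt (hβc ⟨h, hp.1.2⟩)⟩
  have hy : p.2 ^ 2 ≤ 2 * (c + B) := by
    unfold energy at hpc
    linarith [(abs_le.1 (hB p.1 hx)).1]
  exact ⟨hx, abs_le.1 (abs_le_sqrt hy)⟩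

lemma isCompact_setOf_energy_le (h0 : (0 : ℝ) ∈ Ioo a b) (hg : ContinuousOn g (Ioo a b))
    (hGa : Tendsto (Gfun g) (𝓝[>] a) atTop) (hGb : Tendsto (Gfun g) (𝓝[<] b) atTop) (c : ℝ) :
    IsCompact {p ∈ Ioo a b ×ˢ (univ : Set ℝ) | energy g p ≤ c} := by
  obtain ⟨α, β, R, hαβ, hrect⟩ := exists_rectangle_of_energy_le h0 hg hGa hGb c
  have hsub : Icc α β ×ˢ Icc (-R) R ⊆ Ioo a b ×ˢ univ := prod_mono hαβ (subset_univ _)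
  have hcompact : IsCompact (Icc α β ×ˢ Icc (-R) R) := isCompact_Icc.prod isCompact_Icc
  have heq : {p ∈ Ioo a b ×ˢ (univ : Set ℝ) | energy g p ≤ c} =
      Icc α β ×ˢ Icc (-R) R ∩ energy g ⁻¹' Iic c :=
    Subset.antisymm (fun p hp ↦ ⟨hrect p hp.1 hp.2, hp.2⟩) fun p hp ↦ ⟨hsub hp.1, hp.2⟩
  rw [heq]
  exact hcompact.of_isClosed_subset
    (((continuousOn_energy h0 hg).mono hsub).preimage_isClosed_of_isClosed hcompact.isClosed
      isClosed_Iic) inter_subset_left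

lemma hasDerivAt_energy_comp (h0 : (0 : ℝ) ∈ Ioo a b) (hg : ContinuousOn g (Ioo a b))
    {γ : ℝ → ℝ × ℝ} {t : ℝ} (hγ : HasDerivAt γ (gVF g Φ (γ t)) t) (hx : (γ t).1 ∈ Ioo a b) :
    HasDerivAt (energy g ∘ γ) (-((γ t).2 ^ 2 * Φ (γ t))) t := by
  have hxdot : HasDerivAt (fun t ↦ (γ t).1) (γ t).2 t := hγ.fst
  have hydot : HasDerivAt (fun t ↦ (γ t).2) (-g (γ t).1 - (γ t).2 * Φ (γ t)) t := hγ.snd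
  refine (((hasDerivAt_Gfun h0 hg hx).comp t hxdot).add
    ((hydot.pow 2).div_const 2)).congr_deriv ?_
  ring

/-! ### Trapping in a sublevel set -/

lemma exists_neg_sq_mul_le_mul_sub_energy
    (hK : IsCompact {p ∈ Ioo a b ×ˢ (univ : Set ℝ) | energy g p ≤ c})
    (hΦ : LocallyLipschitzOn (Ioo a b ×ˢ (univ : Set ℝ)) Φ)
    (hpos : ∀ p ∈ Ioo a b ×ˢ (univ : Set ℝ), c ≤ energy g p → 0 ≤ Φ p) :
    ∃ C : ℝ, ∀ p ∈ Ioo a b ×ˢ (univ : Set ℝ), energy g p < c →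
      -(p.2 ^ 2 * Φ p) ≤ C * (c - energy g p) := by
  obtain ⟨L, hL⟩ := (hΦ.mono (sep_subset _ _)).exists_lipschitzOnWith_of_compact hK
  obtain ⟨R, hR⟩ := hK.exists_bound_of_continuousOn (continuousOn_snd (α := ℝ) (β := ℝ))
  refine ⟨2 * L * R, fun ⟨x, y⟩ hp hlt ↦ ?_⟩
  -- Move vertically from `(x, y)`, away from the axis, to the point `(x, z)` of the level `c`.
  obtain ⟨z, hz, hzy⟩ := exists_sq_eq_sq_add_and_abs_sub_mul_abs_le y
    (d := 2 * (c - energy g (x, y))) (by linarith)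
  have hzc : energy g (x, z) = c := by
    simp only [energy] at hz ⊢
    linarith
  have hq : (x, z) ∈ Ioo a b ×ˢ (univ : Set ℝ) := ⟨hp.1, mem_univ z⟩
  have hΦz : 0 ≤ Φ (x, z) := hpos _ hq hzc.ge
  have hdist : |Φ (x, z) - Φ (x, y)| ≤ L * |z - y| := by
    simpa [Prod.dist_eq, Real.dist_eq] using hL.dist_le_mul _ ⟨hq, hzc.le⟩ _ ⟨hp, hlt.le⟩
  have hΦy : -Φ (x, y) ≤ L * |z - y| := by linarith [le_abs_self (Φ (x, z) - Φ (x, y))]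
  have hyR : |y| ≤ R := hR _ ⟨hp, hlt.le⟩
  have hR0 : 0 ≤ R := (abs_nonneg y).trans hyR
  calc -(y ^ 2 * Φ (x, y)) = |y| ^ 2 * -Φ (x, y) := by rw [sq_abs]; ring
    _ ≤ |y| ^ 2 * (L * |z - y|) := by gcongr
    _ = L * |y| * (|z - y| * |y|) := by ring
    _ ≤ L * R * (2 * (c - energy g (x, y))) := by gcongr
    _ = 2 * L * R * (c - energy g (x, y)) := by ring

lemma energy_lt_of_energy_lt (h0 : (0 : ℝ) ∈ Ioo a b) (hg : ContinuousOn g (Ioo a b))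
    (hK : IsCompact {p ∈ Ioo a b ×ˢ (univ : Set ℝ) | energy g p ≤ c})
    (hΦ : LocallyLipschitzOn (Ioo a b ×ˢ (univ : Set ℝ)) Φ)
    (hpos : ∀ p ∈ Ioo a b ×ˢ (univ : Set ℝ), c ≤ energy g p → 0 ≤ Φ p)
    {γ : ℝ → ℝ × ℝ} {t₁ : ℝ} (hsol : IsSolOn (gVF g Φ) γ (Ici t₁))
    (hstrip : MapsTo γ (Ici t₁) (Ioo a b ×ˢ univ)) (h₁ : energy g (γ t₁) < c) :
    ∀ t ∈ Ici t₁, energy g (γ t) < c := by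
  obtain ⟨C, hC⟩ := exists_neg_sq_mul_le_mul_sub_energy hK hΦ hpos
  exact lt_of_hasDerivAt_le_mul_sub (f := energy g ∘ γ)
    (fun t ht ↦ hasDerivAt_energy_comp h0 hg (hsol t ht) (hstrip ht).1)
    (fun t ht hlt ↦ hC _ (hstrip ht) hlt) h₁

/-! ### Solutions that are never trapped -/

lemma antitoneOn_energy_comp (h0 : (0 : ℝ) ∈ Ioo a b) (hg : ContinuousOn g (Ioo a b))
    {γ : ℝ → ℝ × ℝ} {t₀ : ℝ} (hsol : IsSolOn (gVF g Φ) γ (Ici t₀))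
    (hstrip : MapsTo γ (Ici t₀) (Ioo a b ×ˢ univ)) (hpos : ∀ t ∈ Ici t₀, 0 ≤ Φ (γ t)) :
    AntitoneOn (energy g ∘ γ) (Ici t₀) := by
  have hderiv : ∀ t ∈ Ici t₀, HasDerivAt (energy g ∘ γ) (-((γ t).2 ^ 2 * Φ (γ t))) t :=
    fun t ht ↦ hasDerivAt_energy_comp h0 hg (hsol t ht) (hstrip ht).1
  refine antitoneOn_of_hasDerivWithinAt_nonpos (convex_Ici t₀)
    (fun t ht ↦ (hderiv t ht).continuousAt.continuousWithinAt)
    (fun t ht ↦ (hderiv t (interior_subset ht)).hasDerivWithinAt) fun t ht ↦ ?_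
  exact neg_nonpos.2 (mul_nonneg (sq_nonneg _) (hpos t (interior_subset ht)))

lemma damping_eq_zero_of_energy_eq_const (h0 : (0 : ℝ) ∈ Ioo a b) (hg : ContinuousOn g (Ioo a b))
    (hΦ : ContinuousOn Φ (Ioo a b ×ˢ (univ : Set ℝ))) {η : ℝ → ℝ × ℝ} {l : ℝ}
    (hη : ∀ s, HasDerivAt η (gVF g Φ (η s)) s) (hstrip : ∀ s, η s ∈ Ioo a b ×ˢ (univ : Set ℝ))
    (hE : ∀ s, energy g (η s) = l) (hrest : ∀ s, (η s).2 = 0 → g (η s).1 ≠ 0) (s : ℝ) :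
    Φ (η s) = 0 := by
  have hdissip : ∀ t, (η t).2 ^ 2 * Φ (η t) = 0 := fun t ↦ by
    have hconst : energy g ∘ η = fun _ ↦ l := funext hE
    have hderiv := hasDerivAt_energy_comp h0 hg (hη t) (hstrip t).1
    rw [hconst] at hderiv
    exact neg_eq_zero.1 (hderiv.unique (hasDerivAt_const t l))
  have hoff : ∀ t, (η t).2 ≠ 0 → Φ (η t) = 0 := fun t ht ↦
    (mul_eq_zero.1 (hdissip t)).resolve_left (pow_ne_zero 2 ht)
  by_cases hy : (η s).2 = 0
  · have hderiv : HasDerivAt (fun t ↦ (η t).2) (-g (η s).1 - (η s).2 * Φ (η s)) s := (hη s).snd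
    have hisolated : ∀ᶠ t in 𝓝[≠] s, (η t).2 ≠ 0 :=
      hderiv.eventually_ne (by simpa [hy] using hrest s hy)
    have hcont : ContinuousAt (Φ ∘ η) s :=
      (hΦ.continuousAt ((isOpen_Ioo.prod isOpen_univ).mem_nhds (hstrip s))).comp
        (hη s).continuousAt
    exact tendsto_nhds_unique (hcont.tendsto.mono_left nhdsWithin_le_nhds)
      (tendsto_const_nhds.congr' (hisolated.mono fun t ht ↦ (hoff t ht).symm))
  · exact hoff s hy

lemma exists_solution_energy_eq_const (h0 : (0 : ℝ) ∈ Ioo a b) (hg : ContinuousOn g (Ioo a b))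
    (hK : ∀ r, IsCompact {p ∈ Ioo a b ×ˢ (univ : Set ℝ) | energy g p ≤ r})
    (hΦ : ContinuousOn Φ (Ioo a b ×ˢ (univ : Set ℝ))) {γ : ℝ → ℝ × ℝ} {t₀ : ℝ}
    (hsol : IsSolOn (gVF g Φ) γ (Ici t₀)) (hstrip : MapsTo γ (Ici t₀) (Ioo a b ×ˢ univ))
    (hpos : ∀ t ∈ Ici t₀, 0 ≤ Φ (γ t)) (hc : ∀ t ∈ Ici t₀, c ≤ energy g (γ t)) :
    ∃ η : ℝ → ℝ × ℝ, ∃ l ≥ c, (∀ s, HasDerivAt η (gVF g Φ (η s)) s) ∧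
      (∀ s, η s ∈ Ioo a b ×ˢ (univ : Set ℝ)) ∧ ∀ s, energy g (η s) = l := by
  have hanti := antitoneOn_energy_comp h0 hg hsol hstrip hpos
  obtain ⟨l, hl⟩ := exists_tendsto_atTop_of_antitoneOn_Ici hanti hc
  have hcl : c ≤ l := ge_of_tendsto hl ((eventually_ge_atTop t₀).mono hc)
  have hγK : MapsTo γ (Ici t₀) {p ∈ Ioo a b ×ˢ univ | energy g p ≤ energy g (γ t₀)} :=
    fun t ht ↦ ⟨hstrip ht, hanti self_mem_Ici ht ht⟩
  obtain ⟨η, hη, hcluster⟩ := exists_solution_forall_mapClusterPt (hK _)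
    ((continuousOn_gVF hg hΦ).mono (sep_subset _ _)) hsol hγK
  have hηstrip : ∀ s, η s ∈ Ioo a b ×ˢ (univ : Set ℝ) := fun s ↦
    ((hK _).isClosed.mem_of_mapClusterPt (hcluster s) ((eventually_ge_atTop t₀).mono hγK)).1
  refine ⟨η, l, hcl, hη, hηstrip, fun s ↦ eq_of_mapClusterPt_of_tendsto (hcluster s) ?_ hl⟩
  exact (continuousOn_energy h0 hg).continuousAt
    ((isOpen_Ioo.prod isOpen_univ).mem_nhds (hηstrip s))

lemma hasSemiOrbitIn_of_forall_le_energy (h0 : (0 : ℝ) ∈ Ioo a b) (hg : ContinuousOn g (Ioo a b))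
    (hK : ∀ r, IsCompact {p ∈ Ioo a b ×ˢ (univ : Set ℝ) | energy g p ≤ r})
    (hΦ : ContinuousOn Φ (Ioo a b ×ˢ (univ : Set ℝ)))
    (hrest : ∀ x ∈ Ioo a b, c ≤ Gfun g x → g x ≠ 0) {γ : ℝ → ℝ × ℝ} {t₀ : ℝ}
    (hsol : IsSolOn (gVF g Φ) γ (Ici t₀)) (hstrip : MapsTo γ (Ici t₀) (Ioo a b ×ˢ univ))
    (hpos : ∀ t ∈ Ici t₀, 0 ≤ Φ (γ t)) (hc : ∀ t ∈ Ici t₀, c ≤ energy g (γ t)) :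
    HasSemiOrbitIn (gVF g Φ)
      {p ∈ Ioo a b ×ˢ (univ : Set ℝ) | Φ p = 0 ∧ c ≤ energy g p} := by
  obtain ⟨η, l, hcl, hη, hηstrip, hE⟩ :=
    exists_solution_energy_eq_const h0 hg hK hΦ hsol hstrip hpos hc
  have hηrest : ∀ s, (η s).2 = 0 → g (η s).1 ≠ 0 := fun s hs ↦ by
    have hG : Gfun g (η s).1 = l := by simpa [energy, hs] using hE s
    exact hrest _ (hηstrip s).1 (hcl.trans hG.ge)
  have hmoving : gVF g Φ (η 0) ≠ 0 := fun hzero ↦ by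
    obtain ⟨hy, hforce⟩ := Prod.ext_iff.1 hzero
    simp only [gVF, Prod.fst_zero, Prod.snd_zero] at hy hforce
    exact hηrest 0 hy (by simpa [hy] using hforce)
  refine ⟨η, 0, fun s _ ↦ hη s,
    exists_ne_of_hasDerivWithinAt_Ici (hη 0).hasDerivWithinAt hmoving, ?_⟩
  rintro _ ⟨s, -, rfl⟩
  exact ⟨hηstrip s, damping_eq_zero_of_energy_eq_const h0 hg hΦ hη hηstrip hE hηrest s,
    hcl.trans (hE s).ge⟩

end Energy

theorem statement13_general {a b : ℝ} (h0 : (0 : ℝ) ∈ Ioo a b) {g : ℝ → ℝ}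
    (hg : ContinuousOn g (Ioo a b))
    (hGa : Tendsto (Gfun g) (𝓝[>] a) atTop) (hGb : Tendsto (Gfun g) (𝓝[<] b) atTop)
    {Φ : ℝ × ℝ → ℝ} (hΦ : LocallyLipschitzOn (Ioo a b ×ˢ (univ : Set ℝ)) Φ) {M : ℝ}
    (hrest : ∀ x ∈ Ioo a b, M ^ 2 / 2 ≤ Gfun g x → g x ≠ 0)
    (hpos : ∀ p ∈ (Ioo a b ×ˢ (univ : Set ℝ)) \ Delta a b g M, 0 ≤ Φ p)
    (hZ : ¬ HasSemiOrbitIn (gVF g Φ)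
      ({p ∈ Ioo a b ×ˢ (univ : Set ℝ) | Φ p = 0} \ Delta a b g M))
    {γ : ℝ → ℝ × ℝ} {t₀ : ℝ} (hsol : IsSolOn (gVF g Φ) γ (Ici t₀))
    (hstrip : MapsTo γ (Ici t₀) (Ioo a b ×ˢ univ)) :
    ∃ T ≥ t₀, ∀ t ≥ T, γ t ∈ Delta a b g M := by
  have hK := isCompact_setOf_energy_le h0 hg hGa hGb
  by_cases henter : ∃ t₁ ≥ t₀, γ t₁ ∈ Delta a b g M
  · obtain ⟨t₁, ht₁, hγt₁⟩ := henter
    have hsub : Ici t₁ ⊆ Ici t₀ := Ici_subset_Ici.2 ht₁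
    have htrapped := energy_lt_of_energy_lt h0 hg (hK _) hΦ
      (fun p hp hle ↦ hpos p ⟨hp, fun hΔ ↦ hle.not_gt (mem_Delta_iff.1 hΔ).2⟩)
      (fun t ht ↦ hsol t (hsub ht)) (hstrip.mono_left hsub) (mem_Delta_iff.1 hγt₁).2
    exact ⟨t₁, ht₁, fun t ht ↦ mem_Delta_iff.2 ⟨hstrip (hsub ht), htrapped t ht⟩⟩
  · push Not at henter
    have hle : ∀ t ∈ Ici t₀, M ^ 2 / 2 ≤ energy g (γ t) := fun t ht ↦
      not_lt.1 fun hlt ↦ henter t ht (mem_Delta_iff.2 ⟨hstrip ht, hlt⟩)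
    obtain ⟨η, s₀, hη, hne, hηZ⟩ := hasSemiOrbitIn_of_forall_le_energy h0 hg hK hΦ.continuousOn
      hrest hsol hstrip (fun t ht ↦ hpos _ ⟨hstrip ht, henter t ht⟩) hle
    refine absurd ⟨η, s₀, hη, hne, fun p hp ↦ ?_⟩ hZ
    obtain ⟨hp_strip, hp_zero, hp_le⟩ := hηZ hp
    exact ⟨⟨hp_strip, hp_zero⟩, fun hΔ ↦ hp_le.not_gt (mem_Delta_iff.1 hΔ).2⟩

/-- if `G → +∞` at both endpoints of `(a,b)`, `Φ ≥ 0` outside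
`Δ_M`, and `{Φ = 0} \ Δ_M` contains no non-trivial positive semi-orbit of
(S_g), then every forward-complete solution of (S_g) in the strip definitely
enters `Δ_M` and remains inside it. -/
theorem statement13 (a b : ℝ) (ha : a < 0) (hb : 0 < b)
    (g : ℝ → ℝ) (hg : ContDiffOn ℝ 1 g (Ioo a b))
    (hgsign : ∀ x ∈ Ioo a b, x ≠ 0 → 0 < x * g x)
    (hGa : Tendsto (Gfun g) (𝓝[>] a) atTop)
    (hGb : Tendsto (Gfun g) (𝓝[<] b) atTop)
    (Φ : ℝ × ℝ → ℝ) (hΦ : ContDiffOn ℝ 1 Φ (Ioo a b ×ˢ (univ : Set ℝ)))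
    (M : ℝ) (hM : 0 < M)
    (hpos : ∀ p ∈ (Ioo a b ×ˢ (univ : Set ℝ)) \ Delta a b g M, Φ p ≥ 0)
    (hZ : ¬ HasSemiOrbitIn (gVF g Φ)
      ({p ∈ Ioo a b ×ˢ (univ : Set ℝ) | Φ p = 0} \ Delta a b g M)) :
    ∀ (γ : ℝ → ℝ × ℝ) (t₀ : ℝ), IsSolOn (gVF g Φ) γ (Ici t₀) →
      γ '' Ici t₀ ⊆ Ioo a b ×ˢ (univ : Set ℝ) →
      ∃ T ≥ t₀, ∀ t ≥ T, γ t ∈ Delta a b g M := by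
  exact fun γ t₀ hsol hstrip ↦ statement13_general ⟨ha, hb⟩ hg.continuousOn hGa hGb
    (hΦ.locallyLipschitzOn ((convex_Ioo a b).prod convex_univ))
    (fun _ ↦ ne_zero_of_le_Gfun hgsign (by positivity)) hpos hZ hsol
    (mapsTo_iff_image_subset.2 hstrip)
end
end

section
/- Let g ∈ C¹(ℝ, ℝ) with g'(0) > 0, x·g(x) > 0 for x ≠ 0, and ∫₀^{±∞} g(x) dx = +∞, and let f₁, f₃, …, f_{2N+1} : ℝ → ℝ be continuously differentiable, with all even-index coefficients f_{2k} ≡ 0. Set G(x) = ∫₀^x g(s) ds. Assume: (i) for every k = 0, …, N and all x ≠ 0, x·[ (2k+1)·f_{2k+1}(x)·g(x) + 2G(x)·(f_{2k+1}'(x)·g(x) − f_{2k+1}(x)·g'(x))/g(x) ] ≥ 0 (condition (H_g^{2k+1})); (ii) there exists a sequence x_m → 0 such that for every m some k(m) makes this inequality strict at x_m; (iii) f₁(0) < 0 and there exists ε > 0 with f₁(x) > 0 for all x ∈ ℝ \ [−ε, ε]; (iv) there exists 1 ≤ k̄ ≤ N such that f_{2k̄+1}(x) > 0 on [−ε, ε].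 Then the system ẋ = y, ẏ = −g(x) − Σ_{k=0}^{N} f_{2k+1}(x)·y^{2k+1} has exactly one limit cycle, which attracts every non-constant solution. -/
open Set Filter Metric Real Topology intervalIntegral

noncomputable section

/-- The vector field of ẋ = y, ẏ = −g(x) − Σ_{k=0}^{N} f_{2k+1}(x) y^{2k+1},
where `o k` stands for `f_{2k+1}`. -/
def gOddVF (g : ℝ → ℝ) (N : ℕ) (o : ℕ → ℝ → ℝ) : ℝ × ℝ → ℝ × ℝ :=
  fun p => (p.2, -g p.1 - ∑ k ∈ Finset.range (N + 1), o k p.1 * p.2 ^ (2 * k + 1))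

/-- The divergence of `gOddVF g N o`. -/
def gOddDiv (N : ℕ) (o : ℕ → ℝ → ℝ) : ℝ × ℝ → ℝ :=
  fun p => -∑ k ∈ Finset.range (N + 1), (2 * (k : ℝ) + 1) * o k p.1 * p.2 ^ (2 * k)

/-- The left-hand side of condition (H_g^{2k+1}) for a coefficient `f`. -/
def HgLHS (g : ℝ → ℝ) (k : ℕ) (f : ℝ → ℝ) (x : ℝ) : ℝ :=
  x * ((2 * (k : ℝ) + 1) * f x * g x
    + 2 * Gfun g x * (deriv f x * g x - f x * deriv g x) / g x)

/-!
Write `l = log √(2 G(x))` and `z = y / √(2 G(x))`. In each open quadrant an orbit is, up to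
reflection and time reversal, a graph `z = z(l)` solving `dz/dl = -1/z - z - D(l, z)`, where the
scaled damping `D` is monotone in `l` by the hypotheses (H_g^{2k+1}). Multiplying the height at
which an orbit crosses the `y`-axis by `r ≥ 1` amounts to shifting `l` by `log r`, so comparing
shifted with unshifted solutions shows that the return map `P` of the positive `y`-axis satisfies
`P(r s) ≤ r P(s)`, strictly for `r > 1` because `D` is strictly monotone at arbitrarily small radii.
Orbits do not cross, so `P` is also monotone. The energy `G(x) + y² / 2` grows where it is small
and decays where it is large, whence `P(s) ≥ s` for small `s` and `P(s) ≤ s` for large `s`. Since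
`P(s) / s` is strictly decreasing, `P` has exactly one fixed point, and it attracts all iterates.
-/

/-! ### Differential inequalities for scalar equations -/

section Comparison

lemma lt_of_lipschitzOnWith_of_le_deriv {v : ℝ → ℝ → ℝ} {K : NNReal} {S : Set ℝ} {a b : ℝ}
    {p q p' : ℝ → ℝ} (hab : a ≤ b) (hv : ∀ l ∈ Icc a b, LipschitzOnWith K (v l) S)
    (hpS : ∀ l ∈ Icc a b, p l ∈ S) (hqS : ∀ l ∈ Icc a b, q l ∈ S)
    (hp : ∀ l ∈ Icc a b, HasDerivAt p (p' l) l)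
    (hq : ∀ l ∈ Icc a b, HasDerivAt q (v l (q l)) l)
    (hp' : ∀ l ∈ Icc a b, v l (p l) ≤ p' l) (h0 : q a < p a) : q b < p b := by
  let barrier : ℝ → ℝ := fun l ↦ (p a - q a) * exp (-(K + 1) * (l - a))
  have barrier_pos (l : ℝ) : 0 < barrier l := mul_pos (sub_pos.2 h0) (exp_pos _)
  have hbarrier (l : ℝ) : HasDerivAt barrier (-(K + 1) * barrier l) l := by
    have := (((hasDerivAt_id l).sub_const a).const_mul (-((K : ℝ) + 1))).exp.const_mul (p a - q a)
    exact this.congr_deriv (by simp only [barrier, id]; ring)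
  have hgap (l : ℝ) (hl : l ∈ Icc a b) : HasDerivAt (fun l ↦ p l - q l) (p' l - v l (q l)) l :=
    (hp l hl).sub (hq l hl)
  have barrier_le_gap : barrier b ≤ p b - q b := by
    refine image_le_of_deriv_right_lt_deriv_boundary' (f := barrier) (B := fun l ↦ p l - q l)
      (fun l _ ↦ (hbarrier l).continuousAt.continuousWithinAt)
      (fun l _ ↦ (hbarrier l).hasDerivWithinAt) (by simp [barrier])
      (fun l hl ↦ (hgap l hl).continuousAt.continuousWithinAt)
      (fun l hl ↦ (hgap l (Ico_subset_Icc_self hl)).hasDerivWithinAt) (fun l hl hbg ↦ ?_)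
      (right_mem_Icc.2 hab)
    have hl' := Ico_subset_Icc_self hl
    have gap_pos : 0 < p l - q l := hbg ▸ barrier_pos l
    have hLip := (hv l hl').dist_le_mul _ (hpS l hl') _ (hqS l hl')
    rw [Real.dist_eq, Real.dist_eq, abs_of_pos gap_pos] at hLip
    rw [hbg]
    linarith [hp' l hl', neg_abs_le (v l (p l) - v l (q l))]
  linarith [barrier_pos b]

variable {V : ℝ → ℝ → ℝ} {U : Set ℝ} {a b : ℝ} {p q p' : ℝ → ℝ}

lemma exists_forall_lipschitzOnWith_of_contDiffOn (hU : Convex ℝ U)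
    (hV : ContDiffOn ℝ 1 (Function.uncurry V) (univ ×ˢ U)) {I S : Set ℝ} (hI : IsCompact I)
    (hS : IsCompact S) (hSU : S ⊆ U) : ∃ K, ∀ l ∈ I, LipschitzOnWith K (V l) S := by
  have hloc : LocallyLipschitzOn (I ×ˢ S) (Function.uncurry V) :=
    (hV.locallyLipschitzOn (convex_univ.prod hU)).mono (prod_mono (subset_univ I) hSU)
  obtain ⟨K, hK⟩ := hloc.exists_lipschitzOnWith_of_compact (hI.prod hS)
  refine ⟨K, fun l hl y hy z hz ↦ ?_⟩
  simpa [Prod.edist_eq] using hK (mk_mem_prod hl hy) (mk_mem_prod hl hz)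

lemma lt_of_contDiffOn_of_le_deriv (hU : Convex ℝ U)
    (hV : ContDiffOn ℝ 1 (Function.uncurry V) (univ ×ˢ U)) (hab : a ≤ b)
    (hpU : ∀ l ∈ Icc a b, p l ∈ U) (hqU : ∀ l ∈ Icc a b, q l ∈ U)
    (hp : ∀ l ∈ Icc a b, HasDerivAt p (p' l) l)
    (hq : ∀ l ∈ Icc a b, HasDerivAt q (V l (q l)) l)
    (hp' : ∀ l ∈ Icc a b, V l (p l) ≤ p' l) (h0 : q a < p a) : q b < p b := by
  have hpc : ContinuousOn p (Icc a b) := fun l hl ↦ (hp l hl).continuousAt.continuousWithinAt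
  have hqc : ContinuousOn q (Icc a b) := fun l hl ↦ (hq l hl).continuousAt.continuousWithinAt
  obtain ⟨K, hK⟩ := exists_forall_lipschitzOnWith_of_contDiffOn hU hV isCompact_Icc
    ((isCompact_Icc.image_of_continuousOn hpc).union (isCompact_Icc.image_of_continuousOn hqc))
    (union_subset (image_subset_iff.2 hpU) (image_subset_iff.2 hqU))
  exact lt_of_lipschitzOnWith_of_le_deriv hab hK (fun l hl ↦ .inl (mem_image_of_mem p hl))
    (fun l hl ↦ .inr (mem_image_of_mem q hl)) hp hq hp' h0

lemma lt_of_contDiffOn_of_deriv_le (hU : Convex ℝ U)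
    (hV : ContDiffOn ℝ 1 (Function.uncurry V) (univ ×ˢ U)) (hab : a ≤ b)
    (hpU : ∀ l ∈ Icc a b, p l ∈ U) (hqU : ∀ l ∈ Icc a b, q l ∈ U)
    (hp : ∀ l ∈ Icc a b, HasDerivAt p (p' l) l)
    (hq : ∀ l ∈ Icc a b, HasDerivAt q (V l (q l)) l)
    (hp' : ∀ l ∈ Icc a b, p' l ≤ V l (p l)) (h0 : q b < p b) : q a < p a := by
  have neg_mem (l : ℝ) (hl : l ∈ Icc (-b) (-a)) : -l ∈ Icc a b :=
    ⟨le_neg_of_le_neg hl.2, neg_le_of_neg_le hl.1⟩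
  have hV' : ContDiffOn ℝ 1 (Function.uncurry fun l z ↦ -V (-l) z) (univ ×ˢ U) := by
    have hneg : ContDiff ℝ 1 fun w : ℝ × ℝ ↦ (-w.1, w.2) := by fun_prop
    exact (hV.comp hneg.contDiffOn fun w hw ↦ ⟨mem_univ _, hw.2⟩).neg
  have hneg (f : ℝ → ℝ) (f' l : ℝ) (hf : HasDerivAt f f' (-l)) :
      HasDerivAt (fun l ↦ f (-l)) (-f') l :=
    (hf.comp l (hasDerivAt_neg l)).congr_deriv (mul_neg_one f')
  simpa using lt_of_contDiffOn_of_le_deriv (a := -b) (b := -a) hU hV' (neg_le_neg hab)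
    (fun l hl ↦ hpU _ (neg_mem l hl)) (fun l hl ↦ hqU _ (neg_mem l hl))
    (fun l hl ↦ hneg p _ l (hp _ (neg_mem l hl)))
    (fun l hl ↦ hneg q _ l (hq _ (neg_mem l hl)))
    (fun l hl ↦ neg_le_neg (hp' _ (neg_mem l hl))) (by simpa using h0)

end Comparison

/-! ### Arcs in logarithmic coordinates -/

/-- A quarter turn of an orbit in logarithmic coordinates: a positive solution `z` of
`dz/dl = V l z` on `(-∞, B)` that vanishes at `B`. The number `s` is the height on the `y`-axis at
which the orbit starts, recovered as the limit of `y = exp l * z l` at `l = -∞`. -/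
structure IsArc (V : ℝ → ℝ → ℝ) (z : ℝ → ℝ) (B s : ℝ) : Prop where
  pos : ∀ l < B, 0 < z l
  hasDerivAt : ∀ l < B, HasDerivAt z (V l (z l)) l
  tendsto_zero : Tendsto z (𝓝[<] B) (𝓝 0)
  tendsto_exp_mul : Tendsto (fun l ↦ exp l * z l) atBot (𝓝 s)
  height_pos : 0 < s

namespace IsArc

variable {V V₁ V₂ : ℝ → ℝ → ℝ} {z z₁ z₂ : ℝ → ℝ} {B B₁ B₂ s s₁ s₂ c l l₀ : ℝ}

lemma continuousAt (h : IsArc V z B s) (hl : l < B) : ContinuousAt z l :=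
  (h.hasDerivAt l hl).continuousAt

lemma shift (h : IsArc V z B s) (c : ℝ) :
    IsArc (fun l ↦ V (l - c)) (fun l ↦ z (l - c)) (B + c) (exp c * s) where
  pos l hl := h.pos _ (sub_lt_iff_lt_add.2 hl)
  hasDerivAt l hl := (h.hasDerivAt _ (sub_lt_iff_lt_add.2 hl)).comp_sub_const l c
  tendsto_zero := by
    refine h.tendsto_zero.comp (tendsto_nhdsWithin_iff.2 ⟨?_, ?_⟩)
    · exact ((continuous_sub_right c).tendsto' _ _ (add_sub_cancel_right B c)).mono_left
        nhdsWithin_le_nhds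
    · filter_upwards [self_mem_nhdsWithin] with l (hl : l < B + c) using sub_lt_iff_lt_add.2 hl
  tendsto_exp_mul := by
    have hc : Tendsto (fun l : ℝ ↦ l - c) atBot atBot :=
      tendsto_atBot_add_const_right _ (-c) tendsto_id
    refine ((h.tendsto_exp_mul.comp hc).const_mul (exp c)).congr fun l ↦ ?_
    rw [Function.comp_apply, ← mul_assoc, ← exp_add, add_sub_cancel]
  height_pos := mul_pos (exp_pos c) h.height_pos

section DifferentFields

variable (h₁ : IsArc V₁ z₁ B₁ s₁) (h₂ : IsArc V₂ z₂ B₂ s₂)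

include h₁ h₂

lemma eventually_lt (hs : s₂ < s₁) : ∀ᶠ l in atBot, z₂ l < z₁ l := by
  filter_upwards [h₂.tendsto_exp_mul.eventually_lt h₁.tendsto_exp_mul hs] with l hl
  exact lt_of_mul_lt_mul_left hl (exp_pos l).le

lemma lt_of_lt_left (hV₂ : ContDiffOn ℝ 1 (Function.uncurry V₂) (univ ×ˢ Ioi 0))
    (hle : ∀ l, ∀ z > 0, V₂ l z ≤ V₁ l z) (h₀ : z₂ l₀ < z₁ l₀) (hl₀ : l₀ ≤ l) (hl₁ : l < B₁)
    (hl₂ : l < B₂) : z₂ l < z₁ l :=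
  lt_of_contDiffOn_of_le_deriv (convex_Ioi 0) hV₂ hl₀
    (fun m hm ↦ h₁.pos m (hm.2.trans_lt hl₁)) (fun m hm ↦ h₂.pos m (hm.2.trans_lt hl₂))
    (fun m hm ↦ h₁.hasDerivAt m (hm.2.trans_lt hl₁))
    (fun m hm ↦ h₂.hasDerivAt m (hm.2.trans_lt hl₂))
    (fun m hm ↦ hle m _ (h₁.pos m (hm.2.trans_lt hl₁))) h₀

lemma lt_of_lt_right (hV₂ : ContDiffOn ℝ 1 (Function.uncurry V₂) (univ ×ˢ Ioi 0))
    (hle : ∀ l, ∀ z > 0, V₁ l z ≤ V₂ l z) (h₀ : z₂ l₀ < z₁ l₀) (hl₀ : l ≤ l₀) (hl₁ : l₀ < B₁)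
    (hl₂ : l₀ < B₂) : z₂ l < z₁ l :=
  lt_of_contDiffOn_of_deriv_le (convex_Ioi 0) hV₂ hl₀
    (fun m hm ↦ h₁.pos m (hm.2.trans_lt hl₁)) (fun m hm ↦ h₂.pos m (hm.2.trans_lt hl₂))
    (fun m hm ↦ h₁.hasDerivAt m (hm.2.trans_lt hl₁))
    (fun m hm ↦ h₂.hasDerivAt m (hm.2.trans_lt hl₂))
    (fun m hm ↦ hle m _ (h₁.pos m (hm.2.trans_lt hl₁))) h₀

lemma endpoint_le_of_lt (hV₂ : ContDiffOn ℝ 1 (Function.uncurry V₂) (univ ×ˢ Ioi 0))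
    (hle : ∀ l, ∀ z > 0, V₂ l z ≤ V₁ l z) (h₀ : z₂ l₀ < z₁ l₀) (hl₁ : l₀ < B₁) : B₂ ≤ B₁ := by
  by_contra! hB
  have hz₂ : Tendsto z₂ (𝓝[<] B₁) (𝓝 (z₂ B₁)) :=
    (h₂.continuousAt hB).tendsto.mono_left nhdsWithin_le_nhds
  have hz : z₂ B₁ ≤ 0 := by
    refine le_of_tendsto_of_tendsto hz₂ h₁.tendsto_zero ?_
    filter_upwards [Ioo_mem_nhdsLT hl₁] with l hl
    exact (h₁.lt_of_lt_left h₂ hV₂ hle h₀ hl.1.le hl.2 (hl.2.trans hB)).le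
  exact (h₂.pos B₁ hB).not_ge hz

lemma endpoint_le_of_height_lt (hV₂ : ContDiffOn ℝ 1 (Function.uncurry V₂) (univ ×ˢ Ioi 0))
    (hle : ∀ l, ∀ z > 0, V₂ l z ≤ V₁ l z) (hs : s₂ < s₁) : B₂ ≤ B₁ := by
  obtain ⟨l, hl, hlB⟩ := ((h₁.eventually_lt h₂ hs).and (eventually_lt_atBot B₁)).exists
  exact h₁.endpoint_le_of_lt h₂ hV₂ hle hl hlB

lemma lt_of_height_lt (hV₂ : ContDiffOn ℝ 1 (Function.uncurry V₂) (univ ×ˢ Ioi 0))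
    (hle : ∀ l, ∀ z > 0, V₂ l z ≤ V₁ l z) (hs : s₂ < s₁) (hl₁ : l < B₁) (hl₂ : l < B₂) :
    z₂ l < z₁ l := by
  obtain ⟨m, hm, hml⟩ := ((h₁.eventually_lt h₂ hs).and (eventually_le_atBot l)).exists
  exact h₁.lt_of_lt_left h₂ hV₂ hle hm hml hl₁ hl₂

lemma height_le_of_endpoint_lt (hV₂ : ContDiffOn ℝ 1 (Function.uncurry V₂) (univ ×ˢ Ioi 0))
    (hle : ∀ l, ∀ z > 0, V₁ l z ≤ V₂ l z) (hB : B₂ < B₁) : s₂ ≤ s₁ := by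
  have hz₁ : Tendsto z₁ (𝓝[<] B₂) (𝓝 (z₁ B₂)) :=
    (h₁.continuousAt hB).tendsto.mono_left nhdsWithin_le_nhds
  refine le_of_tendsto_of_tendsto h₂.tendsto_exp_mul h₁.tendsto_exp_mul ?_
  filter_upwards [eventually_lt_atBot B₂] with l hl
  obtain ⟨m, hm, hml⟩ := ((h₂.tendsto_zero.eventually_lt hz₁ (h₁.pos B₂ hB)).and
    (Ioo_mem_nhdsLT hl)).exists
  have := h₁.lt_of_lt_right h₂ hV₂ hle hm hml.1.le (hml.2.trans hB) hml.2
  gcongr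

end DifferentFields

variable (hV : ContDiffOn ℝ 1 (Function.uncurry V) (univ ×ˢ Ioi 0))
  (h₁ : IsArc V z₁ B₁ s₁) (h₂ : IsArc V z₂ B₂ s₂)

include h₁ in
lemma height_lt_exp_mul (hs : s₂ ≤ exp c * s₁) {c' : ℝ} (hc' : c < c') : s₂ < exp c' * s₁ :=
  hs.trans_lt (mul_lt_mul_of_pos_right (exp_lt_exp.2 hc') h₁.height_pos)

include hV h₁ h₂

lemma endpoint_le_add (hanti : ∀ z > 0, Antitone (V · z)) (hc : 0 ≤ c)
    (hs : s₂ ≤ exp c * s₁) : B₂ ≤ B₁ + c := by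
  refine le_of_forall_gt_imp_ge_of_dense fun B hB ↦ ?_
  have hc' : c < B - B₁ := lt_sub_iff_add_lt'.2 hB
  have := (h₁.shift (B - B₁)).endpoint_le_of_height_lt h₂ hV
    (fun l z hz ↦ hanti z hz (sub_le_self l (hc.trans hc'.le))) (h₁.height_lt_exp_mul hs hc')
  rwa [add_sub_cancel] at this

lemma le_shift (hanti : ∀ z > 0, Antitone (V · z)) (hc : 0 ≤ c) (hs : s₂ ≤ exp c * s₁)
    (hl : l < B₂) : z₂ l ≤ z₁ (l - c) := by
  have hlB : l < B₁ + c := hl.trans_le (h₁.endpoint_le_add hV h₂ hanti hc hs)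
  have hcont : Tendsto (fun c ↦ z₁ (l - c)) (𝓝[>] c) (𝓝 (z₁ (l - c))) :=
    ((h₁.continuousAt (sub_lt_iff_lt_add.2 hlB)).comp_of_eq
      (continuous_sub_left l).continuousAt rfl).tendsto.mono_left nhdsWithin_le_nhds
  refine ge_of_tendsto hcont ?_
  filter_upwards [self_mem_nhdsWithin] with c' (hc' : c < c')
  exact ((h₁.shift c').lt_of_height_lt h₂ hV
    (fun l z hz ↦ hanti z hz (sub_le_self l (hc.trans hc'.le))) (h₁.height_lt_exp_mul hs hc')
    (by linarith) hl).le

lemma height_le_exp_mul (hmono : ∀ z > 0, Monotone (V · z)) (hc : 0 ≤ c) (hB : B₂ ≤ B₁ + c) :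
    s₂ ≤ exp c * s₁ := by
  have hcont : Tendsto (fun c ↦ exp c * s₁) (𝓝[>] c) (𝓝 (exp c * s₁)) :=
    (continuous_exp.mul continuous_const).continuousWithinAt
  refine ge_of_tendsto hcont ?_
  filter_upwards [self_mem_nhdsWithin] with c' (hc' : c < c')
  exact (h₁.shift c').height_le_of_endpoint_lt h₂ hV
    (fun l z hz ↦ hmono z hz (sub_le_self l (hc.trans hc'.le))) (by linarith)

omit hV in
lemma exists_lt_shift (hstrict : ∃ᶠ l in atBot, ∀ l' < l, ∀ z > 0, V l z < V l' z) (hc : 0 < c)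
    (hB : B₂ ≤ B₁ + c) (hle : ∀ l < B₂, z₂ l ≤ z₁ (l - c)) : ∃ l < B₂, z₂ l < z₁ (l - c) := by
  by_contra! hge
  have heq (l : ℝ) (hl : l < B₂) : z₂ l = z₁ (l - c) := le_antisymm (hle l hl) (hge l hl)
  obtain ⟨l, hlt, hl⟩ := (hstrict.and_eventually (eventually_lt_atBot B₂)).exists
  have heq_nhds : (fun l ↦ z₁ (l - c)) =ᶠ[𝓝 l] z₂ := by
    filter_upwards [Iio_mem_nhds hl] with m hm using (heq m hm).symm
  have hfield : V l (z₂ l) = V (l - c) (z₁ (l - c)) :=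
    (h₂.hasDerivAt l hl).unique <|
      ((h₁.shift c).hasDerivAt l (hl.trans_le hB)).congr_of_eventuallyEq heq_nhds.symm
  rw [← heq l hl] at hfield
  exact (hlt (l - c) (sub_lt_self l hc) _ (h₂.pos l hl)).ne hfield

lemma exists_endpoint_le_add (hanti : ∀ z > 0, Antitone (V · z))
    (hstrict : ∃ᶠ l in atBot, ∀ l' < l, ∀ z > 0, V l z < V l' z) (hc : 0 < c)
    (hs : s₂ ≤ exp c * s₁) : ∃ c', 0 ≤ c' ∧ c' < c ∧ B₂ ≤ B₁ + c' := by
  have hB := h₁.endpoint_le_add hV h₂ hanti hc.le hs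
  obtain ⟨l, hl, hlt⟩ := h₁.exists_lt_shift h₂ hstrict hc hB
    fun l hl ↦ h₁.le_shift hV h₂ hanti hc.le hs hl
  have hlB : l - c < B₁ := sub_lt_iff_lt_add.2 (hl.trans_le hB)
  have hcont : ContinuousAt (fun c ↦ z₁ (l - c)) c :=
    (h₁.continuousAt hlB).comp_of_eq (continuous_sub_left l).continuousAt rfl
  obtain ⟨c', hlt', hmem⟩ := (((hcont.tendsto.mono_left nhdsWithin_le_nhds).eventually
    (lt_mem_nhds hlt)).and (Ioo_mem_nhdsLT (max_lt hc (sub_lt_comm.1 hlB)))).exists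
  have hc' : 0 < c' := (le_max_left _ _).trans_lt hmem.1
  have hlB' : l - B₁ < c' := (le_max_right _ _).trans_lt hmem.1
  exact ⟨c', hc'.le, hmem.2, (h₁.shift c').endpoint_le_of_lt h₂ hV
    (fun l z hz ↦ hanti z hz (sub_le_self l hc'.le)) hlt' (by linarith)⟩

end IsArc

/-- An orbit that leaves the `y`-axis at height `s` along an arc of `V` (the outgoing quarter turn)
comes back at height `-s'` along an arc of `W` (the incoming quarter turn, run backwards); the two
arcs have the same endpoint on the `x`-axis. -/
def HalfReturn (V W : ℝ → ℝ → ℝ) (s s' : ℝ) : Prop :=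
  ∃ B z w, IsArc V z B s ∧ IsArc W w B s'

namespace HalfReturn

variable {V W : ℝ → ℝ → ℝ} {s s' s₁ s₁' s₂ s₂' r : ℝ}

lemma pos_left (h : HalfReturn V W s s') : 0 < s :=
  let ⟨_, _, _, hz, _⟩ := h; hz.height_pos

lemma pos_right (h : HalfReturn V W s s') : 0 < s' :=
  let ⟨_, _, _, _, hw⟩ := h; hw.height_pos

variable (hV : ContDiffOn ℝ 1 (Function.uncurry V) (univ ×ˢ Ioi 0))
  (hW : ContDiffOn ℝ 1 (Function.uncurry W) (univ ×ˢ Ioi 0))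
  (hanti : ∀ z > 0, Antitone (V · z)) (hmono : ∀ z > 0, Monotone (W · z))
  (h₁ : HalfReturn V W s₁ s₁') (h₂ : HalfReturn V W s₂ s₂')

include hV hW hanti hmono h₁ h₂

lemma le_mul (hr : 1 ≤ r) (hs : s₂ ≤ r * s₁) : s₂' ≤ r * s₁' := by
  obtain ⟨B₁, z₁, w₁, hz₁, hw₁⟩ := h₁
  obtain ⟨B₂, z₂, w₂, hz₂, hw₂⟩ := h₂
  rw [← exp_log (one_pos.trans_le hr)] at hs ⊢
  exact hw₁.height_le_exp_mul hW hw₂ hmono (log_nonneg hr)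
    (hz₁.endpoint_le_add hV hz₂ hanti (log_nonneg hr) hs)

lemma exists_le_mul (hstrict : ∃ᶠ l in atBot, ∀ l' < l, ∀ z > 0, V l z < V l' z) (hr : 1 < r)
    (hs : s₂ ≤ r * s₁) : ∃ r', 1 ≤ r' ∧ r' < r ∧ s₂' ≤ r' * s₁' := by
  obtain ⟨B₁, z₁, w₁, hz₁, hw₁⟩ := h₁
  obtain ⟨B₂, z₂, w₂, hz₂, hw₂⟩ := h₂
  rw [← exp_log (one_pos.trans hr)] at hs ⊢
  obtain ⟨c, hc, hcr, hB⟩ := hz₁.exists_endpoint_le_add hV hz₂ hanti hstrict (log_pos hr) hs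
  exact ⟨exp c, one_le_exp hc, exp_lt_exp.2 hcr, hw₁.height_le_exp_mul hW hw₂ hmono hc hB⟩

end HalfReturn

/-! ### Strictly sublinear monotone maps of the half-line -/

section Sublinear

variable {P : ℝ → ℝ} {S s : ℝ}

lemma lt_map_of_lt_isFixedPt (hanti : StrictAntiOn (fun s ↦ P s / s) (Ioi 0))
    (hfix : Function.IsFixedPt P S) (hs : 0 < s) (hsS : s < S) : s < P s := by
  have hS : 0 < S := hs.trans hsS
  have h : P S / S < P s / s := hanti hs hS hsS
  rwa [hfix, div_self hS.ne', one_lt_div hs] at h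

lemma map_lt_of_isFixedPt_lt (hanti : StrictAntiOn (fun s ↦ P s / s) (Ioi 0))
    (hfix : Function.IsFixedPt P S) (hS : 0 < S) (hSs : S < s) : P s < s := by
  have hs : 0 < s := hS.trans hSs
  have h : P s / s < P S / S := hanti hS hs hSs
  rwa [hfix, div_self hS.ne', div_lt_one hs] at h

lemma eq_of_isFixedPt_of_isFixedPt (hanti : StrictAntiOn (fun s ↦ P s / s) (Ioi 0))
    (hfix : Function.IsFixedPt P S) (hS : 0 < S) (hfix' : Function.IsFixedPt P s) (hs : 0 < s) :
    s = S :=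
  hanti.injOn hs hS <| by simp only [hfix.eq, hfix'.eq, div_self hS.ne', div_self hs.ne']

variable (hpos : MapsTo P (Ioi 0) (Ioi 0)) (hmono : MonotoneOn P (Ioi 0))
  (hanti : StrictAntiOn (fun s ↦ P s / s) (Ioi 0))

include hpos hmono hanti

lemma continuousAt_of_monotoneOn_of_strictAntiOn_div (hs : 0 < s) : ContinuousAt P s := by
  have : 0 < P s := hpos hs
  have lower : Tendsto (fun t ↦ min 1 (t / s) * P s) (𝓝 s) (𝓝 (P s)) :=
    Continuous.tendsto' (by fun_prop) _ _ (by simp [hs.ne'])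
  have upper : Tendsto (fun t ↦ max 1 (t / s) * P s) (𝓝 s) (𝓝 (P s)) :=
    Continuous.tendsto' (by fun_prop) _ _ (by simp [hs.ne'])
  refine tendsto_of_tendsto_of_tendsto_of_le_of_le' lower upper ?_ ?_ <;>
    filter_upwards [Ioi_mem_nhds hs] with t ht <;> rcases le_total t s with hts | hts
  · have h : P s / s ≤ P t / t := hanti.antitoneOn ht hs hts
    rw [min_eq_right ((div_le_one hs).2 hts)]
    rw [div_le_div_iff₀ hs ht] at h
    rw [div_mul_eq_mul_div, div_le_iff₀ hs]
    linarith
  · rw [min_eq_left ((one_le_div hs).2 hts), one_mul]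
    exact hmono hs ht hts
  · rw [max_eq_left ((div_le_one hs).2 hts), one_mul]
    exact hmono ht hs hts
  · have h : P t / t ≤ P s / s := hanti.antitoneOn hs ht hts
    rw [max_eq_right ((one_le_div hs).2 hts)]
    rw [div_le_div_iff₀ ht hs] at h
    rw [div_mul_eq_mul_div, le_div_iff₀ hs]
    linarith

lemma exists_isFixedPt_pos {e₁ e₂ : ℝ} (he₁ : 0 < e₁) (he₂ : 0 < e₂) (h₁ : e₁ ≤ P e₁)
    (h₂ : P e₂ ≤ e₂) : ∃ S, 0 < S ∧ Function.IsFixedPt P S := by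
  have hsub : uIcc e₁ e₂ ⊆ Ioi 0 := fun s hs ↦ (lt_min he₁ he₂).trans_le hs.1
  have hcont : ContinuousOn (fun s ↦ P s / s) (uIcc e₁ e₂) := fun s hs ↦
    ((continuousAt_of_monotoneOn_of_strictAntiOn_div hpos hmono hanti (hsub hs)).div continuousAt_id
      (hsub hs).ne').continuousWithinAt
  have hmem : (1 : ℝ) ∈ uIcc (P e₁ / e₁) (P e₂ / e₂) :=
    Icc_subset_uIcc' ⟨(div_le_one he₂).2 h₂, (one_le_div he₁).2 h₁⟩
  obtain ⟨S, hS, hPS⟩ := intermediate_value_uIcc hcont hmem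
  exact ⟨S, hsub hS, eq_of_div_eq_one hPS⟩

lemma tendsto_iterate_of_isFixedPt (hfix : Function.IsFixedPt P S) (hS : 0 < S) (hs : 0 < s) :
    Tendsto (fun n ↦ P^[n] s) atTop (𝓝 S) := by
  have iterate_pos (n : ℕ) : 0 < P^[n] s := hpos.iterate n hs
  suffices ∃ L > 0, Tendsto (fun n ↦ P^[n] s) atTop (𝓝 L) by
    obtain ⟨L, hL, hlim⟩ := this
    have hfixL := isFixedPt_of_tendsto_iterate hlim
      (continuousAt_of_monotoneOn_of_strictAntiOn_div hpos hmono hanti hL)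
    rwa [← eq_of_isFixedPt_of_isFixedPt hanti hfix hS hfixL hL]
  rcases le_total s S with hsS | hSs
  · have iterate_le (n : ℕ) : P^[n] s ≤ S := by
      induction n with
      | zero => exact hsS
      | succ n ih =>
        rw [Function.iterate_succ_apply', ← hfix.eq]
        exact hmono (iterate_pos n) hS ih
    have hincr : Monotone fun n ↦ P^[n] s := monotone_nat_of_le_succ fun n ↦ by
      rw [Function.iterate_succ_apply']
      rcases (iterate_le n).lt_or_eq with hlt | heq
      · exact (lt_map_of_lt_isFixedPt hanti hfix (iterate_pos n) hlt).le
      · rw [heq, hfix.eq]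
    have hlim := tendsto_atTop_ciSup hincr ⟨S, forall_mem_range.2 iterate_le⟩
    exact ⟨_, hs.trans_le (hincr.ge_of_tendsto hlim 0), hlim⟩
  · have le_iterate (n : ℕ) : S ≤ P^[n] s := by
      induction n with
      | zero => exact hSs
      | succ n ih =>
        rw [Function.iterate_succ_apply', ← hfix.eq]
        exact hmono hS (iterate_pos n) ih
    have hdecr : Antitone fun n ↦ P^[n] s := antitone_nat_of_succ_le fun n ↦ by
      rw [Function.iterate_succ_apply']
      rcases (le_iterate n).lt_or_eq with hlt | heq
      · exact (map_lt_of_isFixedPt_lt hanti hfix hS hlt).le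
      · rw [← heq, hfix.eq]
    have hlim := tendsto_atTop_ciInf hdecr ⟨S, forall_mem_range.2 le_iterate⟩
    exact ⟨_, hS.trans_le (ge_of_tendsto' hlim le_iterate), hlim⟩

end Sublinear

/-! ### The restoring force and its logarithmic radius -/

lemma hasDerivAt_invFunOn_of_strictMonoOn {f : ℝ → ℝ} {I J : Set ℝ} (hI : IsOpen I)
    (hJ : IsOpen J) (hmono : StrictMonoOn f J) (hsurj : SurjOn f J I) {l f' : ℝ} (hl : l ∈ I)
    (hf : HasDerivAt f f' (Function.invFunOn f J l)) (hf' : f' ≠ 0) :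
    HasDerivAt (Function.invFunOn f J) f'⁻¹ l := by
  have hmaps := hsurj.mapsTo_invFunOn
  have hright := hsurj.rightInvOn_invFunOn
  have hinv : StrictMonoOn (Function.invFunOn f J) I := fun l hl m hm hlm ↦ by
    rwa [← hmono.lt_iff_lt (hmaps hl) (hmaps hm), hright hl, hright hm]
  have himage : Function.invFunOn f J '' I ∈ 𝓝 (Function.invFunOn f J l) := by
    have hpre := hf.continuousAt.preimage_mem_nhds (hright hl ▸ hI.mem_nhds hl)
    filter_upwards [hJ.mem_nhds (hmaps hl), hpre] with t htJ htI
    exact ⟨f t, htI, hmono.injOn.leftInvOn_invFunOn htJ⟩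
  refine HasDerivAt.of_local_left_inverse
    (hinv.continuousAt_of_image_mem_nhds (hI.mem_nhds hl) himage) hf hf' ?_
  filter_upwards [hI.mem_nhds hl] with m hm using hright hm

/-- The point reflection `x ↦ -x` applied to a force; it exchanges the two half-planes. -/
def reflect (g : ℝ → ℝ) (x : ℝ) : ℝ := -g (-x)

lemma Gfun_reflect (g : ℝ → ℝ) (x : ℝ) : Gfun (reflect g) x = Gfun g (-x) := by
  simp only [Gfun, reflect, intervalIntegral.integral_neg, intervalIntegral.integral_comp_neg g,
    neg_zero]
  exact (intervalIntegral.integral_symm (-x) 0).symm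

/-- `logRadius g x = log √(2 G(x))`, the logarithm of the amplitude at which the undamped
oscillator `x'' = -g(x)` crosses the `y`-axis when it turns around at `x`. -/
def logRadius (g : ℝ → ℝ) (x : ℝ) : ℝ := log (2 * Gfun g x) / 2

/-- The inverse of `logRadius g` on the positive half-line. -/
def invLogRadius (g : ℝ → ℝ) : ℝ → ℝ := Function.invFunOn (logRadius g) (Ioi 0)

lemma Gfun_zero (g : ℝ → ℝ) : Gfun g 0 = 0 := intervalIntegral.integral_same

/-- A `C¹` force that always points towards the origin and has infinite potential at `±∞`. -/
structure IsRestoringForce (g : ℝ → ℝ) : Prop where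
  contDiff : ContDiff ℝ 1 g
  mul_pos : ∀ x, x ≠ 0 → 0 < x * g x
  tendsto_atTop : Tendsto (Gfun g) atTop atTop
  tendsto_atBot : Tendsto (Gfun g) atBot atTop

namespace IsRestoringForce

variable {g : ℝ → ℝ} (hg : IsRestoringForce g) {x : ℝ} (l : ℝ)

include hg

lemma reflect : IsRestoringForce (reflect g) where
  contDiff := (hg.contDiff.comp contDiff_neg).neg
  mul_pos x hx := by simpa [_root_.reflect] using hg.mul_pos (-x) (neg_ne_zero.2 hx)
  tendsto_atTop := (hg.tendsto_atBot.comp tendsto_neg_atTop_atBot).congr fun x ↦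
    (Gfun_reflect g x).symm
  tendsto_atBot := (hg.tendsto_atTop.comp tendsto_neg_atBot_atTop).congr fun x ↦
    (Gfun_reflect g x).symm

lemma pos (hx : 0 < x) : 0 < g x :=
  pos_of_mul_pos_right (hg.mul_pos x hx.ne') hx.le

lemma neg (hx : x < 0) : g x < 0 :=
  neg_of_mul_pos_right (hg.mul_pos x hx.ne) hx.le

lemma hasDerivAt_Gfun (x : ℝ) : HasDerivAt (Gfun g) (g x) x :=
  (hg.contDiff.continuous.integral_hasStrictDerivAt 0 x).hasDerivAt

lemma continuous_Gfun : Continuous (Gfun g) :=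
  continuous_iff_continuousAt.2 fun x ↦ (hg.hasDerivAt_Gfun x).continuousAt

lemma strictMonoOn_Gfun : StrictMonoOn (Gfun g) (Ici 0) := by
  refine strictMonoOn_of_deriv_pos (convex_Ici 0) hg.continuous_Gfun.continuousOn fun x hx ↦ ?_
  rw [interior_Ici] at hx
  rw [(hg.hasDerivAt_Gfun x).deriv]
  exact hg.pos hx

lemma Gfun_pos (hx : x ≠ 0) : 0 < Gfun g x := by
  rcases hx.lt_or_gt with hx | hx
  · have := hg.reflect.strictMonoOn_Gfun self_mem_Ici (neg_pos.2 hx).le (neg_pos.2 hx)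
    rwa [Gfun_zero, Gfun_reflect, neg_neg] at this
  · simpa [Gfun_zero] using hg.strictMonoOn_Gfun self_mem_Ici hx.le hx

lemma Gfun_nonneg (x : ℝ) : 0 ≤ Gfun g x := by
  rcases eq_or_ne x 0 with rfl | hx
  · exact (Gfun_zero g).ge
  · exact (hg.Gfun_pos hx).le

lemma exp_logRadius_sq (hx : x ≠ 0) : exp (logRadius g x) ^ 2 = 2 * Gfun g x := by
  rw [← exp_nat_mul, logRadius, Nat.cast_ofNat, mul_div_cancel₀ _ two_ne_zero,
    exp_log (by linarith [hg.Gfun_pos hx])]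

lemma hasDerivAt_logRadius (hx : x ≠ 0) :
    HasDerivAt (logRadius g) (g x / (2 * Gfun g x)) x := by
  have hG := hg.Gfun_pos hx
  refine ((((hg.hasDerivAt_Gfun x).const_mul 2).log (by positivity)).div_const 2).congr_deriv ?_
  field_simp

lemma strictMonoOn_logRadius : StrictMonoOn (logRadius g) (Ioi 0) := by
  intro x (hx : 0 < x) y (hy : 0 < y) hxy
  have hG := hg.strictMonoOn_Gfun hx.le hy.le hxy
  have := log_lt_log (by linarith [hg.Gfun_pos hx.ne']) ((mul_lt_mul_iff_right₀ two_pos).2 hG)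
  exact div_lt_div_of_pos_right this two_pos

lemma tendsto_logRadius_zero : Tendsto (logRadius g) (𝓝[≠] 0) atBot := by
  have hG : Tendsto (fun x ↦ 2 * Gfun g x) (𝓝[≠] 0) (𝓝[>] 0) := by
    refine tendsto_nhdsWithin_iff.2 ⟨?_, ?_⟩
    · exact ((continuous_const.mul hg.continuous_Gfun).tendsto' 0 0
        (by simp [Gfun_zero])).mono_left nhdsWithin_le_nhds
    · filter_upwards [self_mem_nhdsWithin] with x hx
      exact _root_.mul_pos two_pos (hg.Gfun_pos hx)
  exact (tendsto_log_nhdsGT_zero.comp hG).atBot_div_const two_pos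

lemma tendsto_logRadius_atTop : Tendsto (logRadius g) atTop atTop :=
  (tendsto_log_atTop.comp (hg.tendsto_atTop.const_mul_atTop two_pos)).atTop_div_const two_pos

lemma surjOn_logRadius : SurjOn (logRadius g) (Ioi 0) univ := by
  have hcont : ContinuousOn (logRadius g) (Ioi 0) := fun x hx ↦
    (hg.hasDerivAt_logRadius (ne_of_gt hx)).continuousAt.continuousWithinAt
  exact isPreconnected_Ioi.intermediate_value_Iii (l₁ := 𝓝[>] (0 : ℝ)) inf_le_right
    (le_principal_iff.2 (Ioi_mem_atTop 0)) hcont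
    (hg.tendsto_logRadius_zero.mono_left (nhdsWithin_mono 0 fun x (hx : 0 < x) ↦ hx.ne'))
    hg.tendsto_logRadius_atTop

lemma invLogRadius_pos : 0 < invLogRadius g l :=
  hg.surjOn_logRadius.mapsTo_invFunOn (mem_univ l)

lemma logRadius_invLogRadius : logRadius g (invLogRadius g l) = l :=
  hg.surjOn_logRadius.rightInvOn_invFunOn (mem_univ l)

lemma invLogRadius_logRadius (hx : 0 < x) : invLogRadius g (logRadius g x) = x :=
  hg.strictMonoOn_logRadius.injOn.leftInvOn_invFunOn hx

lemma two_mul_Gfun_invLogRadius : 2 * Gfun g (invLogRadius g l) = exp l ^ 2 := by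
  rw [← hg.exp_logRadius_sq (hg.invLogRadius_pos l).ne', hg.logRadius_invLogRadius]

lemma force_invLogRadius_pos : 0 < g (invLogRadius g l) :=
  hg.pos (hg.invLogRadius_pos l)

lemma hasDerivAt_invLogRadius :
    HasDerivAt (invLogRadius g) (exp l ^ 2 / g (invLogRadius g l)) l := by
  have hderiv := hg.hasDerivAt_logRadius (hg.invLogRadius_pos l).ne'
  rw [hg.two_mul_Gfun_invLogRadius] at hderiv
  rw [← inv_div]
  exact hasDerivAt_invFunOn_of_strictMonoOn isOpen_univ isOpen_Ioi hg.strictMonoOn_logRadius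
    hg.surjOn_logRadius (mem_univ l) hderiv
    (div_pos (hg.force_invLogRadius_pos l) (by positivity)).ne'

lemma contDiff_invLogRadius : ContDiff ℝ 1 (invLogRadius g) := by
  rw [contDiff_one_iff_deriv, funext fun l ↦ (hg.hasDerivAt_invLogRadius l).deriv]
  have hcont : Continuous (invLogRadius g) :=
    continuous_iff_continuousAt.2 fun l ↦ (hg.hasDerivAt_invLogRadius l).continuousAt
  exact ⟨fun l ↦ (hg.hasDerivAt_invLogRadius l).differentiableAt,
    (continuous_exp.pow 2).div (hg.contDiff.continuous.comp hcont)
      fun l ↦ (hg.force_invLogRadius_pos l).ne'⟩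

end IsRestoringForce

/-! ### Quarter turns of Liénard systems -/

/-- The vector field of `x' = y`, `y' = -g(x) - y * φ(x, y)`. -/
def lienardField (g : ℝ → ℝ) (φ : ℝ × ℝ → ℝ) (p : ℝ × ℝ) : ℝ × ℝ := (p.2, -g p.1 - p.2 * φ p)

/-- The damping in the coordinates `l = log √(2 G(x))`, `z = y / √(2 G(x))` on the half-plane
`0 < x`, in units of the restoring force. -/
def scaledDamping (g : ℝ → ℝ) (φ : ℝ × ℝ → ℝ) (l z : ℝ) : ℝ :=
  exp l * φ (invLogRadius g l, exp l * z) / g (invLogRadius g l)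

/-- The right-hand side of the equation for `z` as a function of `l` along an orbit of
`lienardField g φ` in the quadrant `0 < x`, `0 < y`, in the coordinates of `scaledDamping`. -/
def quarterField (g : ℝ → ℝ) (φ : ℝ × ℝ → ℝ) (l z : ℝ) : ℝ := -z⁻¹ - z - scaledDamping g φ l z

lemma IsRestoringForce.contDiffOn_quarterField {g : ℝ → ℝ} {φ : ℝ × ℝ → ℝ}
    (hg : IsRestoringForce g) (hφ : ContDiff ℝ 1 φ) :
    ContDiffOn ℝ 1 (Function.uncurry (quarterField g φ)) (univ ×ˢ Ioi 0) := by
  have hX : ContDiff ℝ 1 fun p : ℝ × ℝ ↦ invLogRadius g p.1 :=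
    hg.contDiff_invLogRadius.comp contDiff_fst
  have hexp : ContDiff ℝ 1 fun p : ℝ × ℝ ↦ exp p.1 := contDiff_fst.exp
  have hdamping : ContDiff ℝ 1 (Function.uncurry (scaledDamping g φ)) :=
    (hexp.mul (hφ.comp (hX.prodMk (hexp.mul contDiff_snd)))).div (hg.contDiff.comp hX)
      fun p ↦ (hg.force_invLogRadius_pos p.1).ne'
  exact ((contDiffOn_snd.inv fun p hp ↦ hp.2.ne').neg.sub contDiffOn_snd).sub
    hdamping.contDiffOn

lemma tendsto_invFunOn_atBot {f : ℝ → ℝ} {a b B : ℝ} (hab : a < b)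
    (hmono : StrictMonoOn f (Ioo a b)) (hsurj : SurjOn f (Ioo a b) (Iio B)) :
    Tendsto (Function.invFunOn f (Ioo a b)) atBot (𝓝 a) := by
  refine tendsto_order.2 ⟨fun c hc ↦ ?_, fun c hc ↦ ?_⟩
  · filter_upwards [eventually_lt_atBot B] with l hl using hc.trans (hsurj.mapsTo_invFunOn hl).1
  · obtain ⟨t, hat, ht⟩ := exists_between (lt_min hc hab)
    have htI : t ∈ Ioo a b := ⟨hat, ht.trans_le (min_le_right c b)⟩
    filter_upwards [eventually_lt_atBot B, eventually_lt_atBot (f t)] with l hlB hlt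
    refine lt_of_lt_of_le ?_ (ht.le.trans (min_le_left c b))
    rwa [← hmono.lt_iff_lt (hsurj.mapsTo_invFunOn hlB) htI, hsurj.rightInvOn_invFunOn hlB]

lemma tendsto_invFunOn_nhdsLT {f : ℝ → ℝ} {a b B : ℝ} (hab : a < b)
    (hmono : StrictMonoOn f (Ioo a b)) (hmaps : MapsTo f (Ioo a b) (Iio B))
    (hsurj : SurjOn f (Ioo a b) (Iio B)) :
    Tendsto (Function.invFunOn f (Ioo a b)) (𝓝[<] B) (𝓝 b) := by
  refine tendsto_order.2 ⟨fun c hc ↦ ?_, fun c hc ↦ ?_⟩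
  · obtain ⟨t, ht, htb⟩ := exists_between (max_lt hc hab)
    have htI : t ∈ Ioo a b := ⟨(le_max_right c a).trans_lt ht, htb⟩
    filter_upwards [Ioo_mem_nhdsLT (hmaps htI)] with l hl
    refine (le_max_left c a).trans_lt (ht.trans ?_)
    rw [← hmono.lt_iff_lt htI (hsurj.mapsTo_invFunOn hl.2), hsurj.rightInvOn_invFunOn hl.2]
    exact hl.1
  · filter_upwards [self_mem_nhdsWithin] with l hl using (hsurj.mapsTo_invFunOn hl).2.trans hc

namespace IsSolOn

variable {g : ℝ → ℝ} {φ : ℝ × ℝ → ℝ} {γ : ℝ → ℝ × ℝ} {s : Set ℝ} {t : ℝ}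
  (h : IsSolOn (lienardField g φ) γ s)

include h

lemma hasDerivAt_fst (ht : t ∈ s) : HasDerivAt (fun t ↦ (γ t).1) (γ t).2 t :=
  (h t ht).fst

lemma hasDerivAt_snd (ht : t ∈ s) :
    HasDerivAt (fun t ↦ (γ t).2) (-g (γ t).1 - (γ t).2 * φ (γ t)) t :=
  (h t ht).snd

end IsSolOn

/-- On `[a, b]` the curve `γ` is an orbit of `lienardField g φ` in the upper half-plane that starts
on the positive `y`-axis and ends on the `x`-axis. -/
structure IsQuarterTurn (g : ℝ → ℝ) (φ : ℝ × ℝ → ℝ) (γ : ℝ → ℝ × ℝ) (a b : ℝ) : Prop where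
  lt : a < b
  isSolOn : IsSolOn (lienardField g φ) γ (Icc a b)
  fst_left : (γ a).1 = 0
  snd_pos : ∀ t ∈ Ico a b, 0 < (γ t).2
  snd_right : (γ b).2 = 0

namespace IsQuarterTurn

variable {g : ℝ → ℝ} {φ : ℝ × ℝ → ℝ} {γ : ℝ → ℝ × ℝ} {a b t : ℝ}

section

variable (h : IsQuarterTurn g φ γ a b)

include h

lemma strictMonoOn_fst : StrictMonoOn (fun t ↦ (γ t).1) (Icc a b) := by
  refine strictMonoOn_of_deriv_pos (convex_Icc a b)
    (fun t ht ↦ (h.isSolOn.hasDerivAt_fst ht).continuousAt.continuousWithinAt) fun t ht ↦ ?_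
  rw [interior_Icc] at ht
  rw [(h.isSolOn.hasDerivAt_fst (Ioo_subset_Icc_self ht)).deriv]
  exact h.snd_pos t (Ioo_subset_Ico_self ht)

lemma fst_pos (ht : t ∈ Ioc a b) : 0 < (γ t).1 :=
  h.fst_left ▸ h.strictMonoOn_fst (left_mem_Icc.2 h.lt.le) (Ioc_subset_Icc_self ht) ht.1

end

variable (hg : IsRestoringForce g) (h : IsQuarterTurn g φ γ a b)

include hg h

lemma hasDerivAt_logRadius (ht : t ∈ Ioc a b) :
    HasDerivAt (fun t ↦ logRadius g (γ t).1) (g (γ t).1 / (2 * Gfun g (γ t).1) * (γ t).2) t :=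
  HasDerivAt.comp (h₂ := logRadius g) t (hg.hasDerivAt_logRadius (h.fst_pos ht).ne')
    (h.isSolOn.hasDerivAt_fst (Ioc_subset_Icc_self ht))

lemma strictMonoOn_logRadius : StrictMonoOn (fun t ↦ logRadius g (γ t).1) (Ioc a b) :=
  fun _ hs _ ht hst ↦ hg.strictMonoOn_logRadius (h.fst_pos hs) (h.fst_pos ht)
    (h.strictMonoOn_fst (Ioc_subset_Icc_self hs) (Ioc_subset_Icc_self ht) hst)

lemma mapsTo_logRadius :
    MapsTo (fun t ↦ logRadius g (γ t).1) (Ioo a b) (Iio (logRadius g (γ b).1)) :=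
  fun _ ht ↦ h.strictMonoOn_logRadius hg (Ioo_subset_Ioc_self ht) (right_mem_Ioc.2 h.lt) ht.2

lemma surjOn_logRadius :
    SurjOn (fun t ↦ logRadius g (γ t).1) (Ioo a b) (Iio (logRadius g (γ b).1)) := by
  have hleft : Tendsto (fun t ↦ (γ t).1) (𝓝[>] a) (𝓝[≠] 0) := by
    refine tendsto_nhdsWithin_iff.2 ⟨?_, ?_⟩
    · have hcont := (h.isSolOn.hasDerivAt_fst (left_mem_Icc.2 h.lt.le)).continuousAt.tendsto
      rw [h.fst_left] at hcont
      exact hcont.mono_left nhdsWithin_le_nhds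
    · filter_upwards [Ioc_mem_nhdsGT h.lt] with t ht using (h.fst_pos ht).ne'
  have hcont (t : ℝ) (ht : t ∈ Ioc a b) : ContinuousAt (fun t ↦ logRadius g (γ t).1) t :=
    (h.hasDerivAt_logRadius hg ht).continuousAt
  exact isPreconnected_Ioo.intermediate_value_Iio (l₁ := 𝓝[>] a) (l₂ := 𝓝[<] b)
    (le_principal_iff.2 (Ioo_mem_nhdsGT h.lt)) (le_principal_iff.2 (Ioo_mem_nhdsLT h.lt))
    (fun t ht ↦ (hcont t (Ioo_subset_Ioc_self ht)).continuousWithinAt)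
    (hg.tendsto_logRadius_zero.comp hleft)
    ((hcont b (right_mem_Ioc.2 h.lt)).tendsto.mono_left nhdsWithin_le_nhds)

lemma hasDerivAt_quarter {l : ℝ} (hl : l < logRadius g (γ b).1) :
    HasDerivAt
      (fun l ↦ (γ (Function.invFunOn (fun t ↦ logRadius g (γ t).1) (Ioo a b) l)).2 / exp l)
      (quarterField g φ l
        ((γ (Function.invFunOn (fun t ↦ logRadius g (γ t).1) (Ioo a b) l)).2 / exp l)) l := by
  set logR := fun t ↦ logRadius g (γ t).1
  set time := Function.invFunOn logR (Ioo a b)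
  have hsurj := h.surjOn_logRadius hg
  have ht : time l ∈ Ioo a b := hsurj.mapsTo_invFunOn hl
  have hx : 0 < (γ (time l)).1 := h.fst_pos (Ioo_subset_Ioc_self ht)
  have hl_eq : logRadius g (γ (time l)).1 = l := hsurj.rightInvOn_invFunOn hl
  have hX : invLogRadius g l = (γ (time l)).1 :=
    (congrArg (invLogRadius g) hl_eq).symm.trans (hg.invLogRadius_logRadius hx)
  have hG : 2 * Gfun g (γ (time l)).1 = exp l ^ 2 := by rw [← hg.exp_logRadius_sq hx.ne', hl_eq]
  have hgx := hg.pos hx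
  have hy := h.snd_pos _ (Ioo_subset_Ico_self ht)
  have hderiv := h.hasDerivAt_logRadius hg (Ioo_subset_Ioc_self ht)
  rw [hG] at hderiv
  have htime := hasDerivAt_invFunOn_of_strictMonoOn isOpen_Iio isOpen_Ioo
    ((h.strictMonoOn_logRadius hg).mono Ioo_subset_Ioc_self) hsurj hl hderiv (by positivity)
  refine (((h.isSolOn.hasDerivAt_snd (Ioo_subset_Icc_self ht)).comp l htime).div (hasDerivAt_exp l)
    (exp_ne_zero l)).congr_deriv ?_
  simp only [quarterField, scaledDamping, hX, mul_div_cancel₀ _ (exp_ne_zero l), Prod.mk.eta,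
    Function.comp_apply]
  field_simp
  ring

lemma exists_isArc :
    ∃ z, IsArc (quarterField g φ) z (logRadius g (γ b).1) (γ a).2 := by
  set logR := fun t ↦ logRadius g (γ t).1
  have hmono : StrictMonoOn logR (Ioo a b) :=
    (h.strictMonoOn_logRadius hg).mono Ioo_subset_Ioc_self
  have hsurj := h.surjOn_logRadius hg
  have hcont (t : ℝ) (ht : t ∈ Icc a b) : ContinuousAt (fun t ↦ (γ t).2) t :=
    (h.isSolOn.hasDerivAt_snd ht).continuousAt
  set time := Function.invFunOn logR (Ioo a b)
  refine ⟨fun l ↦ (γ (time l)).2 / exp l, fun l hl ↦ ?_, fun l hl ↦ ?_, ?_, ?_,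
    h.snd_pos a (left_mem_Ico.2 h.lt)⟩
  · exact div_pos (h.snd_pos _ (Ioo_subset_Ico_self (hsurj.mapsTo_invFunOn hl))) (exp_pos l)
  · exact h.hasDerivAt_quarter hg hl
  · have hy := (hcont b (right_mem_Icc.2 h.lt.le)).tendsto.comp
      (tendsto_invFunOn_nhdsLT h.lt hmono (h.mapsTo_logRadius hg) hsurj)
    have := hy.div (continuous_exp.continuousWithinAt (s := Iio (logR b))) (exp_ne_zero _)
    rwa [h.snd_right, zero_div] at this
  · refine ((hcont a (left_mem_Icc.2 h.lt.le)).tendsto.comp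
      (tendsto_invFunOn_atBot h.lt hmono hsurj)).congr fun l ↦ ?_
    exact (mul_div_cancel₀ _ (exp_ne_zero l)).symm

end IsQuarterTurn

/-! ### Autonomous differential equations -/

section AutonomousODE

open scoped Manifold ContDiff

variable {E : Type*} [NormedAddCommGroup E] [NormedSpace ℝ E] {F : E → E} {γ γ' : ℝ → E}

lemma isMIntegralCurve_iff_forall_hasDerivAt :
    IsMIntegralCurve (I := 𝓘(ℝ, E)) (M := E) γ F ↔ ∀ t, HasDerivAt γ (F (γ t)) t :=
  ⟨fun h t ↦ hasDerivAt_iff_hasFDerivAt.2 (hasMFDerivAt_iff_hasFDerivAt.1 (h t)),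
    fun h t ↦ hasMFDerivAt_iff_hasFDerivAt.2 (h t).hasFDerivAt⟩

lemma exists_forall_hasDerivAt_of_hasCompactSupport [CompleteSpace E] (hF : ContDiff ℝ 1 F)
    (hsupp : HasCompactSupport F) (p : E) :
    ∃ γ : ℝ → E, γ 0 = p ∧ ∀ t, HasDerivAt γ (F (γ t)) t := by
  suffices h : ∃ γ : ℝ → E, γ 0 = p ∧ IsMIntegralCurve (I := 𝓘(ℝ, E)) (M := E) γ F by
    simpa only [isMIntegralCurve_iff_forall_hasDerivAt] using h
  refine (exists_isMIntegralCurve_iff_exists_isMIntegralCurveOn_Ioo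
    (contMDiff_vectorSpace_iff_contDiff.2 hF) p).2 fun a ↦ ?_
  obtain ⟨K, hK⟩ := hF.lipschitzWith_of_hasCompactSupport hsupp one_ne_zero
  obtain ⟨L, hL⟩ := hsupp.exists_bound_of_continuous hF.continuous
  have hpl : IsPicardLindelof (fun _ ↦ F) (tmin := -|a|) (tmax := |a|) ⟨0, by simp⟩ p
      (L.toNNReal * |a|.toNNReal) 0 L.toNNReal K :=
    .of_time_independent (fun x _ ↦ (hL x).trans (le_coe_toNNReal L)) hK.lipschitzOnWith (by simp)
  obtain ⟨γ, hγ₀, hγ⟩ := hpl.exists_eq_forall_mem_Icc_hasDerivWithinAt₀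
  refine ⟨γ, hγ₀, fun t ht ↦ HasMFDerivAt.hasMFDerivWithinAt ?_⟩
  have ht' : t ∈ Ioo (-|a|) |a| := abs_lt.1 ((abs_lt.2 ht).trans_le (le_abs_self a))
  exact hasMFDerivAt_iff_hasFDerivAt.2
    ((hγ t (Ioo_subset_Icc_self ht')).hasDerivAt (Icc_mem_nhds ht'.1 ht'.2)).hasFDerivAt

variable (hF : ContDiff ℝ 1 F)

include hF

lemma eq_of_forall_hasDerivAt (hγ : ∀ t, HasDerivAt γ (F (γ t)) t)
    (hγ' : ∀ t, HasDerivAt γ' (F (γ' t)) t) {t₀ : ℝ} (heq : γ t₀ = γ' t₀) : γ = γ' :=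
  isMIntegralCurve_Ioo_eq_of_contMDiff_boundaryless (contMDiff_vectorSpace_iff_contDiff.2 hF)
    (isMIntegralCurve_iff_forall_hasDerivAt.2 hγ) (isMIntegralCurve_iff_forall_hasDerivAt.2 hγ')
    heq

lemma exists_forall_dist_le_mul_exp {s : Set E} (hs : IsCompact s) :
    ∃ K : ℝ, ∀ (γ γ' : ℝ → E) (a b : ℝ),
      (∀ t ∈ Icc a b, HasDerivAt γ (F (γ t)) t ∧ γ t ∈ s) →
      (∀ t ∈ Icc a b, HasDerivAt γ' (F (γ' t)) t ∧ γ' t ∈ s) →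
      ∀ t ∈ Icc a b, dist (γ t) (γ' t) ≤ dist (γ a) (γ' a) * exp (K * (t - a)) := by
  obtain ⟨K, hK⟩ := hF.locallyLipschitz.locallyLipschitzOn.exists_lipschitzOnWith_of_compact hs
  refine ⟨K, fun γ γ' a b hγ hγ' ↦ ?_⟩
  exact dist_le_of_trajectories_ODE_of_mem (v := fun _ ↦ F) (s := fun _ ↦ s)
    (fun _ _ ↦ hK) (fun t ht ↦ (hγ t ht).1.continuousAt.continuousWithinAt)
    (fun t ht ↦ (hγ t (Ico_subset_Icc_self ht)).1.hasDerivWithinAt)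
    (fun t ht ↦ (hγ t (Ico_subset_Icc_self ht)).2)
    (fun t ht ↦ (hγ' t ht).1.continuousAt.continuousWithinAt)
    (fun t ht ↦ (hγ' t (Ico_subset_Icc_self ht)).1.hasDerivWithinAt)
    (fun t ht ↦ (hγ' t (Ico_subset_Icc_self ht)).2) le_rfl

lemma eq_of_apply_eq_zero_of_le {p : E} (hp : F p = 0) {a t : ℝ}
    (hγ : ∀ t ≥ a, HasDerivAt γ (F (γ t)) t) (ha : γ a = p) (ht : a ≤ t) : γ t = p := by
  have hcont : ContinuousOn γ (Icc a t) :=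
    fun s hs ↦ (hγ s hs.1).continuousAt.continuousWithinAt
  obtain ⟨K, hK⟩ := exists_forall_dist_le_mul_exp hF (isCompact_Icc.image_of_continuousOn hcont)
  have hpmem : p ∈ γ '' Icc a t := ⟨a, left_mem_Icc.2 ht, ha⟩
  have := hK γ (fun _ ↦ p) a t (fun s hs ↦ ⟨hγ s hs.1, mem_image_of_mem γ hs⟩)
    (fun s _ ↦ ⟨hp ▸ hasDerivAt_const s p, hpmem⟩) t (right_mem_Icc.2 ht)
  rwa [ha, dist_self, zero_mul, dist_le_zero] at this

lemma tendstoUniformlyOn_translate {s : Set E} (hs : IsCompact s) {μ : ℝ → E} {a : ℕ → ℝ} {t₀ : ℝ}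
    (hγ : ∀ t ≥ t₀, HasDerivAt γ (F (γ t)) t ∧ γ t ∈ s)
    (hμ : ∀ t ≥ 0, HasDerivAt μ (F (μ t)) t ∧ μ t ∈ s)
    (ha : ∀ n, t₀ ≤ a n) (hlim : Tendsto (fun n ↦ γ (a n)) atTop (𝓝 (μ 0))) (L : ℝ) :
    TendstoUniformlyOn (fun n u ↦ γ (a n + u)) μ atTop (Icc 0 L) := by
  obtain ⟨K, hK⟩ := exists_forall_dist_le_mul_exp hF hs
  have hbound (n : ℕ) (u : ℝ) (hu : u ∈ Icc 0 L) :
      dist (μ u) (γ (a n + u)) ≤ dist (μ 0) (γ (a n)) * exp (|K| * L) := by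
    have := hK μ (fun u ↦ γ (a n + u)) 0 L (fun u hu ↦ hμ u hu.1) (fun u hu ↦ ?_) u hu
    · rw [add_zero, sub_zero] at this
      refine this.trans (by gcongr; exacts [hu.1, le_abs_self K, hu.2])
    · obtain ⟨hderiv, hmem⟩ := hγ (a n + u) ((ha n).trans (le_add_of_nonneg_right hu.1))
      exact ⟨hderiv.comp_const_add (a n) u, hmem⟩
  have hzero : Tendsto (fun n ↦ dist (μ 0) (γ (a n)) * exp (|K| * L)) atTop (𝓝 0) := by
    simpa using ((tendsto_const_nhds (x := μ 0)).dist hlim).mul_const (exp (|K| * L))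
  refine Metric.tendstoUniformlyOn_iff.2 fun ρ hρ ↦ ?_
  filter_upwards [hzero.eventually_lt_const hρ] with n hn u hu using (hbound n u hu).trans_lt hn

lemma exists_cutoff [FiniteDimensional ℝ E] {s : Set E} (hs : IsCompact s) :
    ∃ χ : E → ℝ, (∀ q, 0 ≤ χ q) ∧ (∀ q ∈ s, χ q = 1) ∧
      ContDiff ℝ 1 (fun q ↦ χ q • F q) ∧ HasCompactSupport (fun q ↦ χ q • F q) := by
  obtain ⟨R, hR, hsR⟩ := hs.isBounded.subset_closedBall_lt 0 0
  let χ : ContDiffBump (0 : E) := ⟨R, R + 1, hR, lt_add_one R⟩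
  exact ⟨χ, fun _ ↦ χ.nonneg, fun q hq ↦ χ.one_of_mem_closedBall (hsR hq),
    χ.contDiff.smul hF, χ.hasCompactSupport.smul_right⟩

lemma periodic_of_forall_hasDerivAt (hγ : ∀ t, HasDerivAt γ (F (γ t)) t) {T : ℝ}
    (hT : γ T = γ 0) : Function.Periodic γ T :=
  congrFun (eq_of_forall_hasDerivAt hF (t₀ := 0) (fun t ↦ (hγ (t + T)).comp_add_const t T) hγ
    (by rwa [zero_add]))

end AutonomousODE

lemma le_of_deriv_nonpos_of_le {f f' : ℝ → ℝ} {a C : ℝ}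
    (hf : ∀ t ≥ a, HasDerivAt f (f' t) t) (ha : f a ≤ C) (hf' : ∀ t ≥ a, C ≤ f t → f' t ≤ 0)
    {t : ℝ} (ht : a ≤ t) : f t ≤ C := by
  have hbound (η : ℝ) (hη : 0 < η) : f t ≤ C + η * (t - a) := by
    refine image_le_of_deriv_right_lt_deriv_boundary (B := fun s ↦ C + η * (s - a))
      (fun s hs ↦ (hf s hs.1).continuousAt.continuousWithinAt)
      (fun s hs ↦ (hf s hs.1).hasDerivWithinAt) (by simpa using ha)
      (fun s ↦ (((hasDerivAt_id s).sub_const a).const_mul η).const_add C) (fun s hs heq ↦ ?_)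
      ⟨ht, le_rfl⟩
    have hC : C ≤ f s := heq ▸ le_add_of_nonneg_right (mul_nonneg hη.le (sub_nonneg.2 hs.1))
    exact (hf' s hs.1 hC).trans_lt (by simpa using hη)
  have hlim : Tendsto (fun η ↦ C + η * (t - a)) (𝓝[>] 0) (𝓝 C) :=
    (Continuous.tendsto' (by fun_prop) 0 C (by simp)).mono_left nhdsWithin_le_nhds
  exact ge_of_tendsto hlim (eventually_mem_nhdsWithin.mono hbound)

lemma energy_of_fst_eq_zero (g : ℝ → ℝ) {p : ℝ × ℝ} (hp : p.1 = 0) : energy g p = p.2 ^ 2 / 2 := by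
  rw [energy, hp, Gfun_zero, zero_add]

lemma energy_reflect (g : ℝ → ℝ) (p : ℝ × ℝ) : energy (reflect g) p = energy g (-p) := by
  simp [energy, Gfun_reflect]

lemma lienardField_reflect (g : ℝ → ℝ) (φ : ℝ × ℝ → ℝ) (p : ℝ × ℝ) :
    lienardField (reflect g) (fun p ↦ φ (-p)) p = -lienardField g φ (-p) := by
  ext
  · simp [lienardField]
  · simp [lienardField, reflect]
    ring

lemma IsSolOn.mono {F : ℝ × ℝ → ℝ × ℝ} {γ : ℝ → ℝ × ℝ} {s s' : Set ℝ} (hγ : IsSolOn F γ s)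
    (hs : s' ⊆ s) : IsSolOn F γ s' :=
  fun t ht ↦ hγ t (hs ht)

lemma IsSolOn.neg {g : ℝ → ℝ} {φ : ℝ × ℝ → ℝ} {γ : ℝ → ℝ × ℝ} {s : Set ℝ}
    (hγ : IsSolOn (lienardField g φ) γ s) :
    IsSolOn (lienardField (reflect g) (fun p ↦ φ (-p))) (fun t ↦ -γ t) s := by
  intro t ht
  rw [lienardField_reflect, neg_neg]
  exact (hγ t ht).neg

namespace IsRestoringForce

variable {g : ℝ → ℝ} (hg : IsRestoringForce g)

include hg

lemma apply_zero : g 0 = 0 := by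
  have hright : 0 ≤ g 0 := ge_of_tendsto
    (hg.contDiff.continuous.continuousWithinAt (s := Ioi 0))
    (eventually_mem_nhdsWithin.mono fun x hx ↦ (hg.pos hx).le)
  have hleft : g 0 ≤ 0 := le_of_tendsto
    (hg.contDiff.continuous.continuousWithinAt (s := Iio 0))
    (eventually_mem_nhdsWithin.mono fun x hx ↦ (hg.neg hx).le)
  exact hleft.antisymm hright

lemma energy_pos {p : ℝ × ℝ} (hp : p ≠ 0) : 0 < energy g p := by
  by_cases hx : p.1 = 0
  · have hy : p.2 ≠ 0 := fun hy ↦ hp (Prod.ext hx hy)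
    rw [energy_of_fst_eq_zero g hx]
    positivity
  · exact add_pos_of_pos_of_nonneg (hg.Gfun_pos hx) (by positivity)

lemma continuous_energy : Continuous (energy g) :=
  (hg.continuous_Gfun.comp continuous_fst).add ((continuous_snd.pow 2).div_const 2)

lemma isCompact_energy_le (C : ℝ) : IsCompact {p | energy g p ≤ C} := by
  have hG : Tendsto (Gfun g) (cocompact ℝ) atTop := by
    rw [cocompact_eq_atBot_atTop]
    exact hg.tendsto_atBot.sup hg.tendsto_atTop
  obtain ⟨K, hK, hKG⟩ := mem_cocompact.1 (hG.eventually_gt_atTop C)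
  refine (hK.prod (isCompact_Icc (a := -√(2 * C)) (b := √(2 * C)))).of_isClosed_subset
    (isClosed_le hg.continuous_energy continuous_const) fun p hp ↦ ⟨?_, abs_le.1 (abs_le_sqrt ?_)⟩
  · by_contra hpK
    have : C < Gfun g p.1 := hKG hpK
    have : Gfun g p.1 + p.2 ^ 2 / 2 ≤ C := hp
    nlinarith [sq_nonneg p.2]
  · have : Gfun g p.1 + p.2 ^ 2 / 2 ≤ C := hp
    linarith [hg.Gfun_nonneg p.1]

lemma hasDerivAt_energy {φ : ℝ × ℝ → ℝ} {γ : ℝ → ℝ × ℝ} {t c : ℝ}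
    (hγ : HasDerivAt γ (c • lienardField g φ (γ t)) t) :
    HasDerivAt (fun t ↦ energy g (γ t)) (-(c * ((γ t).2 ^ 2 * φ (γ t)))) t := by
  have hx : HasDerivAt (fun t ↦ (γ t).1) (c • lienardField g φ (γ t)).1 t := hγ.fst
  have hy : HasDerivAt (fun t ↦ (γ t).2) (c • lienardField g φ (γ t)).2 t := hγ.snd
  refine (((hg.hasDerivAt_Gfun _).comp t hx).add ((hy.pow 2).div_const 2)).congr_deriv ?_
  simp [lienardField]
  ring

lemma energy_le {φ : ℝ × ℝ → ℝ} {γ : ℝ → ℝ × ℝ} {χ : ℝ → ℝ} {a C t : ℝ}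
    (hφ : ∀ p, C ≤ energy g p → 0 ≤ φ p) (hχ : ∀ t, 0 ≤ χ t)
    (hγ : ∀ t ≥ a, HasDerivAt γ (χ t • lienardField g φ (γ t)) t) (ha : energy g (γ a) ≤ C)
    (ht : a ≤ t) : energy g (γ t) ≤ C :=
  le_of_deriv_nonpos_of_le (fun t ht ↦ hg.hasDerivAt_energy (hγ t ht)) ha
    (fun t _ hC ↦ neg_nonpos.2 (mul_nonneg (hχ t) (mul_nonneg (sq_nonneg _) (hφ _ hC)))) ht

lemma le_energy {φ : ℝ × ℝ → ℝ} {γ : ℝ → ℝ × ℝ} {a c t : ℝ}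
    (hφ : ∀ p, energy g p ≤ c → φ p ≤ 0) (hγ : IsSolOn (lienardField g φ) γ (Ici a))
    (ha : c ≤ energy g (γ a)) (ht : a ≤ t) : c ≤ energy g (γ t) := by
  refine neg_le_neg_iff.1 (le_of_deriv_nonpos_of_le
    (fun t ht ↦ (hg.hasDerivAt_energy (c := 1) (by simpa using hγ t ht)).neg) (neg_le_neg ha)
    (fun t _ hc ↦ ?_) ht)
  simpa using mul_nonpos_of_nonneg_of_nonpos (sq_nonneg _) (hφ _ (neg_le_neg_iff.1 hc))

end IsRestoringForce

/-- The oscillator `ẍ + φ(x, ẋ) ẋ + g(x) = 0` dissipates energy far from equilibrium and gains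
energy near equilibrium. -/
structure IsSelfExcited (g : ℝ → ℝ) (φ : ℝ × ℝ → ℝ) : Prop where
  force : IsRestoringForce g
  contDiff : ContDiff ℝ 1 φ
  exists_nonneg : ∃ E, ∀ p, E ≤ energy g p → 0 ≤ φ p
  exists_nonpos : ∃ e > 0, ∀ p, energy g p ≤ e → φ p ≤ 0

namespace IsSelfExcited

variable {g : ℝ → ℝ} {φ : ℝ × ℝ → ℝ} {γ : ℝ → ℝ × ℝ} {a t : ℝ} (h : IsSelfExcited g φ)

include h

protected lemma reflect : IsSelfExcited (reflect g) (fun p ↦ φ (-p)) where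
  force := h.force.reflect
  contDiff := h.contDiff.comp contDiff_neg
  exists_nonneg := h.exists_nonneg.imp fun _ hE p hp ↦ hE _ (hp.trans_eq (energy_reflect g p))
  exists_nonpos := h.exists_nonpos.imp fun _ he ↦
    ⟨he.1, fun p hp ↦ he.2 _ ((energy_reflect g p).symm.trans_le hp)⟩

lemma contDiff_lienardField : ContDiff ℝ 1 (lienardField g φ) :=
  contDiff_snd.prodMk
    ((h.force.contDiff.comp contDiff_fst).neg.sub (contDiff_snd.mul h.contDiff))

lemma exists_isCompact_forall_mem (hγ : IsSolOn (lienardField g φ) γ (Ici a)) :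
    ∃ s, IsCompact s ∧ ∀ t ≥ a, γ t ∈ s := by
  obtain ⟨E, hE⟩ := h.exists_nonneg
  refine ⟨_, h.force.isCompact_energy_le (max E (energy g (γ a))), fun t ht ↦ ?_⟩
  exact h.force.energy_le (χ := 1) (fun p hp ↦ hE p ((le_max_left _ _).trans hp))
    (fun _ ↦ zero_le_one) (by simpa [IsSolOn] using hγ) (le_max_right _ _) ht

lemma exists_pos_forall_le_energy (hγ : IsSolOn (lienardField g φ) γ (Ici a)) (ha : γ a ≠ 0) :
    ∃ c > 0, ∀ t ≥ a, c ≤ energy g (γ t) := by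
  obtain ⟨e, he, hφ⟩ := h.exists_nonpos
  exact ⟨min e (energy g (γ a)), lt_min he (h.force.energy_pos ha), fun t ht ↦
    h.force.le_energy (fun p hp ↦ hφ p (hp.trans (min_le_left _ _))) hγ (min_le_right _ _) ht⟩

lemma apply_ne_zero (hγ : IsSolOn (lienardField g φ) γ (Ici a)) (ha : γ a ≠ 0) (ht : a ≤ t) :
    γ t ≠ 0 := by
  obtain ⟨c, hc, hle⟩ := h.exists_pos_forall_le_energy hγ ha
  intro h0
  have := hle t ht
  rw [h0, energy_of_fst_eq_zero g Prod.fst_zero, Prod.snd_zero] at this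
  norm_num at this
  exact hc.not_ge this

lemma apply_ne_zero_of_nonconstant (hγ : IsSolOn (lienardField g φ) γ (Ici a))
    (hne : ∃ t₁ ∈ Ici a, ∃ t₂ ∈ Ici a, γ t₁ ≠ γ t₂) : γ a ≠ 0 := by
  obtain ⟨t₁, ht₁, t₂, ht₂, hne⟩ := hne
  have h0 : lienardField g φ 0 = 0 := by simp [lienardField, h.force.apply_zero]
  have hconst (ha : γ a = 0) {t : ℝ} (ht : a ≤ t) : γ t = 0 :=
    eq_of_apply_eq_zero_of_le h.contDiff_lienardField h0 hγ ha ht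
  exact fun ha ↦ hne ((hconst ha ht₁).trans (hconst ha ht₂).symm)

-- The cutoff field has globally defined solutions, and a nonnegative factor does not affect the
-- sign of the dissipation, so in forward time its solutions never see the cutoff.
lemma exists_isSolOn (p : ℝ × ℝ) :
    ∃ γ, γ 0 = p ∧ IsSolOn (lienardField g φ) γ (Ici 0) ∧
      ∀ T > 0, γ T = p → Function.Periodic γ T ∧ IsSolOn (lienardField g φ) γ univ := by
  obtain ⟨E, hE⟩ := h.exists_nonneg
  obtain ⟨χ, hχ₀, hχ₁, hχF, hsupp⟩ := exists_cutoff h.contDiff_lienardField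
    (h.force.isCompact_energy_le (max E (energy g p)))
  obtain ⟨γ, hγ₀, hγ⟩ := exists_forall_hasDerivAt_of_hasCompactSupport hχF hsupp p
  have hχγ (t : ℝ) (ht : 0 ≤ t) : χ (γ t) = 1 := hχ₁ _ <|
    h.force.energy_le (fun p hp ↦ hE p ((le_max_left _ _).trans hp)) (fun t ↦ hχ₀ (γ t))
      (fun t _ ↦ hγ t) (by rw [hγ₀]; exact le_max_right _ _) ht
  refine ⟨γ, hγ₀, fun t ht ↦ by simpa [hχγ t ht] using hγ t, fun T hT hTp ↦ ?_⟩
  have hper : Function.Periodic γ T := periodic_of_forall_hasDerivAt hχF hγ (hTp.trans hγ₀.symm)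
  refine ⟨hper, fun t _ ↦ ?_⟩
  obtain ⟨t', ht', heq⟩ := hper.exists_mem_Ico₀ hT t
  have := hγ t
  rwa [heq, hχγ t' ht'.1, one_smul, ← heq] at this

end IsSelfExcited

/-! ### Crossings of the coordinate axes -/

lemma tendsto_atTop_of_le_deriv {f f' : ℝ → ℝ} {m : ℝ} (hm : 0 < m)
    (hf : ∀ᶠ t in atTop, HasDerivAt f (f' t) t ∧ m ≤ f' t) : Tendsto f atTop atTop := by
  obtain ⟨a, ha⟩ := eventually_atTop.1 hf
  have hle : ∀ t ≥ a, f a + m * (t - a) ≤ f t := by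
    intro t ht
    have := (convex_Ici a).mul_sub_le_image_sub_of_le_deriv
      (fun t ht ↦ (ha t ht).1.continuousAt.continuousWithinAt)
      (fun t ht ↦ (ha t (interior_subset ht)).1.differentiableAt.differentiableWithinAt)
      (fun t ht ↦ (ha t (interior_subset ht)).1.deriv ▸ (ha t (interior_subset ht)).2)
      a self_mem_Ici t ht ht
    linarith
  refine tendsto_atTop_mono' atTop (eventually_atTop.2 ⟨a, hle⟩) ?_
  exact tendsto_atTop_add_const_left _ _
    ((tendsto_atTop_add_const_right _ _ tendsto_id).const_mul_atTop hm)

lemma exists_first_zero {f : ℝ → ℝ} {a b : ℝ} (hab : a ≤ b) (hf : ContinuousOn f (Icc a b))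
    (ha : 0 < f a) (hb : f b ≤ 0) : ∃ c, a < c ∧ f c = 0 ∧ ∀ t ∈ Ico a c, 0 < f t := by
  have hclosed : IsClosed (Icc a b ∩ f ⁻¹' Iic 0) :=
    hf.preimage_isClosed_of_isClosed isClosed_Icc isClosed_Iic
  obtain ⟨c, hc, hleast⟩ := (isCompact_Icc.of_isClosed_subset hclosed inter_subset_left)
    |>.exists_isLeast ⟨b, right_mem_Icc.2 hab, hb⟩
  obtain ⟨d, hd, hd₀⟩ := intermediate_value_Icc' hc.1.1 (hf.mono (Icc_subset_Icc_right hc.1.2))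
    ⟨hc.2, ha.le⟩
  have hcd : c = d := (hleast ⟨⟨hd.1, hd.2.trans hc.1.2⟩, hd₀.le⟩).antisymm hd.2
  refine ⟨c, hc.1.1.lt_of_ne ?_, hcd ▸ hd₀, fun t ht ↦ ?_⟩
  · rintro rfl
    exact ha.not_ge hc.2
  · by_contra! hft
    exact ht.2.not_ge (hleast ⟨⟨ht.1, ht.2.le.trans hc.1.2⟩, hft⟩)

namespace IsSelfExcited

variable {g : ℝ → ℝ} {φ : ℝ × ℝ → ℝ} {γ : ℝ → ℝ × ℝ} {a : ℝ} (h : IsSelfExcited g φ)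
  (hγ : IsSolOn (lienardField g φ) γ (Ici a))

include h hγ

lemma not_tendsto_comp_atTop {q : ℝ × ℝ → ℝ} (hq : Continuous q) :
    ¬Tendsto (fun t ↦ q (γ t)) atTop atTop := by
  obtain ⟨s, hs, hmem⟩ := h.exists_isCompact_forall_mem hγ
  obtain ⟨B, hB⟩ := hs.bddAbove_image hq.continuousOn
  intro htop
  obtain ⟨t, ht, hta⟩ := ((htop.eventually_gt_atTop B).and (eventually_ge_atTop a)).exists
  exact ht.not_ge (hB (mem_image_of_mem q (hmem t hta)))

lemma exists_tendsto_fst (hy : ∀ t ≥ a, 0 < (γ t).2) :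
    ∃ x, Tendsto (fun t ↦ (γ t).1) atTop (𝓝 x) := by
  have hmono : MonotoneOn (fun t ↦ (γ t).1) (Ici a) :=
    monotoneOn_of_deriv_nonneg (convex_Ici a)
      (fun t ht ↦ (hγ.hasDerivAt_fst ht).continuousAt.continuousWithinAt)
      (fun t ht ↦ (hγ.hasDerivAt_fst (interior_subset ht)).differentiableAt.differentiableWithinAt)
      (fun t ht ↦ (hγ.hasDerivAt_fst (interior_subset ht)).deriv ▸ (hy t (interior_subset ht)).le)
  have hmono' : Monotone fun t ↦ (γ (max a t)).1 := fun s t hst ↦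
    hmono (le_max_left a s) (le_max_left a t) (max_le_max_left a hst)
  have heq : (fun t ↦ (γ (max a t)).1) =ᶠ[atTop] fun t ↦ (γ t).1 := by
    filter_upwards [eventually_ge_atTop a] with t ht
    rw [max_eq_right ht]
  rcases tendsto_atTop_of_monotone hmono' with htop | ⟨x, hx⟩
  · exact (h.not_tendsto_comp_atTop hγ continuous_fst (htop.congr' heq)).elim
  · exact ⟨x, hx.congr' heq⟩

lemma eq_zero_of_tendsto_fst (hy : ∀ t ≥ a, 0 < (γ t).2) {x : ℝ}
    (hx : Tendsto (fun t ↦ (γ t).1) atTop (𝓝 x)) : x = 0 := by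
  by_contra hx₀
  have hgx : g x ≠ 0 := (mul_ne_zero_iff.1 (h.force.mul_pos x hx₀).ne').2
  obtain ⟨s, hs, hmem⟩ := h.exists_isCompact_forall_mem hγ
  obtain ⟨K, hK⟩ := hs.exists_bound_of_continuousOn h.contDiff.continuous.continuousOn
  refine h.not_tendsto_comp_atTop hγ (q := fun p ↦ K * |g x| * p.1 - g x * p.2) (by fun_prop) ?_
  have hforce : ∀ᶠ t in atTop, g x * g x / 2 < g x * g (γ t).1 :=
    ((h.force.contDiff.continuous.tendsto x).comp hx).const_mul (g x) |>.eventually_const_lt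
      (half_lt_self (mul_self_pos.2 hgx))
  refine tendsto_atTop_of_le_deriv
    (f' := fun t ↦ K * |g x| * (γ t).2 - g x * (-g (γ t).1 - (γ t).2 * φ (γ t)))
    (half_pos (mul_self_pos.2 hgx)) ?_
  filter_upwards [hforce, eventually_ge_atTop a] with t ht hta
  refine ⟨((hγ.hasDerivAt_fst hta).const_mul _).sub ((hγ.hasDerivAt_snd hta).const_mul _), ?_⟩
  have hdamping : -(K * |g x|) ≤ g x * φ (γ t) := by
    refine (neg_le_neg ?_).trans (neg_abs_le _)
    rw [abs_mul, mul_comm]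
    gcongr
    exact hK _ (hmem t hta)
  nlinarith [hy t hta]

lemma not_tendsto_fst_zero (hy : ∀ t ≥ a, 0 < (γ t).2) :
    ¬Tendsto (fun t ↦ (γ t).1) atTop (𝓝 0) := by
  intro hx
  have hne : γ a ≠ 0 := fun hγa ↦ (hy a le_rfl).ne' (congr_arg Prod.snd hγa)
  obtain ⟨c, hc, hle⟩ := h.exists_pos_forall_le_energy hγ hne
  have hG : ∀ᶠ t in atTop, Gfun g (γ t).1 < c / 2 :=
    ((h.force.continuous_Gfun.tendsto 0).comp hx).eventually_lt_const
      (by rw [Gfun_zero]; exact half_pos hc)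
  refine h.not_tendsto_comp_atTop hγ continuous_fst
    (tendsto_atTop_of_le_deriv (f' := fun t ↦ (γ t).2) (sqrt_pos.2 hc) ?_)
  filter_upwards [hG, eventually_ge_atTop a] with t ht hta
  refine ⟨hγ.hasDerivAt_fst hta, sqrt_le_iff.2 ⟨(hy t hta).le, ?_⟩⟩
  have := hle t hta
  rw [energy] at this
  linarith

lemma exists_snd_nonpos : ∃ t ≥ a, (γ t).2 ≤ 0 := by
  by_contra! hy
  obtain ⟨x, hx⟩ := h.exists_tendsto_fst hγ hy
  exact h.not_tendsto_fst_zero hγ hy (h.eq_zero_of_tendsto_fst hγ hy hx ▸ hx)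

lemma exists_snd_eq_zero_of_snd_pos (ha : 0 < (γ a).2) :
    ∃ b > a, (γ b).2 = 0 ∧ 0 < (γ b).1 ∧ ∀ t ∈ Ico a b, 0 < (γ t).2 := by
  obtain ⟨c, hac, hc⟩ := h.exists_snd_nonpos hγ
  obtain ⟨b, hab, hb, hpos⟩ := exists_first_zero (f := fun t ↦ (γ t).2) hac
    (fun t ht ↦ (hγ.hasDerivAt_snd ht.1).continuousAt.continuousWithinAt) ha hc
  have hne : γ a ≠ 0 := fun hγa ↦ ha.ne' (congr_arg Prod.snd hγa)
  refine ⟨b, hab, hb, ?_, hpos⟩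
  by_contra! hx
  have hx' : (γ b).1 < 0 := hx.lt_of_ne fun hx₀ ↦ h.apply_ne_zero hγ hne hab.le (Prod.ext hx₀ hb)
  have hderiv : 0 < deriv (fun t ↦ (γ t).2) b := by
    rw [(hγ.hasDerivAt_snd hab.le).deriv, hb]
    linarith [h.force.neg hx']
  obtain ⟨t, hsign, ht⟩ := ((eventually_nhdsWithin_of_eventually_nhds
    (eventually_nhdsWithin_sign_eq_of_deriv_pos hderiv hb)).and (Ioo_mem_nhdsLT hab)).exists
  rw [sign_neg (sub_neg.2 ht.2), sign_eq_neg_one_iff] at hsign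
  exact (hpos t (Ioo_subset_Ico_self ht)).not_gt hsign

lemma exists_snd_eq_zero_of_snd_neg (ha : (γ a).2 < 0) :
    ∃ b > a, (γ b).2 = 0 ∧ (γ b).1 < 0 ∧ ∀ t ∈ Ico a b, (γ t).2 < 0 := by
  simpa using h.reflect.exists_snd_eq_zero_of_snd_pos hγ.neg (by simpa using ha)

lemma exists_fst_eq_zero_of_fst_pos (hx : 0 < (γ a).1) (hy : (γ a).2 = 0) :
    ∃ b > a, (γ b).1 = 0 ∧ ∀ t ∈ Ioc a b, (γ t).2 < 0 := by
  have hderiv : deriv (fun t ↦ (γ t).2) a < 0 := by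
    rw [(hγ.hasDerivAt_snd self_mem_Ici).deriv, hy]
    linarith [h.force.pos hx]
  obtain ⟨u, hau, hsign⟩ := mem_nhdsGT_iff_exists_Ioc_subset.1 (nhdsWithin_le_nhds
    (eventually_nhdsWithin_sign_eq_of_deriv_neg hderiv hy))
  have hneg : ∀ t ∈ Ioc a u, (γ t).2 < 0 := by
    intro t ht
    have := hsign ht
    rwa [mem_ofPred_eq, sign_neg (sub_neg.2 ht.1), sign_eq_neg_one_iff] at this
  obtain ⟨c, huc, -, hxc, hneg'⟩ := h.exists_snd_eq_zero_of_snd_neg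
    (hγ.mono (Ici_subset_Ici.2 (mem_Ioi.1 hau).le)) (hneg u ⟨hau, le_rfl⟩)
  obtain ⟨b, hb, hxb⟩ := intermediate_value_Ioo' (f := fun t ↦ (γ t).1)
    ((mem_Ioi.1 hau).trans huc).le
    (fun t ht ↦ (hγ.hasDerivAt_fst ht.1).continuousAt.continuousWithinAt) ⟨hxc, hx⟩
  refine ⟨b, hb.1, hxb, fun t ht ↦ ?_⟩
  rcases le_total t u with htu | hut
  · exact hneg t ⟨ht.1, htu⟩
  · exact hneg' t ⟨hut, ht.2.trans_lt hb.2⟩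

lemma exists_fst_eq_zero_of_fst_neg (hx : (γ a).1 < 0) (hy : (γ a).2 = 0) :
    ∃ b > a, (γ b).1 = 0 ∧ ∀ t ∈ Ioc a b, 0 < (γ t).2 := by
  simpa using h.reflect.exists_fst_eq_zero_of_fst_pos hγ.neg (by simpa using hx) (by simpa using hy)

lemma exists_crossing_of_snd_neg (ha : (γ a).2 < 0) : ∃ b ≥ a, (γ b).1 = 0 ∧ 0 < (γ b).2 := by
  obtain ⟨c, hac, hyc, hxc, -⟩ := h.exists_snd_eq_zero_of_snd_neg hγ ha
  obtain ⟨b, hcb, hxb, hyb⟩ := h.exists_fst_eq_zero_of_fst_neg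
    (hγ.mono (Ici_subset_Ici.2 hac.le)) hxc hyc
  exact ⟨b, (hac.trans hcb).le, hxb, hyb b ⟨hcb, le_rfl⟩⟩

lemma exists_crossing_of_snd_eq_zero (ha : γ a ≠ 0) (hy : (γ a).2 = 0) :
    ∃ b ≥ a, (γ b).1 = 0 ∧ 0 < (γ b).2 := by
  have hx : (γ a).1 ≠ 0 := fun hx ↦ ha (Prod.ext hx hy)
  rcases hx.lt_or_gt with hx | hx
  · obtain ⟨b, hab, hxb, hyb⟩ := h.exists_fst_eq_zero_of_fst_neg hγ hx hy
    exact ⟨b, hab.le, hxb, hyb b ⟨hab, le_rfl⟩⟩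
  · obtain ⟨c, hac, -, hyc⟩ := h.exists_fst_eq_zero_of_fst_pos hγ hx hy
    obtain ⟨b, hcb, hb⟩ := h.exists_crossing_of_snd_neg (hγ.mono (Ici_subset_Ici.2 hac.le))
      (hyc c ⟨hac, le_rfl⟩)
    exact ⟨b, hac.le.trans hcb, hb⟩

lemma exists_crossing (ha : γ a ≠ 0) : ∃ b ≥ a, (γ b).1 = 0 ∧ 0 < (γ b).2 := by
  rcases lt_trichotomy (γ a).2 0 with hy | hy | hy
  · exact h.exists_crossing_of_snd_neg hγ hy
  · exact h.exists_crossing_of_snd_eq_zero hγ ha hy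
  · obtain ⟨c, hac, hyc, -⟩ := h.exists_snd_eq_zero_of_snd_pos hγ hy
    obtain ⟨b, hcb, hb⟩ := h.exists_crossing_of_snd_eq_zero (hγ.mono (Ici_subset_Ici.2 hac.le))
      (h.apply_ne_zero hγ ha hac.le) hyc
    exact ⟨b, hac.le.trans hcb, hb⟩

end IsSelfExcited

/-- The damping seen by an orbit of `lienardField g φ` run backwards in time and reflected in the
`x`-axis. -/
def reverseDamping (φ : ℝ × ℝ → ℝ) (p : ℝ × ℝ) : ℝ := -φ (p.1, -p.2)

lemma contDiff_reverseDamping {φ : ℝ × ℝ → ℝ} (hφ : ContDiff ℝ 1 φ) :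
    ContDiff ℝ 1 (reverseDamping φ) :=
  (hφ.comp (contDiff_fst.prodMk contDiff_snd.neg)).neg

lemma isQuarterTurn_reverse {g : ℝ → ℝ} {φ : ℝ × ℝ → ℝ} {γ : ℝ → ℝ × ℝ} {a b : ℝ} (hab : a < b)
    (hγ : IsSolOn (lienardField g φ) γ (Icc a b)) (ha : (γ a).2 = 0) (hb : (γ b).1 = 0)
    (hy : ∀ t ∈ Ioc a b, (γ t).2 < 0) :
    IsQuarterTurn g (reverseDamping φ) (fun t ↦ ((γ (-t)).1, -(γ (-t)).2)) (-b) (-a) where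
  lt := neg_lt_neg hab
  isSolOn t ht := by
    have ht' : -t ∈ Icc a b := ⟨le_neg.1 ht.2, neg_le.1 ht.1⟩
    have hx := (hγ.hasDerivAt_fst ht').comp t (hasDerivAt_neg t)
    have hy := ((hγ.hasDerivAt_snd ht').comp t (hasDerivAt_neg t)).neg
    refine (hx.prodMk hy).congr_deriv ?_
    simp [lienardField, reverseDamping, sub_eq_add_neg]
  fst_left := by simpa using hb
  snd_pos t ht := neg_pos.2 (hy _ ⟨lt_neg.1 ht.2, neg_le.1 ht.1⟩)
  snd_right := by simpa using ha

/-- An orbit of `lienardField g φ` leaves the `y`-axis at height `s`, passes through the half-plane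
`x > 0` and comes back at height `-s'`. -/
def HalfTurn (g : ℝ → ℝ) (φ : ℝ × ℝ → ℝ) : ℝ → ℝ → Prop :=
  HalfReturn (quarterField g φ) (quarterField g (reverseDamping φ))

/-- An orbit of `lienardField g φ` leaves the positive `y`-axis at height `s` and next meets it at
height `s'`: a half turn through `x > 0` followed by one through `x < 0`. -/
def Return (g : ℝ → ℝ) (φ : ℝ × ℝ → ℝ) (s s' : ℝ) : Prop :=
  ∃ u, HalfTurn g φ s u ∧ HalfTurn (reflect g) (fun p ↦ φ (-p)) u s'

namespace IsSelfExcited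

variable {g : ℝ → ℝ} {φ : ℝ × ℝ → ℝ} {γ : ℝ → ℝ × ℝ} {a : ℝ} (h : IsSelfExcited g φ)
  (hγ : IsSolOn (lienardField g φ) γ (Ici a))

include h hγ

lemma exists_halfTurn_of_snd_pos (hx : (γ a).1 = 0) (hy : 0 < (γ a).2) :
    ∃ b > a, (γ b).1 = 0 ∧ (γ b).2 < 0 ∧ (∀ t ∈ Ioo a b, 0 < (γ t).1) ∧
      HalfTurn g φ (γ a).2 (-(γ b).2) := by
  obtain ⟨c, hac, hyc, hxc, hpos⟩ := h.exists_snd_eq_zero_of_snd_pos hγ hy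
  obtain ⟨b, hcb, hxb, hneg⟩ := h.exists_fst_eq_zero_of_fst_pos
    (hγ.mono (Ici_subset_Ici.2 hac.le)) hxc hyc
  have outgoing : IsQuarterTurn g φ γ a c := ⟨hac, hγ.mono Icc_subset_Ici_self, hx, hpos, hyc⟩
  have incoming := isQuarterTurn_reverse hcb
    (hγ.mono (Icc_subset_Ici_self.trans (Ici_subset_Ici.2 hac.le))) hyc hxb hneg
  refine ⟨b, hac.trans hcb, hxb, hneg b ⟨hcb, le_rfl⟩, fun t ht ↦ ?_, ?_⟩
  · rcases le_total t c with htc | hct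
    · exact outgoing.fst_pos ⟨ht.1, htc⟩
    · simpa using incoming.fst_pos (t := -t) ⟨neg_lt_neg ht.2, neg_le_neg hct⟩
  · obtain ⟨z, hz⟩ := outgoing.exists_isArc h.force
    obtain ⟨w, hw⟩ := incoming.exists_isArc h.force
    simp only [neg_neg] at hw
    exact ⟨_, z, w, hz, hw⟩

lemma exists_halfTurn_of_snd_neg (hx : (γ a).1 = 0) (hy : (γ a).2 < 0) :
    ∃ b > a, (γ b).1 = 0 ∧ 0 < (γ b).2 ∧ (∀ t ∈ Ioo a b, (γ t).1 < 0) ∧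
      HalfTurn (reflect g) (fun p ↦ φ (-p)) (-(γ a).2) (γ b).2 := by
  simpa using h.reflect.exists_halfTurn_of_snd_pos hγ.neg (by simpa using hx) (by simpa using hy)

lemma exists_return (hx : (γ a).1 = 0) (hy : 0 < (γ a).2) :
    ∃ b > a, (γ b).1 = 0 ∧ 0 < (γ b).2 ∧ (∀ t ∈ Ioo a b, (γ t).1 = 0 → (γ t).2 < 0) ∧
      Return g φ (γ a).2 (γ b).2 := by
  obtain ⟨c, hac, hxc, hyc, hright, hac'⟩ := h.exists_halfTurn_of_snd_pos hγ hx hy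
  obtain ⟨b, hcb, hxb, hyb, hleft, hcb'⟩ := h.exists_halfTurn_of_snd_neg
    (hγ.mono (Ici_subset_Ici.2 hac.le)) hxc hyc
  refine ⟨b, hac.trans hcb, hxb, hyb, fun t ht hxt ↦ ?_, _, hac', hcb'⟩
  rcases lt_trichotomy t c with htc | rfl | hct
  · exact ((hright t ⟨ht.1, htc⟩).ne' hxt).elim
  · exact hyc
  · exact ((hleft t ⟨hct, ht.2⟩).ne hxt).elim

end IsSelfExcited

/-! ### The return map -/

lemma scaledDamping_reverseDamping (g : ℝ → ℝ) (φ : ℝ × ℝ → ℝ) (l z : ℝ) :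
    scaledDamping g (reverseDamping φ) l z = -scaledDamping g φ l (-z) := by
  simp only [scaledDamping, reverseDamping, mul_neg, neg_div]

/-- The scaled damping is strictly larger at arbitrarily small radii than at all smaller ones. -/
def FrequentlyStrictMonoDamping (g : ℝ → ℝ) (φ : ℝ × ℝ → ℝ) : Prop :=
  ∃ᶠ l in atBot, ∀ l' < l, ∀ z > 0, scaledDamping g φ l' z < scaledDamping g φ l z

/-- The scaled damping grows with the radius in both half-planes `x > 0` and `x < 0`, strictly so
near the origin in one of them. -/
structure HasMonotoneDamping (g : ℝ → ℝ) (φ : ℝ × ℝ → ℝ) : Prop where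
  right : ∀ z, Monotone (scaledDamping g φ · z)
  left : ∀ z, Monotone (scaledDamping (reflect g) (fun p ↦ φ (-p)) · z)
  strict : FrequentlyStrictMonoDamping g φ ∨
    FrequentlyStrictMonoDamping (reflect g) (fun p ↦ φ (-p))

section

variable {g : ℝ → ℝ} {φ : ℝ × ℝ → ℝ} {s s' s₁ s₁' s₂ s₂' r : ℝ}

lemma antitone_quarterField (hd : ∀ z, Monotone (scaledDamping g φ · z)) (z : ℝ) :
    Antitone (quarterField g φ · z) :=
  fun _ _ hl ↦ sub_le_sub_left (hd z hl) _

lemma monotone_quarterField_reverseDamping (hd : ∀ z, Monotone (scaledDamping g φ · z)) (z : ℝ) :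
    Monotone (quarterField g (reverseDamping φ) · z) := by
  intro l l' hl
  simp only [quarterField, scaledDamping_reverseDamping]
  linarith [hd (-z) hl]

namespace HalfTurn

variable (hg : IsRestoringForce g) (hφ : ContDiff ℝ 1 φ)
  (hd : ∀ z, Monotone (scaledDamping g φ · z)) (h₁ : HalfTurn g φ s₁ s₁') (h₂ : HalfTurn g φ s₂ s₂')

include hg hφ hd h₁ h₂

lemma le_mul (hr : 1 ≤ r) (hs : s₂ ≤ r * s₁) : s₂' ≤ r * s₁' :=
  HalfReturn.le_mul (hg.contDiffOn_quarterField hφ)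
    (hg.contDiffOn_quarterField (contDiff_reverseDamping hφ))
    (fun z _ ↦ antitone_quarterField hd z) (fun z _ ↦ monotone_quarterField_reverseDamping hd z)
    h₁ h₂ hr hs

lemma exists_le_mul (hstrict : FrequentlyStrictMonoDamping g φ) (hr : 1 < r) (hs : s₂ ≤ r * s₁) :
    ∃ r', 1 ≤ r' ∧ r' < r ∧ s₂' ≤ r' * s₁' :=
  HalfReturn.exists_le_mul (hg.contDiffOn_quarterField hφ)
    (hg.contDiffOn_quarterField (contDiff_reverseDamping hφ))
    (fun z _ ↦ antitone_quarterField hd z) (fun z _ ↦ monotone_quarterField_reverseDamping hd z)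
    h₁ h₂ (hstrict.mono fun _ hl l' hl' z hz ↦ sub_lt_sub_left (hl l' hl' z hz) _) hr hs

end HalfTurn

namespace Return

lemma pos_left (h : Return g φ s s') : 0 < s :=
  let ⟨_, hright, _⟩ := h; HalfReturn.pos_left hright

lemma pos_right (h : Return g φ s s') : 0 < s' :=
  let ⟨_, _, hleft⟩ := h; HalfReturn.pos_right hleft

variable (h : IsSelfExcited g φ) (hd : HasMonotoneDamping g φ)

include h hd

lemma le_mul (h₁ : Return g φ s₁ s₁') (h₂ : Return g φ s₂ s₂') (hr : 1 ≤ r) (hs : s₂ ≤ r * s₁) :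
    s₂' ≤ r * s₁' := by
  obtain ⟨u₁, hright₁, hleft₁⟩ := h₁
  obtain ⟨u₂, hright₂, hleft₂⟩ := h₂
  exact hleft₁.le_mul h.force.reflect h.reflect.contDiff hd.left hleft₂ hr
    (hright₁.le_mul h.force h.contDiff hd.right hright₂ hr hs)

lemma lt_mul (h₁ : Return g φ s₁ s₁') (h₂ : Return g φ s₂ s₂') (hr : 1 < r) (hs : s₂ ≤ r * s₁) :
    s₂' < r * s₁' := by
  have hs₁' : 0 < s₁' := h₁.pos_right
  obtain ⟨u₁, hright₁, hleft₁⟩ := h₁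
  obtain ⟨u₂, hright₂, hleft₂⟩ := h₂
  suffices ∃ r' < r, s₂' ≤ r' * s₁' by
    obtain ⟨r', hr', hle⟩ := this
    exact hle.trans_lt (mul_lt_mul_of_pos_right hr' hs₁')
  rcases hd.strict with hstrict | hstrict
  · obtain ⟨r', hr'₁, hr', hu⟩ := hright₁.exists_le_mul h.force h.contDiff hd.right hright₂
      hstrict hr hs
    exact ⟨r', hr', hleft₁.le_mul h.force.reflect h.reflect.contDiff hd.left hleft₂ hr'₁ hu⟩
  · obtain ⟨r', -, hr', hle⟩ := hleft₁.exists_le_mul h.force.reflect h.reflect.contDiff hd.left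
      hleft₂ hstrict hr (hright₁.le_mul h.force h.contDiff hd.right hright₂ hr.le hs)
    exact ⟨r', hr', hle⟩

lemma unique (h₁ : Return g φ s s₁') (h₂ : Return g φ s s₂') : s₁' = s₂' :=
  le_antisymm (by simpa using h₂.le_mul h hd h₁ le_rfl (one_mul s).ge)
    (by simpa using h₁.le_mul h hd h₂ le_rfl (one_mul s).ge)

lemma monotoneOn {P : ℝ → ℝ} (hP : ∀ s > 0, Return g φ s (P s)) : MonotoneOn P (Ioi 0) :=
  fun s₁ hs₁ s₂ hs₂ hs ↦ by
    simpa using (hP s₂ hs₂).le_mul h hd (hP s₁ hs₁) le_rfl (by simpa using hs)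

lemma strictAntiOn_div {P : ℝ → ℝ} (hP : ∀ s > 0, Return g φ s (P s)) :
    StrictAntiOn (fun s ↦ P s / s) (Ioi 0) := by
  intro s₁ (hs₁ : 0 < s₁) s₂ (hs₂ : 0 < s₂) hs
  have : P s₂ < s₂ / s₁ * P s₁ := (hP s₁ hs₁).lt_mul h hd (hP s₂ hs₂) ((one_lt_div hs₁).2 hs)
    (div_mul_cancel₀ s₂ hs₁.ne').ge
  rw [div_lt_iff₀ hs₂]
  exact this.trans_eq (by ring)

end Return

namespace IsSelfExcited

variable (h : IsSelfExcited g φ)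

include h

lemma exists_isSolOn_return (hs : 0 < s) :
    ∃ γ, γ 0 = (0, s) ∧ IsSolOn (lienardField g φ) γ (Ici 0) ∧
      ∃ b > 0, (γ b).1 = 0 ∧ Return g φ s (γ b).2 := by
  obtain ⟨γ, hγ₀, hγ, -⟩ := h.exists_isSolOn (0, s)
  obtain ⟨b, hb, hxb, -, -, hret⟩ := h.exists_return hγ (by rw [hγ₀]) (by rwa [hγ₀])
  exact ⟨γ, hγ₀, hγ, b, hb, hxb, by rwa [hγ₀] at hret⟩

lemma exists_return_le : ∃ s s', Return g φ s s' ∧ s' ≤ s := by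
  obtain ⟨E, hE⟩ := h.exists_nonneg
  have hs : 0 < √(2 * max E 1) := sqrt_pos.2 (by positivity)
  obtain ⟨γ, hγ₀, hγ, b, hb, hxb, hret⟩ := h.exists_isSolOn_return hs
  have henergy : energy g (γ 0) = max E 1 := by
    rw [hγ₀, energy_of_fst_eq_zero g rfl, sq_sqrt (by positivity)]
    ring
  have := h.force.energy_le (χ := 1) (fun p hp ↦ hE p ((le_max_left E 1).trans hp))
    (fun _ ↦ zero_le_one) (by simpa [IsSolOn] using hγ) henergy.le hb.le
  rw [energy_of_fst_eq_zero g hxb] at this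
  exact ⟨_, _, hret, le_sqrt_of_sq_le (by linarith)⟩

lemma exists_le_return : ∃ s s', Return g φ s s' ∧ s ≤ s' := by
  obtain ⟨e, he, hφ⟩ := h.exists_nonpos
  obtain ⟨γ, hγ₀, hγ, b, hb, hxb, hret⟩ := h.exists_isSolOn_return (sqrt_pos.2 (mul_pos two_pos he))
  have henergy : energy g (γ 0) = e := by
    rw [hγ₀, energy_of_fst_eq_zero g rfl, sq_sqrt (by positivity)]
    ring
  have := h.force.le_energy hφ hγ henergy.ge hb.le
  rw [energy_of_fst_eq_zero g hxb] at this
  exact ⟨_, _, hret, sqrt_le_iff.2 ⟨hret.pos_right.le, by linarith⟩⟩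

lemma exists_attracting_return (hd : HasMonotoneDamping g φ) :
    ∃ S, Return g φ S S ∧
      ∀ u : ℕ → ℝ, (∀ n, Return g φ (u n) (u (n + 1))) → Tendsto u atTop (𝓝 S) := by
  have htotal : ∀ s > 0, ∃ s', Return g φ s s' := fun s hs ↦
    let ⟨γ, _, _, b, _, _, hret⟩ := h.exists_isSolOn_return hs; ⟨(γ b).2, hret⟩
  choose! P hP using htotal
  have hpos : MapsTo P (Ioi 0) (Ioi 0) := fun s hs ↦ (hP s hs).pos_right
  have hmono := Return.monotoneOn h hd hP
  have hanti := Return.strictAntiOn_div h hd hP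
  have heq {s s' : ℝ} (hret : Return g φ s s') : P s = s' :=
    (hP s hret.pos_left).unique h hd hret
  obtain ⟨s₁, s₁', hret₁, hle₁⟩ := h.exists_le_return
  obtain ⟨s₂, s₂', hret₂, hle₂⟩ := h.exists_return_le
  obtain ⟨S, hS, hfix⟩ := exists_isFixedPt_pos hpos hmono hanti hret₁.pos_left hret₂.pos_left
    (hle₁.trans_eq (heq hret₁).symm) ((heq hret₂).trans_le hle₂)
  refine ⟨S, by simpa only [hfix.eq] using hP S hS, fun u hu ↦ ?_⟩
  have hiter : u = fun n ↦ P^[n] (u 0) := by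
    funext n
    induction n with
    | zero => rfl
    | succ n ih => rw [Function.iterate_succ_apply', ← ih, heq (hu n)]
  rw [hiter]
  exact tendsto_iterate_of_isFixedPt hpos hmono hanti hfix hS (hu 0).pos_left

end IsSelfExcited

end

/-! ### Attraction to the periodic orbit -/

lemma eventually_exists_eq_zero_of_deriv_pos {f : ℕ → ℝ → ℝ} {F : ℝ → ℝ} {u₀ : ℝ} {s : Set ℝ}
    (hs : s ∈ 𝓝 u₀) (hf : ∀ u ∈ s, Tendsto (f · u) atTop (𝓝 (F u)))
    (hcont : ∀ n, ContinuousOn (f n) s) (hF : F u₀ = 0) (hderiv : 0 < deriv F u₀) :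
    ∀ᶠ n in atTop, ∃ u ∈ s, f n u = 0 := by
  obtain ⟨a, b, hab, hsub⟩ := mem_nhds_iff_exists_Ioo_subset.1
    (inter_mem hs (eventually_nhdsWithin_sign_eq_of_deriv_pos hderiv hF))
  obtain ⟨u, hau, hu⟩ := exists_between hab.1
  obtain ⟨v, hv, hvb⟩ := exists_between hab.2
  have huv : Icc u v ⊆ Ioo a b := Icc_subset_Ioo hau hvb
  have hsign {w : ℝ} (hw : w ∈ Icc u v) : SignType.sign (F w) = SignType.sign (w - u₀) :=
    (hsub (huv hw)).2
  have hu' : u ∈ Icc u v := left_mem_Icc.2 (hu.trans hv).le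
  have hv' : v ∈ Icc u v := right_mem_Icc.2 (hu.trans hv).le
  have hFu : F u < 0 := sign_eq_neg_one_iff.1 ((hsign hu').trans (_root_.sign_neg (sub_neg.2 hu)))
  have hFv : 0 < F v := sign_eq_one_iff.1 ((hsign hv').trans (_root_.sign_pos (sub_pos.2 hv)))
  filter_upwards [(hf u (hsub (huv hu')).1).eventually_lt_const hFu,
    (hf v (hsub (huv hv')).1).eventually_const_lt hFv] with n hnu hnv
  obtain ⟨w, hw, hzero⟩ := intermediate_value_Icc (hu.trans hv).le
    ((hcont n).mono fun w hw ↦ (hsub (huv hw)).1) ⟨hnu.le, hnv.le⟩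
  exact ⟨w, (hsub (huv hw)).1, hzero⟩

lemma eventually_exists_transverse_crossing {f : ℕ → ℝ → ℝ × ℝ} {μ : ℝ → ℝ × ℝ} {u₀ : ℝ}
    {s : Set ℝ} (hs : s ∈ 𝓝 u₀) (hf : TendstoUniformlyOn f μ atTop s)
    (hcont : ∀ n, ContinuousOn (f n) s) (hμ : HasDerivAt (fun u ↦ (μ u).1) (μ u₀).2 u₀)
    (hμcont : ContinuousAt μ u₀) (hx : (μ u₀).1 = 0) (hy : 0 < (μ u₀).2) :
    ∀ᶠ n in atTop, ∃ u ∈ s, (f n u).1 = 0 ∧ 0 < (f n u).2 := by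
  have hnear : {u ∈ s | (μ u₀).2 / 2 < (μ u).2} ∈ 𝓝 u₀ :=
    inter_mem hs (hμcont.snd.eventually_const_lt (half_lt_self hy))
  have hzero := eventually_exists_eq_zero_of_deriv_pos (f := fun n u ↦ (f n u).1) hnear
    (fun u hu ↦ (hf.tendsto_at hu.1).fst_nhds) (fun n ↦ ((hcont n).mono (sep_subset _ _)).fst) hx
    (by rwa [hμ.deriv])
  filter_upwards [hzero, Metric.tendstoUniformlyOn_iff.1 hf _ (half_pos hy)] with n hn hdist
  obtain ⟨u, hu, hux⟩ := hn
  have := (le_max_right _ _).trans_lt (hdist u hu.1)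
  rw [Real.dist_eq, abs_lt] at this
  exact ⟨u, hu.1, hux, by linarith [hu.2]⟩

lemma tendsto_infDist_range_of_tendstoUniformlyOn {X : Type*} [PseudoMetricSpace X] {γ μ : ℝ → X}
    {a : ℕ → ℝ} {L : ℝ} (ha : Tendsto a atTop atTop) (hgap : ∀ᶠ n in atTop, a (n + 1) ≤ a n + L)
    (hunif : TendstoUniformlyOn (fun n u ↦ γ (a n + u)) μ atTop (Icc 0 L)) :
    Tendsto (fun t ↦ infDist (γ t) (range μ)) atTop (𝓝 0) := by
  refine tendsto_order.2 ⟨fun ρ hρ ↦ .of_forall fun t ↦ hρ.trans_le infDist_nonneg, fun ρ hρ ↦ ?_⟩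
  obtain ⟨n₀, hn₀⟩ := eventually_atTop.1 (hgap.and (Metric.tendstoUniformlyOn_iff.1 hunif ρ hρ))
  filter_upwards [eventually_ge_atTop (a n₀)] with t ht
  have hex : ∃ m, t < a (n₀ + m) :=
    ((tendsto_add_atTop_iff_nat n₀).2 ha |>.eventually_gt_atTop t).exists.imp fun m hm ↦
      (add_comm m n₀) ▸ hm
  obtain ⟨m, hm, hm'⟩ := Nat.exists_not_and_succ_of_not_zero_of_exists (by simpa using ht) hex
  obtain ⟨hgap, hdist⟩ := hn₀ (n₀ + m) (Nat.le_add_right _ _)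
  have hmem : t - a (n₀ + m) ∈ Icc 0 L :=
    ⟨sub_nonneg.2 (not_lt.1 hm), sub_le_iff_le_add'.2 (hm'.le.trans hgap)⟩
  have := hdist _ hmem
  rw [dist_comm, add_sub_cancel] at this
  exact (infDist_le_dist_of_mem (mem_range_self _)).trans_lt this

/-- The times `a n` are the successive crossings of the positive `y`-axis by `γ`. -/
structure IsCrossingSequence (g : ℝ → ℝ) (φ : ℝ × ℝ → ℝ) (γ : ℝ → ℝ × ℝ) (a : ℕ → ℝ) : Prop where
  strictMono : StrictMono a
  fst_eq_zero : ∀ n, (γ (a n)).1 = 0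
  snd_neg : ∀ n, ∀ t ∈ Ioo (a n) (a (n + 1)), (γ t).1 = 0 → (γ t).2 < 0
  isReturn : ∀ n, Return g φ (γ (a n)).2 (γ (a (n + 1))).2

namespace IsSelfExcited

variable {g : ℝ → ℝ} {φ : ℝ × ℝ → ℝ} {γ μ : ℝ → ℝ × ℝ} {a : ℕ → ℝ} {t₀ T : ℝ}
  (h : IsSelfExcited g φ) (hγ : IsSolOn (lienardField g φ) γ (Ici t₀)) (hne : γ t₀ ≠ 0)

include h hγ hne

lemma exists_isCrossingSequence :
    ∃ a : ℕ → ℝ, (∀ n, t₀ ≤ a n) ∧ IsCrossingSequence g φ γ a := by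
  let Crossing := {t : ℝ // t₀ ≤ t ∧ (γ t).1 = 0 ∧ 0 < (γ t).2}
  have hnext (c : Crossing) : ∃ c' : Crossing, c.1 < c'.1 ∧
      (∀ t ∈ Ioo c.1 c'.1, (γ t).1 = 0 → (γ t).2 < 0) ∧ Return g φ (γ c.1).2 (γ c'.1).2 := by
    obtain ⟨b, hcb, hxb, hyb, hneg, hret⟩ :=
      h.exists_return (hγ.mono (Ici_subset_Ici.2 c.2.1)) c.2.2.1 c.2.2.2
    exact ⟨⟨b, c.2.1.trans hcb.le, hxb, hyb⟩, hcb, hneg, hret⟩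
  choose next hlt hneg hret using hnext
  obtain ⟨b, hb⟩ := h.exists_crossing hγ hne
  let c (n : ℕ) : Crossing := next^[n] ⟨b, hb⟩
  have hsucc (n : ℕ) : c (n + 1) = next (c n) := Function.iterate_succ_apply' next n _
  refine ⟨fun n ↦ (c n).1, fun n ↦ (c n).2.1, strictMono_nat_of_lt_succ fun n ↦ ?_,
    fun n ↦ (c n).2.2.1, fun n ↦ ?_, fun n ↦ ?_⟩ <;> rw [hsucc]
  exacts [hlt _, hneg _, hret _]

lemma tendsto_crossing_atTop (ha : ∀ n, t₀ ≤ a n) (hcross : IsCrossingSequence g φ γ a) :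
    Tendsto a atTop atTop := by
  refine (tendsto_atTop_of_monotone hcross.strictMono.monotone).resolve_right ?_
  rintro ⟨l, hl⟩
  have hl₀ : t₀ ≤ l := ge_of_tendsto' hl ha
  have hx := hγ.hasDerivAt_fst hl₀
  have hxl : (γ l).1 = 0 := tendsto_nhds_unique (hx.continuousAt.tendsto.comp hl)
    (tendsto_const_nhds.congr fun n ↦ (hcross.fst_eq_zero n).symm)
  have hyl : (γ l).2 ≠ 0 := fun hyl ↦ h.apply_ne_zero hγ hne hl₀ (Prod.ext hxl hyl)
  have hlt (n : ℕ) : a n < l :=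
    (hcross.strictMono n.lt_succ_self).trans_le (hcross.strictMono.monotone.ge_of_tendsto hl _)
  have hl' : Tendsto a atTop (𝓝[≠] l) :=
    tendsto_nhdsWithin_iff.2 ⟨hl, .of_forall fun n ↦ (hlt n).ne⟩
  obtain ⟨n, hn⟩ := (hl'.eventually (hx.eventually_ne hyl (c := 0))).exists
  exact hn (hcross.fst_eq_zero n)

-- A crossing of `μ` at time `T` persists for the nearby translates of `γ`, which bounds the gaps
-- between consecutive crossings of `γ`.
lemma tendsto_infDist_of_tendsto_crossing (ha : ∀ n, t₀ ≤ a n)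
    (hcross : IsCrossingSequence g φ γ a) (hμ : IsSolOn (lienardField g φ) μ (Ici 0)) (hT : 0 < T)
    (hxT : (μ T).1 = 0) (hyT : 0 < (μ T).2)
    (hlim : Tendsto (fun n ↦ γ (a n)) atTop (𝓝 (μ 0))) :
    Tendsto (fun t ↦ infDist (γ t) (range μ)) atTop (𝓝 0) := by
  obtain ⟨s, hs, hγs⟩ := h.exists_isCompact_forall_mem hγ
  obtain ⟨s', hs', hμs'⟩ := h.exists_isCompact_forall_mem hμ
  have hunif := tendstoUniformlyOn_translate h.contDiff_lienardField (hs.union hs')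
    (fun t ht ↦ ⟨hγ t ht, .inl (hγs t ht)⟩) (fun t ht ↦ ⟨hμ t ht, .inr (hμs' t ht)⟩) ha hlim (T + 1)
  refine tendsto_infDist_range_of_tendstoUniformlyOn (h.tendsto_crossing_atTop hγ hne ha hcross)
    ?_ hunif
  have hnear : Ioo 0 (T + 1) ∈ 𝓝 T := Ioo_mem_nhds hT (lt_add_one T)
  have hcont (n : ℕ) : ContinuousOn (fun u ↦ γ (a n + u)) (Ioo 0 (T + 1)) := fun u hu ↦
    ((hγ (a n + u) ((ha n).trans (le_add_of_nonneg_right hu.1.le))).continuousAt.comp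
      (f := fun u ↦ a n + u) (by fun_prop)).continuousWithinAt
  filter_upwards [eventually_exists_transverse_crossing hnear
    (hunif.mono Ioo_subset_Icc_self) hcont (hμ.hasDerivAt_fst hT.le) (hμ T hT.le).continuousAt
    hxT hyT] with n ⟨u, hu, hux, huy⟩
  by_contra! hgap
  exact huy.not_gt (hcross.snd_neg n _
    ⟨lt_add_of_pos_right _ hu.1, (add_le_add_right hu.2.le _).trans_lt hgap⟩ hux)

end IsSelfExcited

/-- Every nonconstant solution defined for all large times tends to the orbit of `μ`. -/
def AttractsNonconstant (F : ℝ × ℝ → ℝ × ℝ) (μ : ℝ → ℝ × ℝ) : Prop :=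
  ∀ (γ : ℝ → ℝ × ℝ) (t₀ : ℝ), IsSolOn F γ (Ici t₀) →
    (∃ t₁ ∈ Ici t₀, ∃ t₂ ∈ Ici t₀, γ t₁ ≠ γ t₂) →
    Tendsto (fun t ↦ infDist (γ t) (range μ)) atTop (𝓝 0)

theorem IsSelfExcited.exists_isCycle_attractsNonconstant {g : ℝ → ℝ} {φ : ℝ × ℝ → ℝ}
    (h : IsSelfExcited g φ) (hd : HasMonotoneDamping g φ) :
    ∃ μ T, IsCycle (lienardField g φ) μ T ∧ AttractsNonconstant (lienardField g φ) μ := by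
  obtain ⟨S, hS, hlim⟩ := h.exists_attracting_return hd
  obtain ⟨μ, hμ₀, hμ, hper⟩ := h.exists_isSolOn (0, S)
  obtain ⟨T, hT, hxT, hyT, hneg, hret⟩ := h.exists_return hμ (by rw [hμ₀])
    (by rw [hμ₀]; exact hS.pos_left)
  have hμT : μ T = (0, S) := Prod.ext hxT (Return.unique h hd (by rwa [hμ₀] at hret) hS)
  obtain ⟨hperiodic, hμ'⟩ := hper T hT hμT
  refine ⟨μ, T, ⟨fun t ↦ hμ' t (mem_univ t), hT, hperiodic, 0, T / 2, fun heq ↦ ?_⟩,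
    fun γ t₀ hγ hne ↦ ?_⟩
  · have := hneg (T / 2) ⟨half_pos hT, half_lt_self hT⟩ (by rw [← heq, hμ₀])
    rw [← heq, hμ₀] at this
    exact hS.pos_left.not_gt this
  · have hne₀ := h.apply_ne_zero_of_nonconstant hγ hne
    obtain ⟨a, ha, hcross⟩ := h.exists_isCrossingSequence hγ hne₀
    refine h.tendsto_infDist_of_tendsto_crossing hγ hne₀ ha hcross hμ hT hxT hyT ?_
    rw [hμ₀]
    exact (tendsto_const_nhds.congr fun n ↦ (hcross.fst_eq_zero n).symm).prodMk_nhds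
      (hlim _ hcross.isReturn)

namespace IsCycle

variable {F : ℝ × ℝ → ℝ × ℝ} {μ μ' : ℝ → ℝ × ℝ} {T T' : ℝ}

lemma exists_ne_of_mem_Ici (hμ : IsCycle F μ T) (t₀ : ℝ) :
    ∃ t₁ ∈ Ici t₀, ∃ t₂ ∈ Ici t₀, μ t₁ ≠ μ t₂ := by
  obtain ⟨-, hT, hper, t₁, t₂, hne⟩ := hμ
  obtain ⟨s₁, hs₁, heq₁⟩ := Function.Periodic.exists_mem_Ico hper hT t₁ t₀
  obtain ⟨s₂, hs₂, heq₂⟩ := Function.Periodic.exists_mem_Ico hper hT t₂ t₀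
  exact ⟨s₁, hs₁.1, s₂, hs₂.1, by rwa [← heq₁, ← heq₂]⟩

lemma isCompact_range (hμ : IsCycle F μ T) : IsCompact (range μ) :=
  Function.Periodic.compact_of_continuous hμ.2.2.1 hμ.2.1.ne'
    (continuous_iff_continuousAt.2 fun t ↦ (hμ.1 t).continuousAt)

lemma range_subset_of_tendsto_infDist (hμ : IsCycle F μ T) (hμ' : IsCycle F μ' T')
    (hlim : Tendsto (fun t ↦ infDist (μ' t) (range μ)) atTop (𝓝 0)) : range μ' ⊆ range μ := by
  rintro _ ⟨t, rfl⟩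
  rw [hμ.isCompact_range.isClosed.mem_iff_infDist_zero (range_nonempty μ)]
  have htimes : Tendsto (fun n : ℕ ↦ t + n * T') atTop atTop :=
    tendsto_atTop_add_const_left _ _ (tendsto_natCast_atTop_atTop.atTop_mul_const hμ'.2.1)
  exact tendsto_nhds_unique (tendsto_const_nhds.congr fun n ↦ congr_arg (infDist · (range μ))
    ((Function.Periodic.nat_mul hμ'.2.2.1 n) t).symm) (hlim.comp htimes)

lemma range_eq_of_range_subset (hF : ContDiff ℝ 1 F) (hμ : IsCycle F μ T) (hμ' : IsCycle F μ' T')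
    (hsub : range μ' ⊆ range μ) : range μ' = range μ := by
  obtain ⟨b, hb⟩ := hsub (mem_range_self 0)
  have heq : μ' = fun t ↦ μ (t + b) :=
    eq_of_forall_hasDerivAt hF (t₀ := 0) hμ'.1 (fun t ↦ (hμ.1 (t + b)).comp_add_const t b)
      (by rw [zero_add, hb])
  rw [heq]
  exact (Equiv.addRight b).surjective.range_comp μ

end IsCycle

namespace AttractsNonconstant

variable {F : ℝ × ℝ → ℝ × ℝ} {μ μ' : ℝ → ℝ × ℝ} {T T' : ℝ}

lemma range_eq (hF : ContDiff ℝ 1 F) (hattr : AttractsNonconstant F μ) (hμ : IsCycle F μ T)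
    (hμ' : IsCycle F μ' T') : range μ' = range μ :=
  hμ.range_eq_of_range_subset hF hμ' <| hμ.range_subset_of_tendsto_infDist hμ' <|
    hattr μ' 0 (fun t _ ↦ hμ'.1 t) (hμ'.exists_ne_of_mem_Ici 0)

lemma isLimitCycle (hF : ContDiff ℝ 1 F) (hattr : AttractsNonconstant F μ) (hμ : IsCycle F μ T) :
    IsLimitCycle F μ T :=
  ⟨hμ, univ, isOpen_univ, subset_univ _,
    fun _ _ hγ' hne ↦ absurd (hattr.range_eq hF hμ hγ') hne⟩

end AttractsNonconstant

/-! ### Polynomial damping -/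

/-- The damping for which `lienardField` becomes `gOddVF`: `o k` is the coefficient of
`y ^ (2 * k)`. -/
def oddDamping (N : ℕ) (o : ℕ → ℝ → ℝ) (p : ℝ × ℝ) : ℝ :=
  ∑ k ∈ Finset.range (N + 1), o k p.1 * p.2 ^ (2 * k)

/-- The contribution of the damping coefficient `f` of `y ^ (2 * k)` to `scaledDamping`, as the
coefficient of `z ^ (2 * k)`. -/
def scaledCoeff (g : ℝ → ℝ) (k : ℕ) (f : ℝ → ℝ) (l : ℝ) : ℝ :=
  f (invLogRadius g l) * exp l ^ (2 * k + 1) / g (invLogRadius g l)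

/-- `f` is a `C¹` coefficient satisfying condition (H_g^{2k+1}). -/
structure SatisfiesHg (g : ℝ → ℝ) (k : ℕ) (f : ℝ → ℝ) : Prop where
  contDiff : ContDiff ℝ 1 f
  nonneg : ∀ x ≠ 0, 0 ≤ HgLHS g k f x

lemma gOddVF_eq_lienardField (g : ℝ → ℝ) (N : ℕ) (o : ℕ → ℝ → ℝ) :
    gOddVF g N o = lienardField g (oddDamping N o) := by
  ext p
  · rfl
  · simp only [gOddVF, lienardField, oddDamping, Finset.mul_sum]
    congr 1
    exact Finset.sum_congr rfl fun k _ ↦ by ring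

lemma oddDamping_neg (N : ℕ) (o : ℕ → ℝ → ℝ) (p : ℝ × ℝ) :
    oddDamping N o (-p) = oddDamping N (fun k x ↦ o k (-x)) p := by
  simp [oddDamping, pow_mul]

lemma scaledDamping_oddDamping (g : ℝ → ℝ) (N : ℕ) (o : ℕ → ℝ → ℝ) (l z : ℝ) :
    scaledDamping g (oddDamping N o) l z =
      ∑ k ∈ Finset.range (N + 1), scaledCoeff g k (o k) l * z ^ (2 * k) := by
  simp only [scaledDamping, oddDamping, scaledCoeff, Finset.mul_sum, Finset.sum_div]
  exact Finset.sum_congr rfl fun k _ ↦ by ring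

lemma HgLHS_reflect (g : ℝ → ℝ) (k : ℕ) (f : ℝ → ℝ) (x : ℝ) :
    HgLHS (reflect g) k (fun x ↦ f (-x)) x = HgLHS g k f (-x) := by
  have hderiv : deriv (reflect g) x = deriv g (-x) := by
    change deriv (fun x ↦ -g (-x)) x = _
    rw [deriv.fun_neg, deriv_comp_neg, neg_neg]
  rw [HgLHS, HgLHS, hderiv, Gfun_reflect, deriv_comp_neg]
  simp only [reflect, div_neg]
  ring

lemma IsRestoringForce.hasDerivAt_scaledCoeff {g f : ℝ → ℝ} (hg : IsRestoringForce g)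
    (hf : ContDiff ℝ 1 f) (k : ℕ) (l : ℝ) :
    HasDerivAt (scaledCoeff g k f) (exp l ^ (2 * k + 1) /
      (g (invLogRadius g l) ^ 2 * invLogRadius g l) * HgLHS g k f (invLogRadius g l)) l := by
  have hX := hg.hasDerivAt_invLogRadius l
  have hX₀ := (hg.invLogRadius_pos l).ne'
  have hg₀ := (hg.force_invLogRadius_pos l).ne'
  have hfX := (hf.differentiable one_ne_zero (invLogRadius g l)).hasDerivAt.comp l hX
  have hgX := (hg.contDiff.differentiable one_ne_zero (invLogRadius g l)).hasDerivAt.comp l hX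
  refine ((hfX.mul ((hasDerivAt_exp l).pow (2 * k + 1))).div hgX hg₀).congr_deriv ?_
  simp only [HgLHS, Function.comp_apply, Pi.mul_apply, Pi.pow_apply, hg.two_mul_Gfun_invLogRadius,
    Nat.add_sub_cancel]
  field_simp
  push_cast
  ring

lemma IsRestoringForce.not_eventually_le_deriv_invLogRadius {g : ℝ → ℝ} (hg : IsRestoringForce g)
    {c : ℝ} (hc : 0 < c) : ¬∀ᶠ l in atBot, c ≤ exp l ^ 2 / g (invLogRadius g l) := by
  intro hle
  have htop : Tendsto (fun t ↦ -invLogRadius g (-t)) atTop atTop := by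
    refine tendsto_atTop_of_le_deriv hc
      (f' := fun t ↦ exp (-t) ^ 2 / g (invLogRadius g (-t))) ?_
    filter_upwards [tendsto_neg_atTop_atBot.eventually hle] with t ht
    exact ⟨(((hg.hasDerivAt_invLogRadius (-t)).comp t (hasDerivAt_neg t)).neg).congr_deriv
      (by ring), ht⟩
  obtain ⟨t, ht⟩ := (htop.eventually_ge_atTop 0).exists
  exact ht.not_gt (neg_lt_zero.2 (hg.invLogRadius_pos (-t)))

namespace SatisfiesHg

variable {g f : ℝ → ℝ} {k : ℕ} {l l' x : ℝ}

protected lemma reflect (hf : SatisfiesHg g k f) :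
    SatisfiesHg (reflect g) k (fun x ↦ f (-x)) where
  contDiff := hf.contDiff.comp contDiff_neg
  nonneg x hx := (HgLHS_reflect g k f x).symm ▸ hf.nonneg (-x) (neg_ne_zero.2 hx)

variable (hg : IsRestoringForce g) (hf : SatisfiesHg g k f)

include hg hf

lemma monotone_scaledCoeff : Monotone (scaledCoeff g k f) := by
  refine monotone_of_deriv_nonneg
    (fun l ↦ (hg.hasDerivAt_scaledCoeff hf.contDiff k l).differentiableAt) fun l ↦ ?_
  rw [(hg.hasDerivAt_scaledCoeff hf.contDiff k l).deriv]
  have hX := hg.invLogRadius_pos l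
  exact mul_nonneg (by positivity) (hf.nonneg _ hX.ne')

lemma scaledCoeff_lt (hne : HgLHS g k f (invLogRadius g l) ≠ 0) (hl : l' < l) :
    scaledCoeff g k f l' < scaledCoeff g k f l := by
  refine (hf.monotone_scaledCoeff hg hl.le).lt_of_ne fun heq ↦ ?_
  have hconst : HasDerivWithinAt (scaledCoeff g k f) 0 (Icc l' l) l :=
    (hasDerivWithinAt_const l _ (scaledCoeff g k f l)).congr_of_mem (fun m hm ↦
      (hf.monotone_scaledCoeff hg hm.2).antisymm (heq ▸ hf.monotone_scaledCoeff hg hm.1))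
      (right_mem_Icc.2 hl.le)
  have hzero := (uniqueDiffOn_Icc hl l (right_mem_Icc.2 hl.le)).eq_deriv _
    (hg.hasDerivAt_scaledCoeff hf.contDiff k l).hasDerivWithinAt hconst
  have hX := hg.invLogRadius_pos l
  have hgX := hg.force_invLogRadius_pos l
  exact mul_ne_zero (by positivity) hne hzero

-- If `f x < 0`, monotonicity of `scaledCoeff` forces `g` to be so small near `0⁺` that the
-- derivative of `invLogRadius` is bounded below near `-∞`.
lemma apply_nonneg_of_pos (hk : k ≠ 0) (hx : 0 < x) : 0 ≤ f x := by
  by_contra! hneg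
  set q := -scaledCoeff g k f (logRadius g x) with hq
  have hq₀ : 0 < q := by
    rw [hq, scaledCoeff, hg.invLogRadius_logRadius hx, Left.neg_pos_iff]
    exact div_neg_of_neg_of_pos (mul_neg_of_neg_of_pos hneg (by positivity)) (hg.pos hx)
  obtain ⟨M, hM⟩ := (isCompact_Icc (a := 0) (b := x)).exists_bound_of_continuousOn
    hf.contDiff.continuous.continuousOn
  have hM₀ : 0 < M := (norm_pos_iff.2 hneg.ne).trans_le (hM x ⟨hx.le, le_rfl⟩)
  refine hg.not_eventually_le_deriv_invLogRadius (div_pos hq₀ hM₀) ?_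
  filter_upwards [eventually_le_atBot (logRadius g x), eventually_le_atBot 0] with l hlx hl₀
  have hX := hg.invLogRadius_pos l
  have hgX := hg.force_invLogRadius_pos l
  have hXx : invLogRadius g l ≤ x := by
    rwa [← hg.strictMonoOn_logRadius.le_iff_le hX hx, hg.logRadius_invLogRadius]
  have hfX : -f (invLogRadius g l) ≤ M := (neg_le_abs _).trans (hM _ ⟨hX.le, hXx⟩)
  have hcoeff : q * g (invLogRadius g l) ≤ -f (invLogRadius g l) * exp l ^ (2 * k + 1) := by
    have hmono : q ≤ -scaledCoeff g k f l := neg_le_neg (hf.monotone_scaledCoeff hg hlx)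
    rwa [scaledCoeff, ← neg_div, ← neg_mul, le_div_iff₀ hgX] at hmono
  rw [div_le_div_iff₀ hM₀ hgX, mul_comm (exp l ^ 2)]
  calc q * g (invLogRadius g l) ≤ -f (invLogRadius g l) * exp l ^ (2 * k + 1) := hcoeff
    _ ≤ M * exp l ^ (2 * k + 1) := by gcongr
    _ ≤ M * exp l ^ 2 := mul_le_mul_of_nonneg_left
      (pow_le_pow_of_le_one (exp_pos l).le (exp_le_one_iff.2 hl₀) (by lia)) hM₀.le

lemma apply_nonneg (hk : k ≠ 0) (x : ℝ) : 0 ≤ f x := by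
  rcases lt_trichotomy x 0 with hx | rfl | hx
  · simpa using hf.reflect.apply_nonneg_of_pos hg.reflect hk (neg_pos.2 hx)
  · exact ge_of_tendsto (hf.contDiff.continuous.continuousWithinAt (s := Ioi 0))
      (eventually_mem_nhdsWithin.mono fun x hx ↦ hf.apply_nonneg_of_pos hg hk hx)
  · exact hf.apply_nonneg_of_pos hg hk hx

end SatisfiesHg

section OddDamping

variable {g : ℝ → ℝ} {N : ℕ} {o : ℕ → ℝ → ℝ}

lemma contDiff_oddDamping (ho : ∀ k ∈ Finset.range (N + 1), ContDiff ℝ 1 (o k)) :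
    ContDiff ℝ 1 (oddDamping N o) :=
  ContDiff.sum fun k hk ↦ ((ho k hk).comp contDiff_fst).mul (contDiff_snd.pow (2 * k))

variable (hg : IsRestoringForce g) (ho : ∀ k ∈ Finset.range (N + 1), SatisfiesHg g k (o k))

include hg ho

lemma monotone_scaledDamping_oddDamping (z : ℝ) :
    Monotone (scaledDamping g (oddDamping N o) · z) := by
  intro l l' hl
  simp only [scaledDamping_oddDamping]
  gcongr with k hk
  · exact (even_two_mul k).pow_nonneg z
  · exact (ho k hk).monotone_scaledCoeff hg hl

lemma frequentlyStrictMonoDamping_oddDamping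
    (hstrict : ∃ᶠ x in 𝓝[>] 0, ∃ k ∈ Finset.range (N + 1), HgLHS g k (o k) x ≠ 0) :
    FrequentlyStrictMonoDamping g (oddDamping N o) := by
  have hlim : Tendsto (logRadius g) (𝓝[>] 0) atBot :=
    hg.tendsto_logRadius_zero.mono_left (nhdsWithin_mono 0 fun x (hx : 0 < x) ↦ hx.ne')
  refine hlim.frequently ((hstrict.and_eventually self_mem_nhdsWithin).mono ?_)
  rintro x ⟨⟨k, hk, hne⟩, hx⟩ l' hl' z hz
  rw [← hg.invLogRadius_logRadius hx] at hne
  simp only [scaledDamping_oddDamping]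
  refine Finset.sum_lt_sum (fun j hj ↦ ?_) ⟨k, hk, ?_⟩
  · exact mul_le_mul_of_nonneg_right ((ho j hj).monotone_scaledCoeff hg hl'.le) (by positivity)
  · exact mul_lt_mul_of_pos_right ((ho k hk).scaledCoeff_lt hg hne hl') (by positivity)

theorem hasMonotoneDamping_oddDamping
    (hstrict : ∃ᶠ x in 𝓝 0, ∃ k ∈ Finset.range (N + 1), HgLHS g k (o k) x ≠ 0) :
    HasMonotoneDamping g (oddDamping N o) := by
  have ho' : ∀ k ∈ Finset.range (N + 1), SatisfiesHg (reflect g) k (fun x ↦ o k (-x)) :=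
    fun k hk ↦ (ho k hk).reflect
  have hsplit : (∃ᶠ x in 𝓝[<] 0, ∃ k ∈ Finset.range (N + 1), HgLHS g k (o k) x ≠ 0) ∨
      ∃ᶠ x in 𝓝[>] 0, ∃ k ∈ Finset.range (N + 1), HgLHS g k (o k) x ≠ 0 := by
    rw [← frequently_sup, nhdsLT_sup_nhdsGT, frequently_nhdsWithin_iff]
    refine hstrict.mono fun x ↦ fun ⟨k, hk, hne⟩ ↦ ⟨⟨k, hk, hne⟩, ?_⟩
    rintro rfl
    exact hne (zero_mul _)
  refine ⟨monotone_scaledDamping_oddDamping hg ho, ?_, ?_⟩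
  · simpa only [oddDamping_neg] using monotone_scaledDamping_oddDamping hg.reflect ho'
  · simp only [oddDamping_neg]
    refine hsplit.symm.imp (frequentlyStrictMonoDamping_oddDamping hg ho) fun hleft ↦
      frequentlyStrictMonoDamping_oddDamping hg.reflect ho' ?_
    have hneg : Tendsto (fun x : ℝ ↦ -x) (𝓝[<] 0) (𝓝[>] 0) := by
      simpa using tendsto_neg_nhdsLT (a := (0 : ℝ))
    refine hneg.frequently (hleft.mono fun x ↦ fun ⟨k, hk, hne⟩ ↦ ⟨k, hk, ?_⟩)
    rwa [HgLHS_reflect, neg_neg]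

lemma oddDamping_nonneg_of_apply_nonneg {p : ℝ × ℝ} (hp : 0 ≤ o 0 p.1) :
    0 ≤ oddDamping N o p := by
  refine Finset.sum_nonneg fun k hk ↦ mul_nonneg ?_ ((even_two_mul k).pow_nonneg p.2)
  rcases eq_or_ne k 0 with rfl | hk₀
  exacts [hp, (ho k hk).apply_nonneg hg hk₀ p.1]

lemma add_le_oddDamping {k : ℕ} (hk : k ∈ Finset.Icc 1 N) (p : ℝ × ℝ) :
    o 0 p.1 + o k p.1 * p.2 ^ (2 * k) ≤ oddDamping N o p := by
  rw [Finset.mem_Icc] at hk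
  have hsub : ({0, k} : Finset ℕ) ⊆ Finset.range (N + 1) := by
    simp [Finset.insert_subset_iff, Nat.lt_succ_of_le hk.2]
  have hle := Finset.sum_le_sum_of_subset_of_nonneg (f := fun j ↦ o j p.1 * p.2 ^ (2 * j)) hsub
    fun j hj hj' ↦ mul_nonneg ((ho j hj).apply_nonneg hg (fun hj₀ ↦ hj' (by simp [hj₀])) p.1)
      ((even_two_mul j).pow_nonneg p.2)
  rw [Finset.sum_pair (Nat.one_le_iff_ne_zero.1 hk.1).symm] at hle
  simpa [oddDamping] using hle

lemma exists_oddDamping_nonneg {ε : ℝ} (hf : ∀ x, ε < |x| → 0 < o 0 x) {k : ℕ}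
    (hk : k ∈ Finset.Icc 1 N) (hpos : ∀ x ∈ Icc (-ε) ε, 0 < o k x) :
    ∃ E, ∀ p, E ≤ energy g p → 0 ≤ oddDamping N o p := by
  obtain ⟨hk₁, hkN⟩ := Finset.mem_Icc.1 hk
  obtain ⟨c, hc, hck⟩ := isCompact_Icc.exists_forall_le' (f := o k)
    (ho k (by simpa [Nat.lt_succ_iff])).contDiff.continuous.continuousOn hpos
  obtain ⟨M, hM⟩ := (isCompact_Icc (a := -ε) (b := ε)).exists_bound_of_continuousOn
    (ho 0 (by simp)).contDiff.continuous.continuousOn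
  obtain ⟨B, hB⟩ := (isCompact_Icc (a := -ε) (b := ε)).exists_bound_of_continuousOn
    hg.continuous_Gfun.continuousOn
  refine ⟨B + max 1 (M / c) / 2, fun p hp ↦ ?_⟩
  rcases lt_or_ge ε |p.1| with hx | hx
  · exact oddDamping_nonneg_of_apply_nonneg hg ho (hf p.1 hx).le
  have hx' : p.1 ∈ Icc (-ε) ε := abs_le.1 hx
  have hG : Gfun g p.1 ≤ B := (le_abs_self _).trans (hB p.1 hx')
  have hy : max 1 (M / c) ≤ p.2 ^ 2 := by
    rw [energy] at hp
    linarith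
  have hyk : M / c ≤ p.2 ^ (2 * k) := by
    rw [pow_mul]
    exact ((le_max_right _ _).trans hy).trans
      (le_self_pow₀ ((le_max_left _ _).trans hy) (Nat.one_le_iff_ne_zero.1 hk₁))
  have hMk : M ≤ o k p.1 * p.2 ^ (2 * k) := by
    rw [div_le_iff₀' hc] at hyk
    exact hyk.trans (mul_le_mul_of_nonneg_right (hck p.1 hx') ((even_two_mul k).pow_nonneg p.2))
  have hM' : -M ≤ o 0 p.1 := (abs_le.1 (hM p.1 hx')).1
  linarith [add_le_oddDamping hg ho hk p]

end OddDamping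

lemma IsRestoringForce.exists_energy_le_subset {g : ℝ → ℝ} (hg : IsRestoringForce g)
    {U : Set (ℝ × ℝ)} (hU : IsOpen U) (h₀ : 0 ∈ U) : ∃ e > 0, {p | energy g p ≤ e} ⊆ U := by
  obtain ⟨e, he, hle⟩ := ((hg.isCompact_energy_le 1).diff hU).exists_forall_le'
    hg.continuous_energy.continuousOn fun p hp ↦ hg.energy_pos fun hp₀ ↦ hp.2 (hp₀ ▸ h₀)
  refine ⟨min 1 (e / 2), by positivity, fun p (hp : energy g p ≤ _) ↦ ?_⟩
  by_contra hpU
  linarith [hle p ⟨hp.trans (min_le_left _ _), hpU⟩, hp.trans (min_le_right _ _)]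

theorem isSelfExcited_oddDamping {g : ℝ → ℝ} {N : ℕ} {o : ℕ → ℝ → ℝ} {ε : ℝ}
    (hg : IsRestoringForce g) (ho : ∀ k ∈ Finset.range (N + 1), SatisfiesHg g k (o k))
    (hf₀ : o 0 0 < 0) (hf : ∀ x, ε < |x| → 0 < o 0 x) {k : ℕ}
    (hk : k ∈ Finset.Icc 1 N) (hpos : ∀ x ∈ Icc (-ε) ε, 0 < o k x) :
    IsSelfExcited g (oddDamping N o) where
  force := hg
  contDiff := contDiff_oddDamping fun k hk ↦ (ho k hk).contDiff
  exists_nonneg := exists_oddDamping_nonneg hg ho hf hk hpos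
  exists_nonpos := by
    have hzero : oddDamping N o 0 < 0 := by
      simpa [oddDamping, Finset.sum_range_succ'] using hf₀
    have hcont := (contDiff_oddDamping fun k hk ↦ (ho k hk).contDiff).continuous
    obtain ⟨e, he, hsub⟩ := hg.exists_energy_le_subset (hcont.isOpen_preimage _ isOpen_Iio) hzero
    exact ⟨e, he, fun p hp ↦ (hsub hp).le⟩

theorem statement15_general (g : ℝ → ℝ) (hg : ContDiff ℝ 1 g)
    (hgsign : ∀ x : ℝ, x ≠ 0 → 0 < x * g x)
    (hGtop : Tendsto (Gfun g) atTop atTop)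
    (hGbot : Tendsto (Gfun g) atBot atTop)
    (N : ℕ) (o : ℕ → ℝ → ℝ)
    (ho : ∀ k ∈ Finset.range (N + 1), ContDiff ℝ 1 (o k))
    (hHg : ∀ k ∈ Finset.range (N + 1), ∀ x : ℝ, x ≠ 0 →
      0 ≤ HgLHS g k (o k) x)
    (hseq : ∃ xs : ℕ → ℝ, Tendsto xs atTop (𝓝 0) ∧
      ∀ m, ∃ k ∈ Finset.range (N + 1), HgLHS g k (o k) (xs m) ≠ 0)
    (hf10 : o 0 0 < 0)
    (ε : ℝ)
    (hf1 : ∀ x : ℝ, ε < |x| → 0 < o 0 x)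
    (hkbar : ∃ kbar ∈ Finset.Icc 1 N, ∀ x ∈ Icc (-ε) ε, 0 < o kbar x) :
    ∃ (μ : ℝ → ℝ × ℝ) (T : ℝ), IsLimitCycle (gOddVF g N o) μ T ∧
      (∀ (μ' : ℝ → ℝ × ℝ) (T' : ℝ), IsLimitCycle (gOddVF g N o) μ' T' →
        range μ' = range μ) ∧
      ∀ (γ : ℝ → ℝ × ℝ) (t₀ : ℝ), IsSolOn (gOddVF g N o) γ (Ici t₀) →
        (∃ t₁ ∈ Ici t₀, ∃ t₂ ∈ Ici t₀, γ t₁ ≠ γ t₂) →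
        Tendsto (fun t ↦ infDist (γ t) (range μ)) atTop (𝓝 0) := by
  have hforce : IsRestoringForce g := ⟨hg, hgsign, hGtop, hGbot⟩
  have hcoeff (k : ℕ) (hk : k ∈ Finset.range (N + 1)) : SatisfiesHg g k (o k) :=
    ⟨ho k hk, hHg k hk⟩
  have hstrict : ∃ᶠ x in 𝓝 0, ∃ k ∈ Finset.range (N + 1), HgLHS g k (o k) x ≠ 0 := by
    obtain ⟨xs, hxs, hne⟩ := hseq
    exact hxs.frequently (.of_forall hne)
  obtain ⟨kbar, hkbar, hpos⟩ := hkbar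
  have hexcited := isSelfExcited_oddDamping hforce hcoeff hf10 hf1 hkbar hpos
  have hdamping := hasMonotoneDamping_oddDamping hforce hcoeff hstrict
  have hF := hexcited.contDiff_lienardField
  rw [gOddVF_eq_lienardField]
  obtain ⟨μ, T, hμ, hattr⟩ := hexcited.exists_isCycle_attractsNonconstant hdamping
  exact ⟨μ, T, hattr.isLimitCycle hF hμ, fun _ _ hμ' ↦ hattr.range_eq hF hμ hμ'.1, hattr⟩

/-- for `g ∈ C¹(ℝ)` with `g'(0) > 0`, `x g(x) > 0` for `x ≠ 0`
and `G → +∞` at `±∞`, if every odd coefficient satisfies (H_g^{2k+1}) with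
strictness along some sequence `x_m → 0`, `f₁(0) < 0`, `f₁ > 0` outside
`[−ε,ε]`, and some `f_{2k̄+1} > 0` on `[−ε,ε]`, then the system
ẋ = y, ẏ = −g(x) − Σ_k f_{2k+1}(x) y^{2k+1} has exactly one limit cycle,
which attracts every non-constant solution. -/
theorem statement15 (g : ℝ → ℝ) (hg : ContDiff ℝ 1 g)
    (hg0 : 0 < deriv g 0)
    (hgsign : ∀ x : ℝ, x ≠ 0 → 0 < x * g x)
    (hGtop : Tendsto (Gfun g) atTop atTop)
    (hGbot : Tendsto (Gfun g) atBot atTop)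
    (N : ℕ) (o : ℕ → ℝ → ℝ)
    (ho : ∀ k ∈ Finset.range (N + 1), ContDiff ℝ 1 (o k))
    (hHg : ∀ k ∈ Finset.range (N + 1), ∀ x : ℝ, x ≠ 0 →
      0 ≤ HgLHS g k (o k) x)
    (hseq : ∃ xs : ℕ → ℝ, Tendsto xs atTop (𝓝 0) ∧
      ∀ m, ∃ k ∈ Finset.range (N + 1), HgLHS g k (o k) (xs m) ≠ 0)
    (hf10 : o 0 0 < 0)
    (ε : ℝ) (hε : 0 < ε)
    (hf1 : ∀ x : ℝ, ε < |x| → 0 < o 0 x)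
    (hkbar : ∃ kbar ∈ Finset.Icc 1 N, ∀ x ∈ Icc (-ε) ε, 0 < o kbar x) :
    ∃ (μ : ℝ → ℝ × ℝ) (T : ℝ), IsLimitCycle (gOddVF g N o) μ T ∧
      (∀ (μ' : ℝ → ℝ × ℝ) (T' : ℝ), IsLimitCycle (gOddVF g N o) μ' T' →
        range μ' = range μ) ∧
      ∀ (γ : ℝ → ℝ × ℝ) (t₀ : ℝ), IsSolOn (gOddVF g N o) γ (Ici t₀) →
        (∃ t₁ ∈ Ici t₀, ∃ t₂ ∈ Ici t₀, γ t₁ ≠ γ t₂) →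
        Tendsto (fun t => Metric.infDist (γ t) (range μ)) atTop (𝓝 0) :=
  statement15_general g hg hgsign hGtop hGbot N o ho hHg hseq hf10 ε hf1 hkbar
end
end

section
/- Let k ≥ 1 be an integer and let f : ℝ → ℝ be continuously differentiable with x·f'(x) + 2k·f(x) ≥ 0 for all x ∈ ℝ. Then f(x) ≥ 0 for all x ∈ ℝ. -/
/-!
Restrict `f` to the ray `t ↦ t • x`, giving `φ t = f (t • x)` with `t * φ' t + c * φ t ≥ 0`. Here
`t ^ (c - 1)` is an integrating factor: `t ^ c * φ t` has nonnegative derivative on `(0, 1)`. Since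
it vanishes at `t = 0`, its value `f x` at `t = 1` is nonnegative.
-/

open Set

section HalfLine

variable {φ φ' : ℝ → ℝ} {b c : ℝ}

lemma hasDerivAt_rpow_mul {t d : ℝ} (ht : 0 < t) (hφ : HasDerivAt φ d t) :
    HasDerivAt (fun s ↦ s ^ c * φ s) (t ^ (c - 1) * (t * d + c * φ t)) t := by
  have hpow : t ^ c = t ^ (c - 1) * t := by
    rw [← Real.rpow_add_one ht.ne', sub_add_cancel]
  refine ((Real.hasDerivAt_rpow_const (Or.inl ht.ne')).mul hφ).congr_deriv ?_
  rw [hpow]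
  ring

lemma monotoneOn_rpow_mul (hc : 0 ≤ c) (hcont : ContinuousOn φ (Icc 0 b))
    (hφ : ∀ t ∈ Ioo 0 b, HasDerivAt φ (φ' t) t)
    (hineq : ∀ t ∈ Ioo 0 b, 0 ≤ t * φ' t + c * φ t) :
    MonotoneOn (fun t ↦ t ^ c * φ t) (Icc 0 b) := by
  refine monotoneOn_of_hasDerivWithinAt_nonneg
    (f' := fun t ↦ t ^ (c - 1) * (t * φ' t + c * φ t)) (convex_Icc 0 b)
    ((Real.continuous_rpow_const hc).continuousOn.mul hcont) ?_ ?_ <;>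
    rw [interior_Icc] <;> intro t ht
  · exact (hasDerivAt_rpow_mul ht.1 (hφ t ht)).hasDerivWithinAt
  · exact mul_nonneg (Real.rpow_nonneg ht.1.le _) (hineq t ht)

lemma nonneg_of_mul_deriv_add_mul_nonneg (hb : 0 < b) (hc : 0 < c)
    (hcont : ContinuousOn φ (Icc 0 b)) (hφ : ∀ t ∈ Ioo 0 b, HasDerivAt φ (φ' t) t)
    (hineq : ∀ t ∈ Ioo 0 b, 0 ≤ t * φ' t + c * φ t) :
    0 ≤ φ b := by
  refine nonneg_of_mul_nonneg_right ?_ (Real.rpow_pos_of_pos hb c)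
  calc 0 = (0 : ℝ) ^ c * φ 0 := by rw [Real.zero_rpow hc.ne', zero_mul]
    _ ≤ b ^ c * φ b := monotoneOn_rpow_mul hc.le hcont hφ hineq
        (left_mem_Icc.2 hb.le) (right_mem_Icc.2 hb.le) hb.le

end HalfLine

theorem statement16_general {E : Type*} [NormedAddCommGroup E] [NormedSpace ℝ E] {c : ℝ}
    (hc : 0 < c) {f : E → ℝ} (hf : Differentiable ℝ f)
    (h : ∀ x, 0 ≤ fderiv ℝ f x x + c * f x) (x : E) : 0 ≤ f x := by
  have hray (t : ℝ) : HasDerivAt (fun s : ℝ ↦ f (s • x)) (fderiv ℝ f (t • x) x) t := by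
    have hline : HasDerivAt (fun s : ℝ ↦ s • x) x t := by
      simpa using (hasDerivAt_id t).smul_const x
    exact (hf (t • x)).hasFDerivAt.comp_hasDerivAt t hline
  have hineq (t : ℝ) : 0 ≤ t * fderiv ℝ f (t • x) x + c * f (t • x) := by
    simpa using h (t • x)
  simpa using nonneg_of_mul_deriv_add_mul_nonneg one_pos hc
    (HasDerivAt.continuousOn fun t _ ↦ hray t) (fun t _ ↦ hray t) (fun t _ ↦ hineq t)

/-- if `f` is C¹ and `x f'(x) + 2k f(x) ≥ 0` on `ℝ` for some
integer `k ≥ 1`, then `f ≥ 0` on `ℝ`. -/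
theorem statement16 (k : ℕ) (hk : 1 ≤ k) (f : ℝ → ℝ) (hf : ContDiff ℝ 1 f)
    (h : ∀ x : ℝ, x * deriv f x + 2 * (k : ℝ) * f x ≥ 0) :
    ∀ x : ℝ, f x ≥ 0 := by
  refine statement16_general (c := 2 * k) (by positivity) (hf.differentiable one_ne_zero) fun x ↦ ?_
  simpa only [fderiv_eq_smul_deriv, smul_eq_mul] using h x
end
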